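/- arXiv:2309.16766 — 2 statements merged into one kernel-verified Lean document; each statement's English description precedes it below -/
import Mathlib

section
/- Let H be a complex Hilbert space, 𝒜 a von Neumann algebra on H, and Ω ∈ H a vector that is cyclic and separating for 𝒜. Then there exists a strongly continuous one-parameter unitary group U on H such that the triple (𝒜, Ω, U) satisfies the KMS condition at inverse temperature β = 1. In particular, U(t)Ω = Ω for all t ∈ ℝ, and U(t) a U(t)⁻¹ ∈ 𝒜 for every a ∈ 𝒜 and every t ∈ ℝ (Tomita's theorem, combined with the modular KMS theorem). -/
open scoped ComplexInnerProductSpace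

noncomputable section

variable {H : Type*} [NormedAddCommGroup H] [InnerProductSpace ℂ H] [CompleteSpace H]

/-- A vector `Ω` is cyclic for a set `S` of bounded operators if `{a Ω : a ∈ S}` is dense. -/
def IsCyclicVector (S : Set (H →L[ℂ] H)) (Ω : H) : Prop :=
  Dense {x : H | ∃ a ∈ S, a Ω = x}

/-- A strongly continuous one-parameter unitary group on `H`. -/
def IsOneParamUnitaryGroup (U : ℝ → (H →L[ℂ] H)) : Prop :=
  (∀ t : ℝ, U t ∈ unitary (H →L[ℂ] H)) ∧
  U 0 = 1 ∧
  (∀ s t : ℝ, U (s + t) = U s * U t) ∧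
  (∀ x : H, Continuous fun t : ℝ => U t x)

/-- The closed strip `0 ≤ Re z ≤ 1`. -/
def unitStrip : Set ℂ := {z : ℂ | 0 ≤ z.re ∧ z.re ≤ 1}

/-- The KMS condition at inverse temperature `β = 1` for the triple `(A, Ω, U)`.
Since `U` is a one-parameter group, `U t` has inverse `U (-t)`. -/
def SatisfiesKMS (A : VonNeumannAlgebra H) (Ω : H) (U : ℝ → (H →L[ℂ] H)) : Prop :=
  (∀ t : ℝ, U t Ω = Ω) ∧
  (∀ t : ℝ, ∀ a ∈ A, U t * a * U (-t) ∈ A) ∧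
  (∀ a ∈ A, ∀ b ∈ A, ∃ F : ℂ → ℂ,
    (∃ M : ℝ, ∀ z ∈ unitStrip, ‖F z‖ ≤ M) ∧
    ContinuousOn F unitStrip ∧
    DifferentiableOn ℂ F (interior unitStrip) ∧
    (∀ t : ℝ, F (Complex.I * (t : ℂ)) = ⟪Ω, a (U (-t) (b Ω))⟫) ∧
    (∀ t : ℝ, F (1 + Complex.I * (t : ℂ)) = ⟪Ω, b (U t (a Ω))⟫))

namespace TT
section P1
open Complex Set Filter Topology MeasureTheory

lemma cosh_lower (t : ℝ) : Real.exp (Real.pi * |t|) / 2 ≤ Real.cosh (Real.pi * t) := by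
  rw [Real.cosh_eq]
  rcases abs_cases t with ⟨h, _⟩ | ⟨h, _⟩ <;> rw [h]
  · have := Real.exp_pos (-(Real.pi * t)); linarith
  · have := Real.exp_pos ((Real.pi * t))
    rw [mul_neg]; linarith

lemma integrable_exp_abs {c : ℝ} (hc : 0 < c) :
    Integrable (fun t : ℝ => Real.exp (-c * |t|)) := by
  have h := integrable_of_isBigO_exp_neg (f := fun t : ℝ => Real.exp (-c * |t|)) (a := 0) (b := c) hc
    (by fun_prop) (by
      apply Asymptotics.IsBigO.of_bound 1
      filter_upwards [eventually_ge_atTop 0] with t ht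
      simp [abs_of_nonneg ht])
  rw [← integrableOn_univ, ← Set.Iic_union_Ioi (a := (0:ℝ))]
  refine IntegrableOn.union ?_ h
  rw [← integrableOn_Ici_iff_integrableOn_Ioi] at h
  have := h.comp_neg
  simpa using this

lemma kernel_bound {θ : ℝ} (t : ℝ) :
    Real.exp (θ * |t|) / Real.cosh (Real.pi * t) ≤ 2 * Real.exp (-(Real.pi - θ) * |t|) := by
  have h := cosh_lower t
  have h1 : 0 < Real.exp (Real.pi * |t|) / 2 := by positivity
  calc Real.exp (θ * |t|) / Real.cosh (Real.pi * t)
      ≤ Real.exp (θ * |t|) / (Real.exp (Real.pi * |t|) / 2) := by gcongr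
    _ = 2 * Real.exp (-(Real.pi - θ) * |t|) := by
      rw [show -(Real.pi - θ) * |t| = θ * |t| - Real.pi * |t| by ring, Real.exp_sub]
      field_simp

lemma norm_cosh_pi (t : ℝ) : ‖Complex.cosh (Real.pi * t)‖ = Real.cosh (Real.pi * t) := by
  rw [← ofReal_mul, ← Complex.ofReal_cosh, Complex.norm_real, Real.norm_eq_abs, abs_of_pos (Real.cosh_pos _)]

lemma integrable_kernel {f : ℝ → ℂ} (hf : Continuous f) {M θ : ℝ} (hθ : θ < Real.pi)
    (hb : ∀ t, ‖f t‖ ≤ M * Real.exp (θ * |t|)) :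
    Integrable (fun t : ℝ => f t / Complex.cosh (Real.pi * t)) := by
  have hM : 0 ≤ M := by
    have := hb 0
    simp at this
    exact (norm_nonneg _).trans this
  refine Integrable.mono' ((integrable_exp_abs (sub_pos.2 hθ)).const_mul (M * 2)) ?_ ?_
  · apply Continuous.aestronglyMeasurable
    apply hf.div (by fun_prop)
    intro t h
    have := norm_cosh_pi t
    rw [h, norm_zero] at this
    exact (Real.cosh_pos _).ne this
  · filter_upwards with t
    rw [norm_div, norm_cosh_pi]
    calc ‖f t‖ / Real.cosh (Real.pi * t) ≤ M * Real.exp (θ * |t|) / Real.cosh (Real.pi * t) := by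
          gcongr
          exact hb t
      _ = M * (Real.exp (θ * |t|) / Real.cosh (Real.pi * t)) := by ring
      _ ≤ M * (2 * Real.exp (-(Real.pi - θ) * |t|)) := by gcongr; exact kernel_bound t
      _ = _ := by ring

lemma norm_sinh_ge (x y : ℝ) : Real.sinh |x| ≤ ‖Complex.sinh (x + y * I)‖ := by
  have h : ‖Complex.sinh (x + y * I)‖ ^ 2 = Real.sinh x ^ 2 + Real.sin y ^ 2 := by
    rw [Complex.sinh_add, Complex.sinh_mul_I, Complex.cosh_mul_I, ← Complex.ofReal_sinh,
      ← Complex.ofReal_cosh, ← Complex.ofReal_sin, ← Complex.ofReal_cos,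
      ← Complex.normSq_eq_norm_sq, Complex.normSq_apply]
    simp only [add_re, mul_re, ofReal_re, ofReal_im, I_re, I_im, add_im, mul_im]
    nlinarith [Real.sin_sq_add_cos_sq y, Real.cosh_sq x]
  have h2 : Real.sinh |x| ^ 2 = Real.sinh x ^ 2 := by
    rcases abs_cases x with ⟨h, _⟩ | ⟨h, _⟩ <;> rw [h] <;> simp
  apply le_of_sq_le_sq _ (norm_nonneg _)
  rw [h, h2]
  nlinarith [sq_nonneg (Real.sin y)]

/-- closed strip -/
def strip : Set ℂ := {z : ℂ | |z.im| ≤ 1 / 2}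
def ostrip : Set ℂ := {z : ℂ | |z.im| < 1 / 2}

lemma isOpen_ostrip : IsOpen ostrip := isOpen_lt (by fun_prop) continuous_const

lemma ostrip_sub : ostrip ⊆ strip := by
  intro z h
  exact (show |z.im| < 1/2 from h).le

lemma sinh_ne {z : ℂ} (hz : z ∈ strip) (h0 : z ≠ 0) : Complex.sinh (Real.pi * z) ≠ 0 := by
  intro h
  have h1 : Complex.sin (Real.pi * z * I) = 0 := by rw [Complex.sin_mul_I, h]; simp
  rw [Complex.sin_eq_zero_iff] at h1
  obtain ⟨k, hk⟩ := h1
  have h2 : z * I = k := by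
    have : (Real.pi : ℂ) ≠ 0 := by exact_mod_cast Real.pi_ne_zero
    apply mul_left_cancel₀ this
    rw [← mul_assoc, hk]; ring
  have h3 : -z.im = k := by simpa using congrArg Complex.re h2
  have h4 : z.re = 0 := by simpa using congrArg Complex.im h2
  have h5 : |z.im| ≤ 1/2 := hz
  have h6 : |(k:ℝ)| < 1 := by rw [← h3, abs_neg]; linarith
  have h7 : k = 0 := by
    rw [← Int.abs_lt_one_iff]; exact_mod_cast h6
  subst h7
  apply h0
  apply Complex.ext <;> simp_all

lemma poisson_zero {G : ℂ → ℂ} (hc : ContinuousOn G strip) (hd : DifferentiableOn ℂ G ostrip)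
    {M θ : ℝ} (hθ0 : 0 ≤ θ) (hθ : θ < Real.pi) (hM : 0 ≤ M)
    (hb : ∀ z ∈ strip, ‖G z‖ ≤ M * Real.exp (θ * |z.re|)) (h0 : G 0 = 0) :
    ∫ t : ℝ, (G (t - I / 2) + G (t + I / 2)) / Complex.cosh (Real.pi * t) = 0 := by
  set s : ℂ → ℂ := fun z => Complex.sinh (Real.pi * z) with hs
  set q : ℂ → ℂ := fun z => dslope G 0 z / dslope s 0 z with hq
  have hsd : Differentiable ℂ s := by fun_prop
  have hs0 : s 0 = 0 := by simp [hs]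
  have hmem : ostrip ∈ 𝓝 (0:ℂ) := isOpen_ostrip.mem_nhds (by simp [ostrip])
  have hmem' : strip ∈ 𝓝 (0:ℂ) := Filter.mem_of_superset hmem ostrip_sub
  have hpi : (Real.pi : ℂ) ≠ 0 := by exact_mod_cast Real.pi_ne_zero
  have hne : ∀ z ∈ strip, dslope s 0 z ≠ 0 := by
    intro z hz
    by_cases h : z = 0
    · subst h
      rw [dslope_same]
      have : HasDerivAt s (Complex.cosh (Real.pi * 0) * (Real.pi * 1)) 0 :=
        ((hasDerivAt_id (0:ℂ)).const_mul (Real.pi:ℂ)).csinh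
      rw [this.deriv]; simpa using hpi
    · rw [dslope_of_ne _ h, slope_def_field, hs0]
      simp only [sub_zero]
      exact div_ne_zero (sinh_ne hz h) h
  have hqe : ∀ z, z ≠ 0 → q z = G z / s z := by
    intro z h
    simp only [hq]
    rw [dslope_of_ne _ h, dslope_of_ne _ h, slope_def_field, slope_def_field, hs0, h0]
    simp only [sub_zero]
    field_simp
  have hqc : ContinuousOn q strip := by
    apply ContinuousOn.div _ _ hne
    · rw [continuousOn_dslope hmem']
      exact ⟨hc, (hd 0 (mem_of_mem_nhds hmem)).differentiableAt hmem⟩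
    · rw [continuousOn_dslope hmem']
      exact ⟨hsd.continuous.continuousOn, hsd 0⟩
  have hqd : DifferentiableOn ℂ q ostrip := by
    apply DifferentiableOn.div _ _ (fun z hz => hne z (ostrip_sub hz))
    · rwa [Complex.differentiableOn_dslope hmem]
    · rw [Complex.differentiableOn_dslope hmem]; exact hsd.differentiableOn
  have e1 : ∀ t : ℝ, q (t + ((-(1/2) : ℝ) : ℂ) * I) = I * (G (t - I/2) / Complex.cosh (Real.pi * t)) := by
    intro t
    rw [hqe _ (by intro h; simpa using congrArg Complex.im h)]
    have : s (t + ((-(1/2) : ℝ) : ℂ) * I) = - I * Complex.cosh (Real.pi * t) := by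
      simp only [hs]
      rw [show (Real.pi : ℂ) * (t + ((-(1/2) : ℝ) : ℂ) * I) = Real.pi * t - Real.pi / 2 * I by push_cast; ring,
        Complex.sinh_sub, Complex.cosh_mul_I, Complex.sinh_mul_I, Complex.cos_pi_div_two, Complex.sin_pi_div_two]
      ring
    rw [this, show (t + ((-(1/2) : ℝ) : ℂ) * I) = t - I/2 by push_cast; ring]
    rw [neg_mul, div_neg, mul_comm I, ← div_div, div_right_comm, Complex.div_I]; ring
  have e2 : ∀ t : ℝ, q (t + (((1/2) : ℝ) : ℂ) * I) = - I * (G (t + I/2) / Complex.cosh (Real.pi * t)) := by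
    intro t
    rw [hqe _ (by intro h; simpa using congrArg Complex.im h)]
    have : s (t + (((1/2) : ℝ) : ℂ) * I) = I * Complex.cosh (Real.pi * t) := by
      simp only [hs]
      rw [show (Real.pi : ℂ) * (t + (((1/2) : ℝ) : ℂ) * I) = Real.pi * t + Real.pi / 2 * I by push_cast; ring,
        Complex.sinh_add, Complex.cosh_mul_I, Complex.sinh_mul_I, Complex.cos_pi_div_two, Complex.sin_pi_div_two]
      ring
    rw [this, show (t + (((1/2) : ℝ) : ℂ) * I) = t + I/2 by push_cast; ring]
    rw [mul_comm I, ← div_div, Complex.div_I]; ring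
  have m1 : ∀ t : ℝ, (t - I/2 : ℂ) ∈ strip := by intro t; simp [strip, abs_of_pos]
  have m2 : ∀ t : ℝ, (t + I/2 : ℂ) ∈ strip := by intro t; simp [strip, abs_of_pos]
  have i1 : Integrable (fun t : ℝ => G (t - I/2) / Complex.cosh (Real.pi * t)) := by
    apply integrable_kernel _ hθ (M := M)
    · intro t; simpa using hb _ (m1 t)
    · exact hc.comp_continuous (by fun_prop) m1
  have i2 : Integrable (fun t : ℝ => G (t + I/2) / Complex.cosh (Real.pi * t)) := by
    apply integrable_kernel _ hθ (M := M)
    · intro t; simpa using hb _ (m2 t)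
    · exact hc.comp_continuous (by fun_prop) m2
  -- rectangle identity
  have hrect : ∀ N : ℕ,
      (∫ t : ℝ in (-(N:ℝ))..N, q (t + ((-(1/2) : ℝ) : ℂ) * I)) -
      (∫ t : ℝ in (-(N:ℝ))..N, q (t + (((1/2) : ℝ) : ℂ) * I)) =
      I • (∫ y : ℝ in (-(1/2))..(1/2), q (((-(N:ℝ)) : ℝ) + y * I))
       - I • (∫ y : ℝ in (-(1/2))..(1/2), q (((N:ℝ)) + y * I)) := by
    intro N
    have := Complex.integral_boundary_rect_eq_zero_of_continuousOn_of_differentiableOn q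
      ⟨-N, -(1/2)⟩ ⟨N, 1/2⟩ (hqc.mono ?_) (hqd.mono ?_)
    · simp only at this
      linear_combination this
    · intro z hz
      rw [Complex.mem_reProdIm, Set.uIcc_of_le, Set.uIcc_of_le] at hz
      · exact abs_le.2 hz.2
      · norm_num
      · simp only; linarith [Nat.cast_nonneg (α := ℝ) N]
    · intro z hz
      rw [Complex.mem_reProdIm] at hz
      have := hz.2
      simp only at this
      rw [min_eq_left (by norm_num), max_eq_right (by norm_num)] at this
      exact abs_lt.2 this
  have hside : ∀ c : ℕ → ℝ, (∀ N, |c N| = N) →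
      Tendsto (fun N : ℕ => ∫ y : ℝ in (-(1/2))..(1/2), q ((c N : ℝ) + y * I)) atTop (𝓝 0) := by
    intro c hcN
    have hlim : Tendsto (fun N : ℕ => M * (Real.exp (θ * N) / Real.sinh (Real.pi * N))) atTop (𝓝 0) := by
      have h1 : Tendsto (fun N : ℕ => M * (4 * Real.exp (-(Real.pi - θ) * N))) atTop (𝓝 0) := by
        have : Tendsto (fun N : ℕ => Real.exp (-(Real.pi - θ) * N)) atTop (𝓝 0) := by
          apply Real.tendsto_exp_atBot.comp
          exact tendsto_natCast_atTop_atTop.const_mul_atTop_of_neg (by linarith)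
        simpa using (this.const_mul 4).const_mul M
      refine squeeze_zero' ?_ ?_ h1
      · filter_upwards with N
        have : 0 ≤ Real.sinh (Real.pi * N) := Real.sinh_nonneg_iff.2 (by positivity)
        positivity
      · filter_upwards [eventually_ge_atTop 1] with N hN
        have hN' : (1:ℝ) ≤ N := by exact_mod_cast hN
        gcongr
        have hpiN : 1 ≤ Real.pi * N := by nlinarith [Real.pi_gt_three]
        have hge : Real.exp (Real.pi * N) / 4 ≤ Real.sinh (Real.pi * N) := by
          rw [Real.sinh_eq]
          have a1 : Real.exp (-(Real.pi * N)) ≤ 1 := Real.exp_le_one_iff.2 (by linarith)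
          have a2 : 2 ≤ Real.exp (Real.pi * N) := by
            have := Real.add_one_le_exp (Real.pi * N); linarith
          linarith
        calc Real.exp (θ * N) / Real.sinh (Real.pi * N)
            ≤ Real.exp (θ * N) / (Real.exp (Real.pi * N) / 4) := by gcongr
          _ = _ := by
            rw [show -(Real.pi - θ) * (N:ℝ) = θ * N - Real.pi * N by ring, Real.exp_sub]
            field_simp
    rw [tendsto_zero_iff_norm_tendsto_zero]
    refine squeeze_zero' (Eventually.of_forall fun _ => norm_nonneg _) ?_ hlim
    filter_upwards [eventually_ge_atTop 1] with N hN
    have hN' : (1:ℝ) ≤ N := by exact_mod_cast hN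
    have := intervalIntegral.norm_integral_le_of_norm_le_const
      (a := -(1/2)) (b := 1/2) (f := fun y : ℝ => q ((c N : ℝ) + y * I))
      (C := M * (Real.exp (θ * N) / Real.sinh (Real.pi * N))) ?_
    · refine this.trans (le_of_eq ?_)
      norm_num
    · intro y hy
      rw [Set.uIoc_of_le (by norm_num)] at hy
      have hz : ((c N : ℝ) + y * I : ℂ) ∈ strip := by
        simp only [strip, Set.mem_setOf_eq, add_im, ofReal_im, mul_im, ofReal_re, I_im, I_re]
        simp only [mul_one, mul_zero, add_zero, zero_add]
        exact abs_le.2 ⟨hy.1.le, hy.2⟩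
      have hcne : c N ≠ 0 := by
        intro h; have := hcN N; rw [h] at this; simp at this; linarith
      rw [hqe _ (by intro h; apply hcne; simpa using congrArg Complex.re h), norm_div, ← mul_div_assoc]
      have hpos : 0 < Real.sinh (Real.pi * N) := Real.sinh_pos_iff.2 (by positivity)
      gcongr
      · have := hb _ hz
        simpa [hcN] using this
      · have := norm_sinh_ge (Real.pi * c N) (Real.pi * y)
        rw [abs_mul, abs_of_pos Real.pi_pos, hcN] at this
        refine this.trans (le_of_eq ?_)
        simp only [hs]; congr 2; push_cast; ring
  have L1 : Tendsto (fun N : ℕ => (∫ t : ℝ in (-(N:ℝ))..N, q (t + ((-(1/2) : ℝ) : ℂ) * I)) -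
      (∫ t : ℝ in (-(N:ℝ))..N, q (t + (((1/2) : ℝ) : ℂ) * I))) atTop (𝓝 (
        (∫ t : ℝ, q (t + ((-(1/2) : ℝ) : ℂ) * I)) - (∫ t : ℝ, q (t + (((1/2) : ℝ) : ℂ) * I)))) := by
    apply Tendsto.sub
    · apply intervalIntegral_tendsto_integral
      · simp_rw [e1]; exact i1.const_mul _
      · exact tendsto_neg_atTop_atBot.comp tendsto_natCast_atTop_atTop
      · exact tendsto_natCast_atTop_atTop
    · apply intervalIntegral_tendsto_integral
      · simp_rw [e2]; exact i2.const_mul _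
      · exact tendsto_neg_atTop_atBot.comp tendsto_natCast_atTop_atTop
      · exact tendsto_natCast_atTop_atTop
  have L2 : Tendsto (fun N : ℕ => I • (∫ y : ℝ in (-(1/2))..(1/2), q (((-(N:ℝ)) : ℝ) + y * I))
       - I • (∫ y : ℝ in (-(1/2))..(1/2), q (((N:ℝ)) + y * I))) atTop (𝓝 0) := by
    have a := (hside (fun N => -N) (by simp)).const_smul I
    have b := (hside (fun N => N) (by simp)).const_smul I
    simpa using a.sub b
  simp_rw [hrect] at L1
  have key := tendsto_nhds_unique L1 L2
  simp_rw [e1, e2] at key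
  rw [integral_const_mul, integral_const_mul] at key
  simp_rw [add_div]
  rw [integral_add i1 i2]
  have : I * ((∫ t : ℝ, G (t - I/2) / Complex.cosh (Real.pi * t)) + ∫ t : ℝ, G (t + I/2) / Complex.cosh (Real.pi * t)) = 0 := by
    linear_combination key
  exact (mul_eq_zero.1 this).resolve_left I_ne_zero

noncomputable def cst : ℂ := ∫ t : ℝ, (2:ℂ) / Complex.cosh (Real.pi * t)

lemma poisson {G : ℂ → ℂ} (hc : ContinuousOn G strip) (hd : DifferentiableOn ℂ G ostrip)
    {M θ : ℝ} (hθ0 : 0 ≤ θ) (hθ : θ < Real.pi) (hM : 0 ≤ M)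
    (hb : ∀ z ∈ strip, ‖G z‖ ≤ M * Real.exp (θ * |z.re|)) :
    ∫ t : ℝ, (G (t - I / 2) + G (t + I / 2)) / Complex.cosh (Real.pi * t) = cst * G 0 := by
  have h := poisson_zero (G := fun z => G z - G 0) (hc.sub continuousOn_const)
    (hd.sub (differentiableOn_const _)) (M := M + ‖G 0‖) hθ0 hθ (by positivity) ?_ (by simp)
  · have m1 : ∀ t : ℝ, (t - I/2 : ℂ) ∈ strip := by intro t; simp [strip, abs_of_pos]
    have m2 : ∀ t : ℝ, (t + I/2 : ℂ) ∈ strip := by intro t; simp [strip, abs_of_pos]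
    have i1 : Integrable (fun t : ℝ => (G (t - I/2) + G (t + I/2)) / Complex.cosh (Real.pi * t)) := by
      simp_rw [add_div]
      apply Integrable.add
      · apply integrable_kernel _ hθ (M := M)
        · intro t; simpa using hb _ (m1 t)
        · exact hc.comp_continuous (by fun_prop) m1
      · apply integrable_kernel _ hθ (M := M)
        · intro t; simpa using hb _ (m2 t)
        · exact hc.comp_continuous (by fun_prop) m2
    have i2 : Integrable (fun t : ℝ => (2:ℂ) / Complex.cosh (Real.pi * t)) := by
      apply integrable_kernel continuous_const hθ (M := 2)
      intro t
      have : 1 ≤ Real.exp (θ * |t|) := Real.one_le_exp (by positivity)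
      rw [Complex.norm_ofNat]; linarith
    rw [cst, ← integral_mul_const, ← sub_eq_zero, ← integral_sub i1 (i2.mul_const _)]
    refine Eq.trans ?_ h
    congr 1; ext t; ring
  · intro z hz
    have : 1 ≤ Real.exp (θ * |z.re|) := Real.one_le_exp (by positivity)
    calc ‖G z - G 0‖ ≤ ‖G z‖ + ‖G 0‖ := norm_sub_le _ _
      _ ≤ M * Real.exp (θ * |z.re|) + ‖G 0‖ * Real.exp (θ * |z.re|) := by
        gcongr
        · exact hb z hz
        · exact le_mul_of_one_le_right (norm_nonneg _) this
      _ = _ := by ring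

end P1
end TT

namespace TT
section P2
open Complex Set Filter Topology MeasureTheory

lemma cosh_pi_ne (t : ℝ) : Complex.cosh (Real.pi * t) ≠ 0 := by
  intro h
  have := norm_cosh_pi t
  rw [h, norm_zero] at this
  exact (Real.cosh_pos _).ne this

lemma mgf_zero {f : ℝ → ℂ} (hf : Continuous f) {M : ℝ} (hb : ∀ t, ‖f t‖ ≤ M)
    (h0 : ∀ θ : ℝ, 0 ≤ θ → θ < 1 →
      ∫ t : ℝ, (Real.exp (θ * t) : ℂ) * f t / Complex.cosh (Real.pi * t) = 0) :
    ∀ t, f t = 0 := by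
  set h : ℝ → ℂ := fun t => f t / Complex.cosh (Real.pi * t) with hh
  have hM : 0 ≤ M := (norm_nonneg _).trans (hb 0)
  have hhc : Continuous h := hf.div (by fun_prop) cosh_pi_ne
  have hpi2 : (2:ℝ) < Real.pi := by linarith [Real.pi_gt_three]
  set S : Set ℂ := {z : ℂ | |z.re| < 1} with hS
  have hSo : IsOpen S := isOpen_lt (by fun_prop) continuous_const
  have key : ∀ (z : ℂ), z ∈ S → ∀ t : ℝ, ‖Complex.exp (z * t)‖ ≤ Real.exp |t| := by
    intro z hz t
    have hz' : |z.re| < 1 := hz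
    rw [Complex.norm_exp]
    apply Real.exp_le_exp.2
    simp only [mul_re, ofReal_re, ofReal_im, mul_zero, sub_zero]
    calc z.re * t ≤ |z.re * t| := le_abs_self _
      _ = |z.re| * |t| := abs_mul _ _
      _ ≤ 1 * |t| := by gcongr
      _ = |t| := one_mul _
  have hint0 : ∀ z ∈ S, Integrable (fun t : ℝ => Complex.exp (z * t) * h t) := by
    intro z hz
    have := integrable_kernel (f := fun t : ℝ => Complex.exp (z * t) * f t) (by fun_prop) (M := M) (θ := 1)
      (by linarith) (by
        intro t
        rw [norm_mul, mul_comm, one_mul]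
        exact mul_le_mul (hb t) (key z hz t) (norm_nonneg _) hM)
    simpa only [hh, mul_div_assoc] using this
  set F : ℂ → ℂ := fun z => ∫ t : ℝ, Complex.exp (z * t) * h t with hF
  have hFd : DifferentiableOn ℂ F S := by
    intro z hz
    have := hasDerivAt_integral_of_dominated_loc_of_deriv_le (μ := volume) (𝕜 := ℂ)
      (F := fun (z : ℂ) (t : ℝ) => Complex.exp (z * t) * h t)
      (F' := fun (z : ℂ) (t : ℝ) => (t : ℂ) * Complex.exp (z * t) * h t)
      (x₀ := z) (s := S) (bound := fun t => ‖(Real.exp (2 * |t|) * M : ℝ) / Complex.cosh (Real.pi * t)‖) (hSo.mem_nhds hz)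
      (Eventually.of_forall fun z => by
        apply Continuous.aestronglyMeasurable; fun_prop)
      (hint0 z hz)
      (by apply Continuous.aestronglyMeasurable; fun_prop)
      (by
        filter_upwards with t w hw
        simp only [hh]
        rw [norm_mul, norm_mul, norm_div, norm_div, ← mul_div_assoc]
        gcongr
        rw [Complex.norm_real, Complex.norm_real, Real.norm_eq_abs, Real.norm_eq_abs,
          abs_of_nonneg (by positivity : 0 ≤ Real.exp (2 * |t|) * M)]
        have h1 : |t| ≤ Real.exp |t| := by have := Real.add_one_le_exp |t|; linarith
        calc |t| * ‖Complex.exp (w * t)‖ * ‖f t‖ ≤ Real.exp |t| * Real.exp |t| * M := by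
              gcongr
              · exact key w hw t
              · exact hb t
          _ = _ := by rw [← Real.exp_add]; congr 2; ring)
      (by
        apply Integrable.norm
        apply integrable_kernel (M := M) (θ := 2) (by fun_prop) hpi2
        intro t
        rw [Complex.norm_real, Real.norm_eq_abs, abs_of_nonneg (by positivity), mul_comm])
      (by
        filter_upwards with t w hw
        have : HasDerivAt (fun z : ℂ => Complex.exp (z * t)) (Complex.exp (w * t) * (1 * t)) w :=
          ((hasDerivAt_id w).mul_const (t:ℂ)).cexp
        exact (this.mul_const (h t)).congr_deriv (by ring))
    exact this.2.differentiableAt.differentiableWithinAt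
  have hFz : ∀ θ : ℝ, 0 ≤ θ → θ < 1 → F θ = 0 := by
    intro θ a b
    rw [← h0 θ a b]
    simp only [hF, hh]
    congr 1; ext t
    push_cast
    ring
  have hF0 : EqOn F 0 S := by
    have hSp : IsPreconnected S := by
      have : Convex ℝ S := by
        have : S = {z : ℂ | -1 < z.re} ∩ {z : ℂ | z.re < 1} := by
          ext z; exact (show |z.re| < 1 ↔ (-1 < z.re ∧ z.re < 1) from abs_lt)
        rw [this]
        exact (convex_halfSpace_re_gt _).inter (convex_halfSpace_re_lt _)
      exact this.isPreconnected
    refine AnalyticOnNhd.eqOn_of_preconnected_of_frequently_eq (z₀ := 0)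
      (hFd.analyticOnNhd hSo) analyticOnNhd_const hSp (by simp [hS]) ?_
    have ht : Tendsto (fun n : ℕ => ((1 / ((n:ℝ) + 2) : ℝ) : ℂ)) atTop (𝓝[≠] 0) := by
      apply tendsto_nhdsWithin_of_tendsto_nhds_of_eventually_within
      · have : Tendsto (fun n : ℕ => 1 / ((n:ℝ) + 2)) atTop (𝓝 0) := by
          have := (tendsto_const_nhds (x := (1:ℝ))).div_atTop (tendsto_atTop_add_const_right atTop (2:ℝ) tendsto_natCast_atTop_atTop)
          simpa using this
        have h2 := (Complex.continuous_ofReal.tendsto 0).comp this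
        rw [ofReal_zero] at h2; exact h2
      · filter_upwards with n
        simp only [mem_compl_iff, mem_singleton_iff, ofReal_eq_zero]
        positivity
    apply ht.frequently
    apply Frequently.of_forall
    intro n
    apply hFz _ (by positivity)
    rw [div_lt_one (by positivity)]
    have : (0:ℝ) ≤ n := Nat.cast_nonneg n
    linarith
  have hFou : FourierTransform.fourier h = 0 := by
    ext w
    rw [Real.fourier_eq']
    have := hF0 (show (-2 * Real.pi * w * I : ℂ) ∈ S by simp [hS])
    simp only [hF, Pi.zero_apply] at this
    rw [Pi.zero_apply, ← this]
    congr 1; ext t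
    simp only [smul_eq_mul]
    congr 2
    simp
    ring
  have hint : Integrable h := by simpa using hint0 0 (by simp [hS])
  intro t
  have := hint.fourierInv_fourier_eq (by rw [hFou]; exact integrable_zero _ _ _) (hhc.continuousAt (x := t))
  rw [hFou] at this
  have h3 : h t = 0 := by
    rw [← this, Real.fourierInv_eq']
    simp
  exact (div_eq_zero_iff.1 h3).resolve_right (cosh_pi_ne t)

/-- uniqueness on the strip `0 ≤ Re ≤ 1/2`. -/
lemma strip_zero {f : ℂ → ℂ} {M : ℝ}
    (hc : ContinuousOn f {w : ℂ | 0 ≤ w.re ∧ w.re ≤ 1/2})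
    (hd : DifferentiableOn ℂ f {w : ℂ | 0 < w.re ∧ w.re < 1/2})
    (hb : ∀ w : ℂ, 0 ≤ w.re → w.re ≤ 1/2 → ‖f w‖ ≤ M)
    (h0 : ∀ w : ℂ, w.re = 0 → f w = 0) : f (1/2) = 0 := by
  have hin : ∀ x : ℝ, 0 < x → x < 1/2 → f x = 0 := by
    intro x hx0 hx1
    have hcl : closure (Complex.HadamardThreeLines.verticalStrip 0 (1/2)) ⊆ {w : ℂ | 0 ≤ w.re ∧ w.re ≤ 1/2} := by
      apply closure_minimal
      · intro w hw; exact ⟨hw.1.le, hw.2.le⟩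
      · exact (isClosed_le continuous_const continuous_re).inter (isClosed_le continuous_re continuous_const)
    have := Complex.HadamardThreeLines.norm_le_interp_of_mem_verticalClosedStrip' (f := f) (l := 0) (u := 1/2)
      (z := x) (a := 0) (b := M) (by norm_num) ⟨by simpa using hx0.le, by simpa using hx1.le⟩ 
      ⟨hd.mono (fun w hw => ⟨hw.1, hw.2⟩), hc.mono hcl⟩ 
      ⟨M, by rintro _ ⟨w, hw, rfl⟩; exact hb w hw.1 hw.2⟩ 
      (by intro w hw; rw [h0 w hw]; simp) (by intro w hw; have : w.re = 1/2 := hw; exact hb w (by rw [this]; norm_num) this.le)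
    rw [Real.zero_rpow, zero_mul] at this
    · exact norm_le_zero_iff.1 this
    · simp only [ofReal_re]; intro h; norm_num at h; linarith
  have ht : Tendsto (fun n : ℕ => ((1/2 - 1 / ((n:ℝ) + 3) : ℝ) : ℂ)) atTop (𝓝[{w : ℂ | 0 ≤ w.re ∧ w.re ≤ 1/2}] (1/2)) := by
    apply tendsto_nhdsWithin_of_tendsto_nhds_of_eventually_within
    · have : Tendsto (fun n : ℕ => 1/2 - 1 / ((n:ℝ) + 3)) atTop (𝓝 (1/2 - 0)) := by
        apply Tendsto.sub tendsto_const_nhds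
        exact (tendsto_const_nhds (x := (1:ℝ))).div_atTop (tendsto_atTop_add_const_right atTop (3:ℝ) tendsto_natCast_atTop_atTop)
      have h2 := (Complex.continuous_ofReal.tendsto _).comp this
      rw [show ((1/2 - 0 : ℝ) : ℂ) = 1/2 by push_cast; ring] at h2; exact h2
    · filter_upwards with n
      have h1 : 1 / ((n:ℝ) + 3) ≤ 1/2 := by
        apply one_div_le_one_div_of_le (by norm_num)
        have : (0:ℝ) ≤ n := Nat.cast_nonneg n
        linarith
      have h2 : 0 < 1 / ((n:ℝ) + 3) := by positivity
      refine ⟨?_, ?_⟩ <;> rw [ofReal_re] <;> linarith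
  have hl := (hc (1/2) ⟨by norm_num, by norm_num⟩).tendsto.comp ht
  refine tendsto_nhds_unique hl ?_
  refine tendsto_const_nhds.congr ?_
  intro n
  have h1 : 1 / ((n:ℝ) + 3) < 1/2 := by
    apply one_div_lt_one_div_of_lt (by norm_num)
    have : (0:ℝ) ≤ n := Nat.cast_nonneg n
    linarith
  have h2 : 0 < 1 / ((n:ℝ) + 3) := by positivity
  symm
  apply hin <;> linarith

end P2
end TT

namespace TT
section P3
open Complex Set Filter Topology


structure Good (R : H →L[ℂ] H) : Prop where
  sa : IsSelfAdjoint R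
  sp : spectrum ℝ R ⊆ Icc 0 2
  inj : ∀ x, R x = 0 → x = 0
  inj2 : ∀ x, (2 - R) x = 0 → x = 0

lemma Good.mem {R : H →L[ℂ] H} (h : Good R) {z : ℂ} (hz : z ∈ spectrum ℂ R) :
    z = (z.re : ℂ) ∧ 0 ≤ z.re ∧ z.re ≤ 2 := by
  have h1 := h.sa.spectrumRestricts
  have h2 : ((z.re : ℝ) : ℂ) = z := h1.rightInvOn hz
  refine ⟨h2.symm, h.sp ?_⟩
  have := h1.apply_mem hz
  exact this

noncomputable def eps (n : ℕ) : ℝ := 1 / ((n : ℝ) + 2)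

lemma eps_pos (n : ℕ) : 0 < eps n := by unfold eps; positivity

lemma eps_le (n : ℕ) : eps n ≤ 1 / 2 := by
  unfold eps
  apply one_div_le_one_div_of_le (by norm_num)
  have : (0:ℝ) ≤ n := Nat.cast_nonneg n
  linarith

lemma eps_anti {n m : ℕ} (h : n ≤ m) : eps m ≤ eps n := by
  unfold eps
  have : (n:ℝ) ≤ m := Nat.cast_le.2 h
  gcongr

lemma eps_tendsto : Tendsto eps atTop (𝓝 0) := by
  unfold eps
  exact (tendsto_const_nhds (x := (1:ℝ))).div_atTop (tendsto_atTop_add_const_right atTop (2:ℝ) tendsto_natCast_atTop_atTop)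

noncomputable def lg (n : ℕ) (r : ℝ) : ℝ := Real.log (max r (eps n))

lemma lg_cont (n : ℕ) : Continuous (lg n) := by
  unfold lg
  apply Continuous.log (by fun_prop)
  intro x
  exact (lt_max_of_lt_right (eps_pos n)).ne'

lemma exp_lg (n : ℕ) (r : ℝ) : Real.exp (lg n r) = max r (eps n) :=
  Real.exp_log (lt_max_of_lt_right (eps_pos n))

lemma lg_le {n : ℕ} {r : ℝ} (h : r ≤ 2) : lg n r ≤ Real.log 2 := by
  unfold lg
  apply Real.log_le_log (lt_max_of_lt_right (eps_pos n))
  exact max_le h (by linarith [eps_le n])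

noncomputable def An (R : H →L[ℂ] H) (n : ℕ) : H →L[ℂ] H := cfc (lg n) R

noncomputable def Yn (R : H →L[ℂ] H) (n : ℕ) (α β : ℂ) : H →L[ℂ] H :=
  NormedSpace.exp (α • An R n + β • An (2 - R) n)

noncomputable def gn (n : ℕ) (α β : ℂ) (z : ℂ) : ℂ :=
  Complex.exp (α * (lg n z.re : ℝ) + β * (lg n (2 - z.re) : ℝ))

lemma lgre_cont (n : ℕ) : Continuous (fun z : ℂ => ((lg n z.re : ℝ) : ℂ)) := by
  have := lg_cont n; fun_prop

lemma lgre2_cont (n : ℕ) : Continuous (fun z : ℂ => ((lg n (2 - z.re) : ℝ) : ℂ)) := by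
  have := lg_cont n; fun_prop

lemma gn_cont (n : ℕ) (α β : ℂ) : Continuous (gn n α β) := by
  unfold gn
  have := lgre_cont n
  have := lgre2_cont n
  fun_prop

lemma two_sub_eq {R : H →L[ℂ] H} (h : IsSelfAdjoint R) : 2 - R = cfc (fun r : ℝ => 2 - r) R := by
  rw [cfc_sub _ _ _ , cfc_const (2:ℝ) R, cfc_id' ℝ R, map_ofNat]

lemma An2 {R : H →L[ℂ] H} (h : IsSelfAdjoint R) (n : ℕ) :
    An (2 - R) n = cfc (fun r => lg n (2 - r)) R := by
  unfold An
  rw [cfc_comp' (lg n) (fun r => 2 - r) R (lg_cont n).continuousOn, ← two_sub_eq h]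

lemma Yn_eq {R : H →L[ℂ] H} (h : IsSelfAdjoint R) (n : ℕ) (α β : ℂ) :
    Yn R n α β = cfc (gn n α β) R := by
  have hN : IsStarNormal R := h.isStarNormal
  have c1 := lgre_cont n
  have c2 := lgre2_cont n
  have e : α • An R n + β • An (2 - R) n
      = cfc (fun z : ℂ => α * (lg n z.re : ℝ) + β * (lg n (2 - z.re) : ℝ)) R := by
    rw [An2 h, An, cfc_real_eq_complex (lg n), cfc_real_eq_complex (fun r => lg n (2 - r)),
      cfc_add _ _ _ (c1.const_mul α).continuousOn (c2.const_mul β).continuousOn, cfc_const_mul _ _ _ c1.continuousOn,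
      cfc_const_mul _ _ _ c2.continuousOn]
  unfold Yn gn
  rw [e, ← CFC.complex_exp_eq_normedSpace_exp (cfc_predicate _ _), cfc_comp' Complex.exp _ R (by fun_prop) (by fun_prop)]

lemma Yn_add {R : H →L[ℂ] H} (h : IsSelfAdjoint R) (n : ℕ) (α β α' β' : ℂ) :
    Yn R n (α + α') (β + β') = Yn R n α β * Yn R n α' β' := by
  rw [Yn_eq h, Yn_eq h, Yn_eq h, ← cfc_mul _ _ _ (gn_cont _ _ _).continuousOn (gn_cont _ _ _).continuousOn]
  congr 1; ext z
  unfold gn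
  rw [← Complex.exp_add]; congr 1; ring

lemma Yn_star (R : H →L[ℂ] H) (n : ℕ) (α β : ℂ) :
    star (Yn R n α β) = Yn R n (star α) (star β) := by
  unfold Yn
  rw [NormedSpace.star_exp, star_add, star_smul, star_smul]
  have h1 : star (An R n) = An R n := (cfc_predicate (lg n) R : IsSelfAdjoint _)
  have h2 : star (An (2 - R) n) = An (2 - R) n := (cfc_predicate (lg n) _ : IsSelfAdjoint _)
  rw [h1, h2]

lemma Yn_zero (R : H →L[ℂ] H) (n : ℕ) : Yn R n 0 0 = 1 := by
  simp [Yn]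

lemma Yn_diff (R : H →L[ℂ] H) (n : ℕ) {a b : ℂ → ℂ} {s : Set ℂ} (ha : DifferentiableOn ℂ a s)
    (hb : DifferentiableOn ℂ b s) : DifferentiableOn ℂ (fun w => Yn R n (a w) (b w)) s := by
  unfold Yn
  have h1 : Differentiable ℂ (NormedSpace.exp : (H →L[ℂ] H) → (H →L[ℂ] H)) :=
    fun x => (NormedSpace.exp_analytic x).differentiableAt
  exact h1.comp_differentiableOn ((ha.smul_const _).add (hb.smul_const _))

lemma Yn_contOn (R : H →L[ℂ] H) (n : ℕ) {a b : ℂ → ℂ} {s : Set ℂ} (ha : ContinuousOn a s)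
    (hb : ContinuousOn b s) : ContinuousOn (fun w => Yn R n (a w) (b w)) s := by
  unfold Yn
  have h1 : Differentiable ℂ (NormedSpace.exp : (H →L[ℂ] H) → (H →L[ℂ] H)) :=
    fun x => (NormedSpace.exp_analytic x).differentiableAt
  exact h1.continuous.comp_continuousOn ((ha.smul continuousOn_const).add (hb.smul continuousOn_const))

def Dom (α β : ℂ) : Prop := (0 ≤ α.re ∧ α.re ≤ 1) ∧ (0 ≤ β.re ∧ β.re ≤ 1)

lemma gn_norm {n : ℕ} {α β z : ℂ} (hd : Dom α β) (h0 : 0 ≤ z.re) (h2 : z.re ≤ 2) :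
    ‖gn n α β z‖ ≤ 4 := by
  unfold gn
  rw [Complex.norm_exp]
  simp only [add_re, mul_re, ofReal_re, ofReal_im, mul_zero, sub_zero]
  have a1 : lg n z.re ≤ Real.log 2 := lg_le h2
  have a2 : lg n (2 - z.re) ≤ Real.log 2 := lg_le (by linarith)
  have l2 : 0 ≤ Real.log 2 := Real.log_nonneg (by norm_num)
  obtain ⟨⟨d1, d2⟩, d3, d4⟩ := hd
  have e : α.re * lg n z.re + β.re * lg n (2 - z.re) ≤ Real.log 4 := by
    rw [show (4:ℝ) = 2 * 2 by norm_num, Real.log_mul (by norm_num) (by norm_num)]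
    nlinarith
  calc _ ≤ Real.exp (Real.log 4) := Real.exp_le_exp.2 e
    _ = 4 := Real.exp_log (by norm_num)

lemma Yn_norm {R : H →L[ℂ] H} (h : Good R) (n : ℕ) {α β : ℂ} (hd : Dom α β) :
    ‖Yn R n α β‖ ≤ 4 := by
  rw [Yn_eq h.sa]
  apply norm_cfc_le (by norm_num)
  intro z hz
  exact gn_norm hd (h.mem hz).2.1 (h.mem hz).2.2

lemma Yn_sub_norm {R : H →L[ℂ] H} (h : Good R) {k n m : ℕ} (hn : k ≤ n) (hm : k ≤ m) {α β : ℂ} (hd : Dom α β) :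
    ‖(Yn R n α β - Yn R m α β) * (R * (2 - R))‖ ≤ 16 * eps k := by
  have hN : IsStarNormal R := h.sa.isStarNormal
  have e2 : R * (2 - R) = cfc (fun z : ℂ => z * (2 - z)) R := by
    rw [cfc_mul _ _ _ (by fun_prop) (by fun_prop), cfc_sub _ _ _ (by fun_prop) (by fun_prop), cfc_const (2:ℂ) R, cfc_id' ℂ R, map_ofNat]
  rw [Yn_eq h.sa, Yn_eq h.sa, e2, ← cfc_sub _ _ _ (gn_cont _ _ _).continuousOn (gn_cont _ _ _).continuousOn,
    ← cfc_mul (fun x => gn n α β x - gn m α β x) _ _ ((gn_cont _ _ _).sub (gn_cont _ _ _)).continuousOn (by fun_prop)]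
  have ek := eps_pos k
  apply norm_cfc_le (by linarith)
  intro z hz
  obtain ⟨z1, z2, z3⟩ := h.mem hz
  have b1 := gn_norm (n := n) hd z2 z3
  have b2 := gn_norm (n := m) hd z2 z3
  have b3 : ‖gn n α β z - gn m α β z‖ ≤ 8 := (norm_sub_le _ _).trans (by linarith)
  have nz : ‖z * (2 - z)‖ = z.re * (2 - z.re) := by
    rw [z1, show ((z.re:ℂ) * (2 - z.re)) = ((z.re * (2 - z.re) : ℝ) : ℂ) by push_cast; ring, norm_real,
      Real.norm_eq_abs, abs_of_nonneg (by nlinarith)]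
    simp
  rw [norm_mul, nz]
  by_cases hc : eps k ≤ z.re ∧ eps k ≤ 2 - z.re
  · have : gn n α β z = gn m α β z := by
      unfold gn lg
      rw [max_eq_left ((eps_anti hn).trans hc.1), max_eq_left ((eps_anti hm).trans hc.1),
        max_eq_left ((eps_anti hn).trans hc.2), max_eq_left ((eps_anti hm).trans hc.2)]
    rw [this]; simp; linarith
  · have : z.re * (2 - z.re) ≤ 2 * eps k := by
      by_cases h3 : eps k ≤ z.re
      · have : 2 - z.re < eps k := by
          by_contra h4; exact hc ⟨h3, not_lt.1 h4⟩
        nlinarith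
      · nlinarith
    nlinarith [norm_nonneg (gn n α β z - gn m α β z), mul_nonneg z2 (sub_nonneg.2 z3)]

lemma Yn_one_zero {R : H →L[ℂ] H} (h : Good R) (n : ℕ) : ‖Yn R n 1 0 - R‖ ≤ eps n := by
  have hN : IsStarNormal R := h.sa.isStarNormal
  have ek := eps_pos n
  rw [Yn_eq h.sa]
  nth_rw 2 [← cfc_id' ℂ R]
  rw [← cfc_sub _ _ _ (gn_cont _ _ _).continuousOn (by fun_prop)]
  apply norm_cfc_le ek.le
  intro z hz
  obtain ⟨z1, z2, z3⟩ := h.mem hz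
  unfold gn
  rw [one_mul, zero_mul, add_zero, ← ofReal_exp, exp_lg]
  nth_rw 2 [z1]
  rw [← ofReal_sub, norm_real, Real.norm_eq_abs, abs_le]
  rcases max_cases z.re (eps n) with ⟨h, _⟩ | ⟨h, _⟩ <;> rw [h] <;> constructor <;> linarith

lemma Yn_zero_one {R : H →L[ℂ] H} (h : Good R) (n : ℕ) : ‖Yn R n 0 1 - (2 - R)‖ ≤ eps n := by
  have hN : IsStarNormal R := h.sa.isStarNormal
  have ek := eps_pos n
  have e2 : (2 - R) = cfc (fun z : ℂ => (2 - z)) R := by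
    rw [cfc_sub _ _ _ (by fun_prop) (by fun_prop), cfc_const (2:ℂ) R, cfc_id' ℂ R, map_ofNat]
  rw [Yn_eq h.sa, e2]
  rw [← cfc_sub _ _ _ (gn_cont _ _ _).continuousOn (by fun_prop)]
  apply norm_cfc_le ek.le
  intro z hz
  obtain ⟨z1, z2, z3⟩ := h.mem hz
  unfold gn
  rw [one_mul, zero_mul, zero_add, ← ofReal_exp, exp_lg]
  nth_rw 2 [z1]
  rw [show ((max (2 - z.re) (eps n) : ℝ) : ℂ) - (2 - (z.re : ℂ)) = ((max (2 - z.re) (eps n) - (2 - z.re) : ℝ) : ℂ) by push_cast; ring, norm_real, Real.norm_eq_abs, abs_le]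
  rcases max_cases (2 - z.re) (eps n) with ⟨h, _⟩ | ⟨h, _⟩ <;> rw [h] <;> constructor <;> linarith

lemma An_fix {R : H →L[ℂ] H} (h : IsSelfAdjoint R) {Ω : H} (hΩ : R Ω = Ω) (n : ℕ) : An R n Ω = 0 := by
  have hl1 : lg n 1 = 0 := by
    unfold lg; rw [max_eq_left (by linarith [eps_le n])]; simp
  have hdiff : DifferentiableAt ℝ (lg n) 1 := by
    have : (lg n) =ᶠ[𝓝 1] Real.log := by
      filter_upwards [lt_mem_nhds (show (1/2:ℝ) < 1 by norm_num)] with x hx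
      unfold lg; rw [max_eq_left (by linarith [eps_le n])]
    exact (Real.differentiableAt_log (by norm_num)).congr_of_eventuallyEq this
  have hk : Continuous (dslope (lg n) 1) := by
    rw [← continuousOn_univ, continuousOn_dslope univ_mem]
    exact ⟨(lg_cont n).continuousOn, hdiff⟩
  have e : An R n = cfc (dslope (lg n) 1) R * (R - 1) := by
    have e1 : R - 1 = cfc (fun r : ℝ => r - 1) R := by
      rw [cfc_sub _ _ _ (by fun_prop) (by fun_prop), cfc_const (1:ℝ) R, cfc_id' ℝ R, map_one]
    rw [e1, ← cfc_mul _ _ _ hk.continuousOn (by fun_prop), An]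
    congr 1; ext r
    have := sub_smul_dslope (lg n) 1 r
    rw [hl1, smul_eq_mul] at this
    linarith
  rw [e]
  simp [hΩ]

lemma exp_fix {X : H →L[ℂ] H} {Ω : H} (h : X Ω = 0) : NormedSpace.exp X Ω = Ω := by
  have h1 := (NormedSpace.exp_series_hasSum_exp' (𝕂 := ℂ) X)
  have h2 := h1.mapL (ContinuousLinearMap.apply ℂ H Ω)
  have h3 := hasSum_single (f := fun n => (ContinuousLinearMap.apply ℂ H Ω) (((n.factorial : ℂ))⁻¹ • X ^ n)) 0 (by
    intro n hn
    obtain ⟨m, rfl⟩ := Nat.exists_eq_succ_of_ne_zero hn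
    simp [pow_succ, h])
  have := h2.unique h3
  simpa using this

lemma Yn_fix {R : H →L[ℂ] H} (h : IsSelfAdjoint R) {Ω : H} (hΩ : R Ω = Ω) (n : ℕ) (α β : ℂ) :
    Yn R n α β Ω = Ω := by
  unfold Yn
  apply exp_fix
  have h2 : IsSelfAdjoint (2 - R) := by
    rw [two_sub_eq h]; exact cfc_predicate _ _
  simp only [add_apply, smul_apply]
  rw [An_fix h hΩ, An_fix h2 (by simp [hΩ, two_smul])]
  simp

end P3
end TT

namespace TT
section P4
open Complex Set Filter Topology
open scoped ComplexInnerProductSpace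


lemma dense_of_inj {T : H →L[ℂ] H} (h : IsSelfAdjoint T) (hi : ∀ x, T x = 0 → x = 0) :
    DenseRange T := by
  have h1 := ContinuousLinearMap.orthogonal_range T
  rw [show ContinuousLinearMap.adjoint T = T from h] at h1
  have h2 : (T : H →ₗ[ℂ] H).ker = ⊥ := by
    rw [eq_bot_iff]; intro x hx; exact hi x hx
  rw [h2, ← Submodule.topologicalClosure_eq_top_iff] at h1
  have := Submodule.dense_iff_topologicalClosure_eq_top.2 h1
  rw [LinearMap.coe_range] at this
  exact this

variable {R : H →L[ℂ] H}

lemma Good.sa2 (h : Good R) : IsSelfAdjoint (2 - R) := by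
  rw [two_sub_eq h.sa]; exact cfc_predicate _ _

lemma Good.comm (R : H →L[ℂ] H) : Commute R (2 - R) :=
  (Commute.ofNat_right R 2).sub_right (Commute.refl R)

lemma Good.dense (h : Good R) : DenseRange ((R * (2 - R) : H →L[ℂ] H)) := by
  apply dense_of_inj
  · rw [isSelfAdjoint_iff, star_mul, h.sa.star_eq, h.sa2.star_eq, (Good.comm R).eq]
  · intro x hx
    exact h.inj2 x (h.inj _ hx)

lemma Yn_cauchy (h : Good R) (x : H) {δ : ℝ} (hδ : 0 < δ) :
    ∃ k : ℕ, ∀ n ≥ k, ∀ m ≥ k, ∀ α β, Dom α β → ‖Yn R n α β x - Yn R m α β x‖ < δ := by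
  obtain ⟨y, hy⟩ := h.dense.exists_dist_lt x (show 0 < δ / 16 by positivity)
  have ht : Tendsto (fun k => 16 * eps k * ‖y‖) atTop (𝓝 0) := by
    have := (eps_tendsto.const_mul 16).mul_const ‖y‖
    simpa using this
  obtain ⟨k, hk⟩ := (ht.eventually (gt_mem_nhds (show 0 < δ/2 by positivity))).exists
  refine ⟨k, fun n hn m hm α β hd => ?_⟩
  set N := R * (2 - R) with hN
  rw [dist_eq_norm] at hy
  have e : Yn R n α β x - Yn R m α β x = (Yn R n α β) (x - N y) - (Yn R m α β) (x - N y)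
      + ((Yn R n α β - Yn R m α β) * N) y := by
    simp only [map_sub, mul_apply_eq_comp, sub_apply]; abel
  rw [e]
  have b1 := (Yn R n α β).le_of_opNorm_le (Yn_norm h n hd) (x - N y)
  have b2 := (Yn R m α β).le_of_opNorm_le (Yn_norm h m hd) (x - N y)
  have b3 := ContinuousLinearMap.le_of_opNorm_le _ (Yn_sub_norm h hn hm hd) y
  calc _ ≤ ‖Yn R n α β (x - N y)‖ + ‖Yn R m α β (x - N y)‖ + ‖((Yn R n α β - Yn R m α β) * N) y‖ :=
        (norm_add_le _ _).trans (add_le_add_left (norm_sub_le _ _) _)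
    _ < δ := by linarith

lemma exists_Y (h : Good R) : ∃ Y : ℂ → ℂ → H →L[ℂ] H, ∀ x : H, ∀ δ > 0, ∃ k : ℕ, ∀ n ≥ k,
    ∀ α β, Dom α β → ‖Yn R n α β x - Y α β x‖ ≤ δ := by
  have hex : ∀ α β, ∃ T : H →L[ℂ] H, Dom α β → ∀ x, Tendsto (fun n => Yn R n α β x) atTop (𝓝 (T x)) := by
    intro α β
    by_cases hd : Dom α β
    · have hc : ∀ x, ∃ y, Tendsto (fun n => Yn R n α β x) atTop (𝓝 y) := by
        intro x
        apply cauchySeq_tendsto_of_complete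
        rw [Metric.cauchySeq_iff]
        intro ε hε
        obtain ⟨k, hk⟩ := Yn_cauchy h x hε
        exact ⟨k, fun n hn m hm => by rw [dist_eq_norm]; exact hk n hn m hm α β hd⟩
      choose f hf using hc
      have hb : Bornology.IsBounded (range (fun n => Yn R n α β)) := by
        rw [isBounded_iff_forall_norm_le]
        exact ⟨4, by rintro _ ⟨n, rfl⟩; exact Yn_norm h n hd⟩
      refine ⟨ContinuousLinearMap.ofTendstoOfBoundedRange (l := atTop) f (fun n => Yn R n α β) (tendsto_pi_nhds.2 hf) hb, fun _ x => ?_⟩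
      exact hf x
    · exact ⟨0, fun h => absurd h hd⟩
  choose Y hY using hex
  refine ⟨Y, fun x δ hδ => ?_⟩
  obtain ⟨k, hk⟩ := Yn_cauchy h x hδ
  refine ⟨k, fun n hn α β hd => ?_⟩
  have ht : Tendsto (fun m => ‖Yn R n α β x - Yn R m α β x‖) atTop (𝓝 ‖Yn R n α β x - Y α β x‖) :=
    (tendsto_const_nhds.sub (hY α β hd x)).norm
  apply le_of_tendsto ht
  filter_upwards [eventually_ge_atTop k] with m hm
  exact (hk n hn m hm α β hd).le

open Classical in
noncomputable def Y (R : H →L[ℂ] H) : ℂ → ℂ → H →L[ℂ] H :=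
  if h : Good R then (exists_Y h).choose else fun _ _ => 0

lemma Y_spec (h : Good R) (x : H) {δ : ℝ} (hδ : 0 < δ) : ∃ k : ℕ, ∀ n ≥ k,
    ∀ α β, Dom α β → ‖Yn R n α β x - Y R α β x‖ ≤ δ := by
  have := (exists_Y h).choose_spec x δ hδ
  unfold Y
  rw [dif_pos h]
  exact this

lemma Y_tendsto (h : Good R) {α β : ℂ} (hd : Dom α β) (x : H) :
    Tendsto (fun n => Yn R n α β x) atTop (𝓝 (Y R α β x)) := by
  rw [Metric.tendsto_atTop]
  intro ε hε
  obtain ⟨k, hk⟩ := Y_spec h x (half_pos hε)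
  refine ⟨k, fun n hn => ?_⟩
  rw [dist_eq_norm]
  linarith [hk n hn α β hd]

lemma Y_norm (h : Good R) {α β : ℂ} (hd : Dom α β) (x : H) : ‖Y R α β x‖ ≤ 4 * ‖x‖ := by
  apply le_of_tendsto (Y_tendsto h hd x).norm
  filter_upwards with n
  exact (Yn R n α β).le_of_opNorm_le (Yn_norm h n hd) x

lemma Y_loc (h : Good R) {a b : ℂ → ℂ} {y : ℂ → H} {S : Set ℂ} (hd : ∀ w ∈ S, Dom (a w) (b w))
    (hy : ContinuousOn y S) :
    TendstoLocallyUniformlyOn (fun n w => Yn R n (a w) (b w) (y w)) (fun w => Y R (a w) (b w) (y w)) atTop S := by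
  rw [Metric.tendstoLocallyUniformlyOn_iff]
  intro ε hε w0 hw0
  have h1 : ∀ᶠ w in 𝓝[S] w0, dist (y w) (y w0) < ε / 16 := (Metric.tendsto_nhds.1 (hy w0 hw0)) _ (by positivity)
  obtain ⟨k, hk⟩ := Y_spec h (y w0) (show 0 < ε / 4 by positivity)
  refine ⟨{w | dist (y w) (y w0) < ε / 16} ∩ S, inter_mem h1 self_mem_nhdsWithin, ?_⟩
  filter_upwards [eventually_ge_atTop k] with n hn w hw
  have hdw := hd w hw.2
  have h2 : ‖y w - y w0‖ < ε / 16 := by rw [← dist_eq_norm]; exact hw.1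
  have b0 := hk n hn _ _ hdw
  have b1 := (Yn R n (a w) (b w)).le_of_opNorm_le (Yn_norm h n hdw) (y w - y w0)
  have b2 := Y_norm h hdw (y w - y w0)
  rw [dist_comm, dist_eq_norm]
  have e : Yn R n (a w) (b w) (y w) - Y R (a w) (b w) (y w) = Yn R n (a w) (b w) (y w - y w0) - Y R (a w) (b w) (y w - y w0)
     + (Yn R n (a w) (b w) (y w0) - Y R (a w) (b w) (y w0)) := by
    simp only [map_sub]; abel
  rw [e]
  calc _ ≤ ‖Yn R n (a w) (b w) (y w - y w0)‖ + ‖Y R (a w) (b w) (y w - y w0)‖ + ‖Yn R n (a w) (b w) (y w0) - Y R (a w) (b w) (y w0)‖ :=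
        (norm_add_le _ _).trans (add_le_add_left (norm_sub_le _ _) _)
    _ < ε := by linarith

lemma Y_contOn (h : Good R) {a b : ℂ → ℂ} {y : ℂ → H} {S : Set ℂ} (hd : ∀ w ∈ S, Dom (a w) (b w))
    (ha : ContinuousOn a S) (hb : ContinuousOn b S) (hy : ContinuousOn y S) :
    ContinuousOn (fun w => Y R (a w) (b w) (y w)) S :=
  (Y_loc h hd hy).continuousOn (Frequently.of_forall fun n => (Yn_contOn R n ha hb).clm_apply hy)

lemma Y_diffOn (h : Good R) {a b : ℂ → ℂ} {y : ℂ → H} {S : Set ℂ} (hS : IsOpen S) (hd : ∀ w ∈ S, Dom (a w) (b w))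
    (ha : DifferentiableOn ℂ a S) (hb : DifferentiableOn ℂ b S) (hy : DifferentiableOn ℂ y S) :
    DifferentiableOn ℂ (fun w => Y R (a w) (b w) (y w)) S :=
  (Y_loc h hd hy.continuousOn).differentiableOn (Eventually.of_forall fun n => (Yn_diff R n ha hb).clm_apply hy) hS

lemma Y_mul (h : Good R) {α β α' β' : ℂ} (h1 : Dom α β) (h2 : Dom α' β') (h3 : Dom (α + α') (β + β')) :
    Y R α β * Y R α' β' = Y R (α + α') (β + β') := by
  ext x
  have t1 := Y_tendsto h h3 x
  have t2 := Y_tendsto h h1 (Y R α' β' x)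
  have t3 := Y_tendsto h h2 x
  have t4 : Tendsto (fun n => Yn R n α β (Yn R n α' β' x - Y R α' β' x)) atTop (𝓝 0) := by
    rw [tendsto_zero_iff_norm_tendsto_zero]
    have : Tendsto (fun n => 4 * ‖Yn R n α' β' x - Y R α' β' x‖) atTop (𝓝 0) := by
      have := ((t3.sub_const (Y R α' β' x)).norm).const_mul 4
      simpa using this
    refine squeeze_zero (fun _ => norm_nonneg _) (fun n => ?_) this
    exact (Yn R n α β).le_of_opNorm_le (Yn_norm h n h1) _
  have t5 := t4.add t2
  rw [zero_add] at t5
  refine tendsto_nhds_unique t5 (t1.congr fun n => ?_)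
  rw [Yn_add h.sa, map_sub, sub_add_cancel]; rfl

lemma Y_apply (h : Good R) {α β α' β' : ℂ} (h1 : Dom α β) (h2 : Dom α' β') (h3 : Dom (α + α') (β + β')) (x : H) :
    Y R α β (Y R α' β' x) = Y R (α + α') (β + β') x := by
  rw [← Y_mul h h1 h2 h3]; rfl

lemma Dom.star {α β : ℂ} (h : Dom α β) : Dom (star α) (star β) := by
  simpa [Dom] using h

lemma Y_inner (h : Good R) {α β : ℂ} (hd : Dom α β) (x y : H) :
    ⟪Y R α β x, y⟫ = ⟪x, Y R (star α) (star β) y⟫ := by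
  have t1 := (Y_tendsto h hd x).inner (tendsto_const_nhds (x := y)) (𝕜 := ℂ)
  have t2 := (tendsto_const_nhds (x := x)).inner (Y_tendsto h hd.star y) (𝕜 := ℂ)
  refine tendsto_nhds_unique t1 (t2.congr fun n => ?_)
  rw [← Yn_star, ContinuousLinearMap.star_eq_adjoint, ContinuousLinearMap.adjoint_inner_right]

lemma Y_star (h : Good R) {α β : ℂ} (hd : Dom α β) : star (Y R α β) = Y R (star α) (star β) := by
  rw [ContinuousLinearMap.star_eq_adjoint, eq_comm, ContinuousLinearMap.eq_adjoint_iff]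
  intro x y
  rw [Y_inner h hd.star, star_star, star_star]

lemma Y_zero (h : Good R) : Y R 0 0 = 1 := by
  ext x
  refine tendsto_nhds_unique (Y_tendsto h (by simp [Dom]) x) ?_
  simp [Yn_zero]

lemma Y_one_zero (h : Good R) : Y R 1 0 = R := by
  ext x
  refine tendsto_nhds_unique (Y_tendsto h (by simp [Dom]) x) ?_
  rw [tendsto_iff_norm_sub_tendsto_zero]
  have : Tendsto (fun n => eps n * ‖x‖) atTop (𝓝 0) := by simpa using eps_tendsto.mul_const ‖x‖
  exact squeeze_zero (fun _ => norm_nonneg _) (fun n => ContinuousLinearMap.le_of_opNorm_le _ (Yn_one_zero h n) x) this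

lemma Y_zero_one (h : Good R) : Y R 0 1 = 2 - R := by
  ext x
  refine tendsto_nhds_unique (Y_tendsto h (by simp [Dom]) x) ?_
  rw [tendsto_iff_norm_sub_tendsto_zero]
  have : Tendsto (fun n => eps n * ‖x‖) atTop (𝓝 0) := by simpa using eps_tendsto.mul_const ‖x‖
  exact squeeze_zero (fun _ => norm_nonneg _) (fun n => ContinuousLinearMap.le_of_opNorm_le _ (Yn_zero_one h n) x) this

lemma Y_fix (h : Good R) {Ω : H} (hΩ : R Ω = Ω) {α β : ℂ} (hd : Dom α β) : Y R α β Ω = Ω := by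
  refine tendsto_nhds_unique (Y_tendsto h hd Ω) ?_
  simp_rw [Yn_fix h.sa hΩ]
  exact tendsto_const_nhds

/-- intertwining with antiunitary -/
lemma Y_conj (h : Good R) (J : H → H) (hJ : Continuous J)
    (hn : ∀ n α β x, J (Yn R n α β x) = Yn R n (star β) (star α) (J x)) {α β : ℂ} (hd : Dom α β) (x : H) :
    J (Y R α β x) = Y R (star β) (star α) (J x) := by
  have t1 := (hJ.tendsto _).comp (Y_tendsto h hd x)
  have t2 := Y_tendsto h (α := star β) (β := star α) ⟨hd.star.2, hd.star.1⟩ (J x)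
  refine tendsto_nhds_unique t1 (t2.congr fun n => ?_)
  simp [hn]

end P4
end TT

namespace TT
section P5
set_option linter.all false
open Complex Set Filter Topology
open scoped ComplexInnerProductSpace


structure IsProj (P : H →L[ℝ] H) : Prop where
  idem : ∀ x, P (P x) = P x
  symm : ∀ x y, (⟪P x, y⟫).re = (⟪x, P y⟫).re

lemma P_smul (P : H →L[ℝ] H) (c : ℂ) (x : H) : P (c • x) = (c.re : ℂ) • P x + (c.im : ℂ) • P (I • x) := by
  have : c • x = c.re • x + c.im • (I • x) := by
    conv_lhs => rw [← re_add_im c]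
    rw [add_smul, mul_smul]
    rfl
  rw [this, map_add, map_smul, map_smul]
  rfl

lemma P_I_I (P : H →L[ℝ] H) (x : H) : P (I • I • x) = - P x := by
  rw [smul_smul, I_mul_I, neg_smul, one_smul, map_neg]

noncomputable def Rop (P : H →L[ℝ] H) : H →L[ℂ] H :=
  LinearMap.mkContinuous
    { toFun := fun x => P x - I • P (I • x)
      map_add' := by intro x y; simp only [smul_add, map_add]; abel
      map_smul' := by
        intro c x
        rw [smul_comm I c x, P_smul P c x, P_smul P c (I • x), P_I_I]
        simp only [RingHom.id_apply]
        nth_rw 5 [← re_add_im c]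
        match_scalars
        · ring
        · linear_combination (c.im : ℂ) * I_mul_I } (‖P‖ + ‖P‖) (by
    intro x
    refine (norm_sub_le _ _).trans ?_
    have h1 := P.le_opNorm x
    have h2 := P.le_opNorm (I • x)
    rw [norm_smul, norm_I, one_mul] at h2
    simp only [norm_smul, norm_I, one_mul]
    linarith)

lemma Rop_apply (P : H →L[ℝ] H) (x : H) : Rop P x = P x - I • P (I • x) := rfl

noncomputable def Dop (P : H →L[ℝ] H) : H →L⋆[ℂ] H :=
  LinearMap.mkContinuous
    { toFun := fun x => P x + I • P (I • x)
      map_add' := by intro x y; simp only [smul_add, map_add]; abel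
      map_smul' := by
        intro c x
        rw [smul_comm I c x, P_smul P c x, P_smul P c (I • x), P_I_I]
        have : (starRingEnd ℂ) c = c.re - c.im * I := by
          apply Complex.ext <;> simp
        rw [this]
        match_scalars
        · ring
        · linear_combination (c.im : ℂ) * I_mul_I } (‖P‖ + ‖P‖) (by
    intro x
    refine (norm_add_le _ _).trans ?_
    have h1 := P.le_opNorm x
    have h2 := P.le_opNorm (I • x)
    rw [norm_smul, norm_I, one_mul] at h2
    simp only [norm_smul, norm_I, one_mul]
    linarith)

lemma Dop_apply (P : H →L[ℝ] H) (x : H) : Dop P x = P x + I • P (I • x) := rfl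

variable {P : H →L[ℝ] H}

lemma P_eq (x : H) : P x = (1/2 : ℂ) • (Rop P x + Dop P x) := by
  rw [Rop_apply, Dop_apply]; module

lemma two_app (x : H) : (2 - Rop P) x = (2:ℂ) • x - Rop P x := by
  simp [two_smul]

lemma DD (h : IsProj P) (x : H) : Dop P (Dop P x) = Rop P ((2 - Rop P) x) := by
  rw [two_app, two_smul]
  simp only [Rop_apply, Dop_apply, smul_add, smul_sub, map_add, map_sub, h.idem, P_I_I, two_smul, smul_neg, smul_smul, I_mul_I, neg_smul, one_smul, map_neg]
  abel

lemma DR (h : IsProj P) (x : H) : Dop P (Rop P x) = (2 - Rop P) (Dop P x) := by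
  rw [two_app, two_smul]
  simp only [Rop_apply, Dop_apply, smul_add, smul_sub, map_add, map_sub, h.idem, P_I_I, two_smul, smul_neg, smul_smul, I_mul_I, neg_smul, one_smul, map_neg]
  abel

lemma ext_re {f g : H → ℂ} (hf : ∀ y, f (I • y) = I * f y) (hg : ∀ y, g (I • y) = I * g y)
    (h : ∀ y, (f y).re = (g y).re) (y : H) : f y = g y := by
  apply Complex.ext (h y)
  have := h (I • y)
  rw [hf, hg] at this
  simpa using this

lemma ext_re' {f g : H → ℂ} (hf : ∀ y, f (I • y) = -I * f y) (hg : ∀ y, g (I • y) = -I * g y)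
    (h : ∀ y, (f y).re = (g y).re) (y : H) : f y = g y := by
  apply Complex.ext (h y)
  have := h (I • y)
  rw [hf, hg] at this
  simpa using this

lemma R_symm (h : IsProj P) (x y : H) : ⟪Rop P x, y⟫ = ⟪x, Rop P y⟫ := by
  refine ext_re (f := fun y => ⟪Rop P x, y⟫) (g := fun y => ⟪x, Rop P y⟫) ?_ ?_ ?_ y
  · intro y; simp [inner_smul_right]
  · intro y; simp [inner_smul_right]
  · intro y
    have h1 := h.symm x y
    have h2 := h.symm (I • x) (I • y)
    simp only [Rop_apply, inner_sub_left, inner_sub_right, inner_smul_left, inner_smul_right] at *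
    simp at *
    linarith

lemma D_symm (h : IsProj P) (x y : H) : ⟪x, Dop P y⟫ = ⟪y, Dop P x⟫ := by
  refine ext_re' (f := fun y => ⟪x, Dop P y⟫) (g := fun y => ⟪y, Dop P x⟫) ?_ ?_ ?_ y
  · intro y; simp [inner_smul_right]
  · intro y; simp [mul_comm]
  · intro y
    have h1 := h.symm x y
    have h2 := h.symm (I • x) (I • y)
    have c1 : (⟪y, P x⟫).re = (⟪P x, y⟫).re := by rw [← inner_conj_symm, conj_re]
    have c2 : (⟪y, P (I • x)⟫).im = -(⟪P (I • x), y⟫).im := by rw [← inner_conj_symm, conj_im]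
    simp only [Dop_apply, inner_add_left, inner_add_right, inner_smul_left, inner_smul_right] at *
    simp at *
    linarith

lemma P_quad (h : IsProj P) (x : H) : 0 ≤ (⟪P x, x⟫).re ∧ (⟪P x, x⟫).re ≤ ‖x‖ ^ 2 := by
  have e : (⟪P x, x⟫).re = ‖P x‖ ^ 2 := by
    have := h.symm (P x) x
    rw [h.idem] at this
    rw [this, inner_self_eq_norm_sq_to_K]
    norm_cast
  have h2 : (⟪P x, x⟫).re ≤ ‖P x‖ * ‖x‖ := (re_le_norm _).trans (norm_inner_le_norm _ _)
  rw [e] at h2 ⊢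
  refine ⟨by positivity, ?_⟩
  have : ‖P x‖ ≤ ‖x‖ := by
    by_contra hc
    push Not at hc
    nlinarith [norm_nonneg (P x), norm_nonneg x]
  gcongr

lemma R_quad (h : IsProj P) (x : H) : 0 ≤ (⟪Rop P x, x⟫).re ∧ (⟪Rop P x, x⟫).re ≤ 2 * ‖x‖ ^ 2 := by
  have h1 := P_quad h x
  have h2 := P_quad h (I • x)
  rw [norm_smul, norm_I, one_mul] at h2
  have : (⟪Rop P x, x⟫).re = (⟪P x, x⟫).re + (⟪P (I • x), I • x⟫).re := by
    simp [Rop_apply, inner_sub_left, inner_smul_left, inner_smul_right]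
  rw [this]
  constructor <;> linarith [h1.1, h1.2, h2.1, h2.2]

lemma R_sa (h : IsProj P) : IsSelfAdjoint (Rop P) := by
  rw [isSelfAdjoint_iff, ContinuousLinearMap.star_eq_adjoint, eq_comm, ContinuousLinearMap.eq_adjoint_iff]
  exact R_symm h

lemma R_sp (h : IsProj P) : spectrum ℝ (Rop P) ⊆ Icc 0 2 := by
  have c2 : (starRingEnd ℂ) 2 = 2 := map_ofNat _ 2
  have p1 : 0 ≤ Rop P := by
    rw [ContinuousLinearMap.nonneg_iff_isPositive, ContinuousLinearMap.isPositive_iff_complex]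
    intro x
    constructor
    · have : ⟪Rop P x, x⟫ = starRingEnd ℂ ⟪Rop P x, x⟫ := by
        rw [inner_conj_symm, R_symm h]
      exact (conj_eq_iff_re.1 this.symm)
    · exact (R_quad h x).1
  have p2 : Rop P ≤ algebraMap ℝ _ 2 := by
    rw [← sub_nonneg, map_ofNat, ContinuousLinearMap.nonneg_iff_isPositive, ContinuousLinearMap.isPositive_iff_complex]
    intro x
    constructor
    · have : ⟪(2 - Rop P) x, x⟫ = starRingEnd ℂ ⟪(2 - Rop P) x, x⟫ := by
        rw [inner_conj_symm, two_app, inner_sub_left, inner_sub_right, R_symm h, inner_smul_left, inner_smul_right, c2]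
      exact (conj_eq_iff_re.1 this.symm)
    · have := (R_quad h x).2
      rw [two_app, inner_sub_left, inner_smul_left, inner_self_eq_norm_sq_to_K]
      have e : (((starRingEnd ℂ) 2 * ((‖x‖:ℂ)) ^ 2) : ℂ) = ((2 * ‖x‖ ^ 2 : ℝ) : ℂ) := by rw [c2]; push_cast; rfl
      simp only [coe_algebraMap, RCLike.re_to_complex, sub_re]
      rw [e, ofReal_re]; linarith
  intro r hr
  refine ⟨spectrum_nonneg_of_nonneg p1 hr, ?_⟩
  exact (le_algebraMap_iff_spectrum_le (R_sa h)).1 p2 r hr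

lemma D_norm (h : IsProj P) (x : H) : ((‖Dop P x‖ ^ 2 : ℝ) : ℂ) = ⟪x, Rop P ((2 - Rop P) x)⟫ := by
  rw [← DD h, D_symm h, inner_self_eq_norm_sq_to_K]
  norm_cast

end P5
end TT

namespace TT
section P6
set_option linter.all false
open Complex Set Filter Topology

abbrev VN (H : Type*) [NormedAddCommGroup H] [InnerProductSpace ℂ H] [CompleteSpace H] := VonNeumannAlgebra H

lemma vn_smul {A : VonNeumannAlgebra H} {a : H →L[ℂ] H} (ha : a ∈ A) (c : ℂ) : c • a ∈ A :=
  A.toStarSubalgebra.smul_mem ha c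

lemma vn_add {A : VonNeumannAlgebra H} {a b : H →L[ℂ] H} (ha : a ∈ A) (hb : b ∈ A) : a + b ∈ A :=
  A.toStarSubalgebra.add_mem ha hb

lemma vn_mul {A : VonNeumannAlgebra H} {a b : H →L[ℂ] H} (ha : a ∈ A) (hb : b ∈ A) : a * b ∈ A :=
  A.toStarSubalgebra.mul_mem ha hb

lemma vn_star {A : VonNeumannAlgebra H} {a : H →L[ℂ] H} (ha : a ∈ A) : star a ∈ A :=
  star_mem (s := A.toStarSubalgebra) ha

lemma vn_one (A : VonNeumannAlgebra H) : (1 : H →L[ℂ] H) ∈ A := A.toStarSubalgebra.one_mem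

lemma vn_comm {A : VonNeumannAlgebra H} {a x : H →L[ℂ] H} (ha : a ∈ A) (hx : x ∈ A.commutant) : a * x = x * a :=
  VonNeumannAlgebra.mem_commutant_iff.1 hx a ha

lemma vn_comm_apply {A : VonNeumannAlgebra H} {a x : H →L[ℂ] H} (ha : a ∈ A) (hx : x ∈ A.commutant) (v : H) :
    a (x v) = x (a v) := DFunLike.congr_fun (vn_comm ha hx) v

lemma vn_of_comm {A : VonNeumannAlgebra H} {a : H →L[ℂ] H} (h : ∀ x ∈ A.commutant, x * a = a * x) : a ∈ A := by
  rw [← VonNeumannAlgebra.commutant_commutant A]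
  exact VonNeumannAlgebra.mem_commutant_iff.2 h

lemma vn_decomp {A : VonNeumannAlgebra H} {a : H →L[ℂ] H} (ha : a ∈ A) :
    ∃ b ∈ A, ∃ c ∈ A, IsSelfAdjoint b ∧ IsSelfAdjoint c ∧ a = b + I • c ∧ star a = b - I • c := by
  refine ⟨(1/2 : ℂ) • (a + star a), vn_smul (vn_add ha (vn_star ha)) _,
    (-I/2) • (a + (-1:ℂ) • star a), vn_smul (vn_add ha (vn_smul (vn_star ha) _)) _, ?_, ?_, ?_, ?_⟩
  · simp [isSelfAdjoint_iff, star_smul, add_comm]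
  · simp only [isSelfAdjoint_iff, star_smul, star_add, star_star]
    simp only [star_def, map_neg, map_div₀, conj_I, map_one, map_ofNat]
    match_scalars
    · ring
    · ring
  · match_scalars
    · linear_combination (1/2:ℂ) * I_mul_I
    · linear_combination (-1/2:ℂ) * I_mul_I
  · match_scalars
    · linear_combination (1/2:ℂ) * I_mul_I
    · linear_combination (-1/2:ℂ) * I_mul_I

lemma sa_inner {a : H →L[ℂ] H} (h : IsSelfAdjoint a) (x y : H) : ⟪a x, y⟫ = ⟪x, a y⟫ := by
  have := ContinuousLinearMap.adjoint_inner_left a y x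
  rw [← ContinuousLinearMap.star_eq_adjoint, h.star_eq] at this
  exact this

lemma star_inner_left (a : H →L[ℂ] H) (x y : H) : ⟪(star a) x, y⟫ = ⟪x, a y⟫ :=
  ContinuousLinearMap.adjoint_inner_left a y x

lemma star_inner_right (a : H →L[ℂ] H) (x y : H) : ⟪x, (star a) y⟫ = ⟪a x, y⟫ :=
  ContinuousLinearMap.adjoint_inner_right a x y

def K0 (A : VonNeumannAlgebra H) (Ω : H) : Submodule ℝ H where
  carrier := {x | ∃ a ∈ A, IsSelfAdjoint a ∧ a Ω = x}
  add_mem' := by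
    rintro _ _ ⟨a, ha, hs, rfl⟩ ⟨b, hb, hs2, rfl⟩
    exact ⟨a + b, vn_add ha hb, hs.add hs2, rfl⟩
  zero_mem' := ⟨0, A.toStarSubalgebra.zero_mem, IsSelfAdjoint.zero _, by simp⟩
  smul_mem' := by
    rintro c _ ⟨a, ha, hs, rfl⟩
    refine ⟨(c:ℂ) • a, vn_smul ha _, ?_, rfl⟩
    rw [isSelfAdjoint_iff, star_smul, hs.star_eq]
    simp

def KK (A : VonNeumannAlgebra H) (Ω : H) : Submodule ℝ H := (K0 A Ω).topologicalClosure

instance (A : VonNeumannAlgebra H) (Ω : H) : CompleteSpace (KK A Ω) :=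
  (Submodule.isClosed_topologicalClosure _).completeSpace_coe

attribute [local instance] InnerProductSpace.complexToReal

def PP (A : VonNeumannAlgebra H) (Ω : H) : H →L[ℝ] H := (KK A Ω).starProjection

variable (A : VonNeumannAlgebra H) (Ω : H)

lemma PP_proj : IsProj (PP A Ω) where
  idem := fun x => by
    apply Submodule.starProjection_eq_self_iff.2
    exact Submodule.starProjection_apply_mem _ _
  symm := fun x y => Submodule.inner_starProjection_left_eq_right (KK A Ω) x y

variable {A} {Ω}

lemma PP_sa {a : H →L[ℂ] H} (ha : a ∈ A) (hs : IsSelfAdjoint a) : PP A Ω (a Ω) = a Ω := by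
  apply Submodule.starProjection_eq_self_iff.2
  exact Submodule.le_topologicalClosure _ ⟨a, ha, hs, rfl⟩

lemma PP_mem (x : H) : PP A Ω x ∈ closure {x | ∃ a ∈ A, IsSelfAdjoint a ∧ a Ω = x} := by
  have : PP A Ω x ∈ KK A Ω := Submodule.starProjection_apply_mem _ _
  exact this

lemma comm_real {a x : H →L[ℂ] H} (ha : a ∈ A) (hs : IsSelfAdjoint a) (hx : x ∈ A.commutant)
    (hxs : IsSelfAdjoint x) : (⟪a Ω, x Ω⟫).im = 0 := by
  rw [← conj_eq_iff_im, inner_conj_symm, sa_inner hs, sa_inner hxs, vn_comm_apply ha hx]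

lemma PP_comm {x : H →L[ℂ] H} (hx : x ∈ A.commutant) (hs : IsSelfAdjoint x) : PP A Ω (I • x Ω) = 0 := by
  rw [PP, Submodule.starProjection_apply_eq_zero_iff, KK, Submodule.orthogonal_closure, Submodule.mem_orthogonal]
  rintro _ ⟨a, ha, has, rfl⟩
  show (⟪a Ω, I • x Ω⟫).re = 0
  rw [inner_smul_right]
  simp [comm_real ha has hx hs]

lemma eq_zero_of_sa (hcyc : IsCyclicVector (A : Set (H →L[ℂ] H)) Ω) {x : H}
    (h : ∀ a ∈ A, IsSelfAdjoint a → ⟪x, a Ω⟫ = 0) : x = 0 := by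
  refine hcyc.eq_zero_of_inner_left ℂ ?_
  rintro _ ⟨a, ha, rfl⟩
  obtain ⟨b, hb, c, hc, hbs, hcs, e, -⟩ := vn_decomp (A := A) ha
  have : ⟪x, a Ω⟫ = 0 := by
    rw [e]
    simp [inner_add_right, inner_smul_right, h b hb hbs, h c hc hcs]
  exact this

lemma PP_norm_le (x : H) (h : (⟪PP A Ω x, x⟫).re = 0) : PP A Ω x = 0 := by
  have := (PP_proj A Ω).symm (PP A Ω x) x
  rw [(PP_proj A Ω).idem, h, inner_self_eq_norm_sq_to_K] at this
  have h2 : ‖PP A Ω x‖ ^ 2 = 0 := by rw [this]; norm_cast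
  simpa using h2

lemma PP_norm_eq (x : H) (h : (⟪PP A Ω x, x⟫).re = ‖x‖ ^ 2) : PP A Ω x = x := by
  have := (PP_proj A Ω).symm (PP A Ω x) x
  rw [(PP_proj A Ω).idem, h, inner_self_eq_norm_sq_to_K] at this
  have h2 : ‖x‖ ^ 2 = ‖PP A Ω x‖ ^ 2 := by rw [this]; norm_cast
  have h3 : ‖PP A Ω x - x‖ ^ 2 = 0 := by
    rw [@norm_sub_sq ℂ, RCLike.re_to_complex, h, ← h2]; ring
  rw [← sub_eq_zero]
  simpa using h3

abbrev RR (A : VonNeumannAlgebra H) (Ω : H) : H →L[ℂ] H := Rop (PP A Ω)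
abbrev DDo (A : VonNeumannAlgebra H) (Ω : H) : H →L⋆[ℂ] H := Dop (PP A Ω)

lemma RR_good (hcyc : IsCyclicVector (A : Set (H →L[ℂ] H)) Ω)
    (hsep : IsCyclicVector (A.commutant : Set (H →L[ℂ] H)) Ω) : Good (RR A Ω) where
  sa := R_sa (PP_proj A Ω)
  sp := R_sp (PP_proj A Ω)
  inj := by
    intro x hx
    have e : (⟪RR A Ω x, x⟫).re = (⟪PP A Ω x, x⟫).re + (⟪PP A Ω (I • x), I • x⟫).re := by
      simp [Rop_apply, inner_sub_left, inner_smul_left, inner_smul_right]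
    rw [hx, inner_zero_left, zero_re] at e
    have q1 := P_quad (PP_proj A Ω) x
    have q2 := P_quad (PP_proj A Ω) (I • x)
    have p1 := PP_norm_le x (by linarith [q1.1, q2.1])
    have p2 := PP_norm_le (I • x) (by linarith [q1.1, q2.1])
    apply eq_zero_of_sa hcyc
    intro a ha hs
    have s1 := (PP_proj A Ω).symm x (a Ω)
    have s2 := (PP_proj A Ω).symm (I • x) (a Ω)
    rw [p1, PP_sa ha hs, inner_zero_left] at s1
    rw [p2, PP_sa ha hs, inner_zero_left, inner_smul_left] at s2
    apply Complex.ext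
    · exact s1.symm
    · simpa using s2.symm
  inj2 := by
    intro x hx
    have hx2 : ⟪(2 - RR A Ω) x, x⟫ = 0 := by rw [hx, inner_zero_left]
    have e : (⟪RR A Ω x, x⟫).re = (⟪PP A Ω x, x⟫).re + (⟪PP A Ω (I • x), I • x⟫).re := by
      simp [Rop_apply, inner_sub_left, inner_smul_left, inner_smul_right]
    have e3 : RR A Ω x = (2:ℂ) • x := by
      have := two_app (P := PP A Ω) x
      rw [hx] at this
      rw [eq_comm, sub_eq_zero] at this
      exact this.symm
    have e2 : (⟪RR A Ω x, x⟫).re = 2 * ‖x‖ ^ 2 := by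
      rw [e3, inner_smul_left, inner_self_eq_norm_sq_to_K, map_ofNat]
      norm_cast
      simp [← Complex.ofReal_pow]
    rw [e2] at e
    have q1 := P_quad (PP_proj A Ω) x
    have q2 := P_quad (PP_proj A Ω) (I • x)
    have nI : ‖I • x‖ = ‖x‖ := by rw [norm_smul, norm_I, one_mul]
    rw [nI] at q2
    have p1 := PP_norm_eq x (by linarith [q1.2, q2.2])
    have p2 := PP_norm_eq (I • x) (by rw [nI]; linarith [q1.2, q2.2])
    apply eq_zero_of_sa hsep
    intro a ha hs
    have s1 := (PP_proj A Ω).symm x (I • a Ω)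
    have s2 := (PP_proj A Ω).symm (I • x) (I • a Ω)
    rw [p1, PP_comm ha hs, inner_zero_right, inner_smul_right] at s1
    rw [p2, PP_comm ha hs, inner_zero_right, inner_smul_left, inner_smul_right] at s2
    apply Complex.ext
    · simpa using s2
    · simpa using s1

lemma R_fix : RR A Ω Ω = Ω := by
  have h1 := PP_sa (Ω := Ω) (vn_one A) (IsSelfAdjoint.one _)
  have h2 := PP_comm (Ω := Ω) (vn_one A.commutant) (IsSelfAdjoint.one _)
  simp only [one_apply_eq_self] at h1 h2
  rw [Rop_apply, h1, h2]; simp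

lemma D_fix : DDo A Ω Ω = Ω := by
  have h1 := PP_sa (Ω := Ω) (vn_one A) (IsSelfAdjoint.one _)
  have h2 := PP_comm (Ω := Ω) (vn_one A.commutant) (IsSelfAdjoint.one _)
  simp only [one_apply_eq_self] at h1 h2
  rw [Dop_apply, h1, h2]; simp

lemma D_sa {a : H →L[ℂ] H} (ha : a ∈ A) (hs : IsSelfAdjoint a) :
    DDo A Ω (a Ω) = (2 - RR A Ω) (a Ω) := by
  rw [two_app, Dop_apply, Rop_apply, PP_sa ha hs]; module

lemma D_alg {a : H →L[ℂ] H} (ha : a ∈ A) : DDo A Ω (a Ω) = (2 - RR A Ω) ((star a) Ω) := by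
  obtain ⟨b, hb, c, hc, hbs, hcs, e, e2⟩ := vn_decomp (A := A) ha
  rw [e2, e]
  simp only [add_apply, smul_apply, sub_apply _ (_ : H →L[ℂ] H), map_add, map_sub, map_smulₛₗ, D_sa hb hbs, D_sa hc hcs]
  simp [sub_eq_add_neg]
  abel

lemma R_comm {x : H →L[ℂ] H} (hx : x ∈ A.commutant) (hs : IsSelfAdjoint x) :
    RR A Ω (x Ω) = PP A Ω (x Ω) ∧ DDo A Ω (x Ω) = PP A Ω (x Ω) := by
  rw [Rop_apply, Dop_apply, PP_comm hx hs]; simp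

end P6
end TT

namespace TT
section P7
set_option linter.all false
open Complex Set Filter Topology

variable {A : VonNeumannAlgebra H} {Ω : H}

lemma cyc_ext {B : VonNeumannAlgebra H} (hc : IsCyclicVector (B : Set (H →L[ℂ] H)) Ω) {f g : H → H}
    (hf : Continuous f) (hg : Continuous g) (h : ∀ b ∈ B, f (b Ω) = g (b Ω)) (x : H) : f x = g x := by
  have : f = g := by
    refine Continuous.ext_on hc hf hg ?_
    rintro _ ⟨b, hb, rfl⟩
    exact h b hb
  rw [this]

lemma cyc_ext_inner {B : VonNeumannAlgebra H} (hc : IsCyclicVector (B : Set (H →L[ℂ] H)) Ω) {x y : H}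
    (h : ∀ b ∈ B, ⟪b Ω, x⟫ = ⟪b Ω, y⟫) : x = y := by
  rw [← sub_eq_zero]
  refine hc.eq_zero_of_inner_right ℂ ?_
  rintro _ ⟨b, hb, rfl⟩
  rw [inner_sub_right, h b hb, sub_self]

lemma op_of_vec (hsep : IsCyclicVector (A.commutant : Set (H →L[ℂ] H)) Ω) {v : H} {r : ℝ} (hr : 0 ≤ r)
    (h1 : ∀ x ∈ A.commutant, ‖x v‖ ≤ r * ‖x Ω‖)
    (h2 : ∀ x ∈ A.commutant, ∀ y ∈ A.commutant, ⟪x v, y Ω⟫ = ⟪x Ω, y v⟫) :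
    ∃ h ∈ A, IsSelfAdjoint h ∧ ‖h‖ ≤ r ∧ h Ω = v := by
  let S := A.commutant.toStarSubalgebra
  let f : S →ₗ[ℂ] H := { toFun := fun x => (x : H →L[ℂ] H) v, map_add' := fun _ _ => rfl, map_smul' := fun _ _ => rfl }
  let e : S →ₗ[ℂ] H := { toFun := fun x => (x : H →L[ℂ] H) Ω, map_add' := fun _ _ => rfl, map_smul' := fun _ _ => rfl }
  have hd : DenseRange e := by
    refine Dense.mono ?_ hsep
    rintro _ ⟨a, ha, rfl⟩
    exact ⟨⟨a, ha⟩, rfl⟩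
  have hb : ∀ x, ‖f x‖ ≤ r * ‖e x‖ := fun x => h1 x x.2
  let h : H →L[ℂ] H := f.extendOfNorm e
  have hh : ∀ x ∈ A.commutant, h (x Ω) = x v := fun x hx =>
    LinearMap.extendOfNorm_eq hd ⟨r, hb⟩ ⟨x, hx⟩
  refine ⟨h, ?_, ?_, LinearMap.opNorm_extendOfNorm_le hd hr hb, ?_⟩
  · apply vn_of_comm
    intro x hx
    ext w
    refine cyc_ext hsep (x * h).continuous (h * x).continuous ?_ w
    intro b hb
    have := hh (x * b) (vn_mul hx hb)
    simp only [mul_apply_eq_comp] at this ⊢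
    rw [hh b hb, this]
  · rw [isSelfAdjoint_iff]
    ext w
    refine cyc_ext hsep (star h).continuous h.continuous ?_ w
    intro b hb
    apply cyc_ext_inner hsep
    intro c hc
    rw [star_inner_right, hh b hb, hh c hc, h2 c hc b hb]
  · have := hh 1 (vn_one _)
    simpa using this

lemma cfc_mem {y : H →L[ℂ] H} (hy : y ∈ A) (f : ℝ → ℝ) : cfc f y ∈ A := by
  apply vn_of_comm
  intro x hx
  exact (Commute.cfc_real (vn_comm hy hx) f).eq.symm

lemma polar {y x : H →L[ℂ] H} (hy : y ∈ A) (hys : IsSelfAdjoint y) (hx : x ∈ A.commutant) {ε : ℝ} (hε : 0 < ε) :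
    ∃ h ∈ A, IsSelfAdjoint h ∧ ‖h‖ ≤ 1 ∧ (⟪y Ω, h Ω⟫).im = 0 ∧
      (⟪y Ω, x Ω⟫).re ≤ ‖x‖ * ((⟪y Ω, h Ω⟫).re + ε * ‖Ω‖ ^ 2) := by
  have hne : ∀ s : ℝ, |s| + ε ≠ 0 := fun s => by positivity
  have ch : Continuous (fun s : ℝ => s / (|s| + ε)) := by fun_prop (disch := assumption)
  have cp : Continuous (fun s : ℝ => √(max s 0)) := by fun_prop
  have cm : Continuous (fun s : ℝ => √(max (-s) 0)) := by fun_prop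
  set h := cfc (fun s : ℝ => s / (|s| + ε)) y with hh
  set p := cfc (fun s : ℝ => √(max s 0)) y with hp
  set m := cfc (fun s : ℝ => √(max (-s) 0)) y with hm
  have hA : h ∈ A := cfc_mem hy _
  have hpA : p ∈ A := cfc_mem hy _
  have hmA : m ∈ A := cfc_mem hy _
  have hs : IsSelfAdjoint h := cfc_predicate _ _
  have ps : IsSelfAdjoint p := cfc_predicate _ _
  have ms : IsSelfAdjoint m := cfc_predicate _ _
  have c1 : Continuous (fun s : ℝ => max s 0) := by fun_prop
  have c2 : Continuous (fun s : ℝ => max (-s) 0) := by fun_prop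
  have c3 : Continuous (fun s : ℝ => max s 0 + max (-s) 0) := by fun_prop
  have c4 : Continuous (fun s : ℝ => s * (s / (|s| + ε))) := by fun_prop (disch := assumption)
  have pp : p * p = cfc (fun s : ℝ => max s 0) y := by
    rw [hp, ← cfc_mul _ _ y cp.continuousOn cp.continuousOn]
    simp only [Real.mul_self_sqrt (le_max_right _ _)]
  have mm : m * m = cfc (fun s : ℝ => max (-s) 0) y := by
    rw [hm, ← cfc_mul _ _ y cm.continuousOn cm.continuousOn]
    simp only [Real.mul_self_sqrt (le_max_right _ _)]
  have pm : y = p * p - m * m := by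
    rw [pp, mm, ← cfc_sub _ _ y c1.continuousOn c2.continuousOn]
    conv_lhs => rw [← cfc_id ℝ y hys]
    apply cfc_congr
    intro s _
    simp only [id]
    rcases le_total s 0 with h | h <;> simp [h]
  have yh : y * h = cfc (fun s : ℝ => s * (s / (|s| + ε))) y := by
    rw [cfc_mul (fun s => s) _ y continuous_id.continuousOn ch.continuousOn, cfc_id' ℝ y hys]
  have hn : ‖p * p + m * m - y * h‖ ≤ ε := by
    rw [yh, pp, mm, ← cfc_add y _ _ c1.continuousOn c2.continuousOn,
      ← cfc_sub _ _ y c3.continuousOn c4.continuousOn]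
    apply norm_cfc_le hε.le
    intro s _
    have e1 : max s 0 + max (-s) 0 = |s| := by
      rcases le_total s 0 with h | h <;> simp [h, abs_of_nonneg, abs_of_nonpos]
    have e2 : |s| - s * (s / (|s| + ε)) = ε * |s| / (|s| + ε) := by
      field_simp
      rw [← sq_abs s]; ring
    rw [e1, e2, Real.norm_of_nonneg (by positivity), div_le_iff₀ (by positivity)]
    nlinarith [abs_nonneg s]
  have hc : Commute h y := Commute.cfc_real (Commute.refl y) _
  refine ⟨h, hA, hs, ?_, ?_, ?_⟩
  · apply norm_cfc_le zero_le_one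
    intro s _
    rw [Real.norm_eq_abs, abs_div, abs_of_pos (by positivity : 0 < |s| + ε), div_le_one (by positivity)]
    linarith
  · rw [← conj_eq_iff_im, inner_conj_symm, sa_inner hs, sa_inner hys]
    have := DFunLike.congr_fun hc.eq Ω
    simp only [mul_apply_eq_comp] at this
    rw [this]
  · have k1 : ∀ q ∈ A, IsSelfAdjoint q → ⟪(q * q) Ω, x Ω⟫ = ⟪q Ω, x (q Ω)⟫ := fun q hq hqs => by
      rw [mul_apply_eq_comp, sa_inner hqs, vn_comm_apply hq hx]
    have k2 : ∀ v : H, |(⟪v, x v⟫).re| ≤ ‖x‖ * ‖v‖ ^ 2 := fun v => by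
      refine (abs_re_le_norm _).trans ((norm_inner_le_norm _ _).trans ?_)
      have := x.le_opNorm v
      nlinarith [norm_nonneg v]
    have k3 : ∀ q : H →L[ℂ] H, IsSelfAdjoint q → (⟪(q * q) Ω, Ω⟫).re = ‖q Ω‖ ^ 2 := fun q hqs => by
      rw [mul_apply_eq_comp, sa_inner hqs, inner_self_eq_norm_sq_to_K]; norm_cast
    have e : (⟪y Ω, x Ω⟫).re ≤ ‖x‖ * (‖p Ω‖ ^ 2 + ‖m Ω‖ ^ 2) := by
      conv_lhs => rw [pm]
      rw [sub_apply, inner_sub_left, k1 p hpA ps, k1 m hmA ms, sub_re]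
      linarith [(abs_le.1 (k2 (p Ω))).2, (abs_le.1 (k2 (m Ω))).1]
    refine e.trans (mul_le_mul_of_nonneg_left ?_ (norm_nonneg _))
    have e4 : (⟪(p * p + m * m - y * h) Ω, Ω⟫).re ≤ ε * ‖Ω‖ ^ 2 := by
      refine (re_le_norm _).trans ((norm_inner_le_norm _ _).trans ?_)
      have := (p * p + m * m - y * h).le_opNorm Ω
      nlinarith [norm_nonneg Ω, mul_le_mul_of_nonneg_right hn (norm_nonneg Ω)]
    rw [sub_apply, add_apply, inner_sub_left, inner_add_left, sub_re, add_re, k3 p ps, k3 m ms,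
      mul_apply_eq_comp, sa_inner hys] at e4
    have : (⟪h Ω, y Ω⟫).re = (⟪y Ω, h Ω⟫).re := by rw [← inner_conj_symm, conj_re]
    linarith

end P7
end TT

namespace TT
section P8
set_option linter.all false
open Complex Set Filter Topology

variable {A : VonNeumannAlgebra H} {Ω : H}

def Cr (A : VonNeumannAlgebra H) (Ω : H) (r : ℝ) : Set H :=
  {v | ∃ h ∈ A, IsSelfAdjoint h ∧ ‖h‖ ≤ r ∧ h Ω = v}

lemma rsmul_sa {h : H →L[ℂ] H} (hs : IsSelfAdjoint h) (s : ℝ) : IsSelfAdjoint ((s:ℂ) • h) := by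
  rw [isSelfAdjoint_iff, star_smul, hs.star_eq]; simp

lemma Cr_convex (r : ℝ) : Convex ℝ (Cr A Ω r) := by
  rintro _ ⟨h, hA, hs, hn, rfl⟩ _ ⟨k, kA, ks, kn, rfl⟩ s t hs0 ht0 hst
  refine ⟨(s:ℂ) • h + (t:ℂ) • k, vn_add (vn_smul hA _) (vn_smul kA _),
    (rsmul_sa hs s).add (rsmul_sa ks t), ?_, rfl⟩
  refine (norm_add_le _ _).trans ?_
  rw [norm_smul, norm_smul, norm_real, norm_real, Real.norm_of_nonneg hs0, Real.norm_of_nonneg ht0]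
  have : r = s * r + t * r := by rw [← add_mul, hst, one_mul]
  rw [this]
  gcongr

lemma Cr_closed (hsep : IsCyclicVector (A.commutant : Set (H →L[ℂ] H)) Ω) {r : ℝ} (hr : 0 ≤ r) :
    IsClosed (Cr A Ω r) := by
  have : Cr A Ω r = {v | ∀ x ∈ A.commutant, ‖x v‖ ≤ r * ‖x Ω‖} ∩
      {v | ∀ x ∈ A.commutant, ∀ y ∈ A.commutant, ⟪x v, y Ω⟫ = ⟪x Ω, y v⟫} := by
    ext v
    constructor
    · rintro ⟨h, hA, hs, hn, rfl⟩
      refine ⟨fun x hx => ?_, fun x hx y hy => ?_⟩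
      · rw [← vn_comm_apply hA hx]
        refine (h.le_opNorm _).trans ?_
        gcongr
      · rw [← vn_comm_apply hA hx, ← vn_comm_apply hA hy, sa_inner hs]
    · rintro ⟨h1, h2⟩
      exact op_of_vec hsep hr h1 h2
  rw [this]
  simp only [setOf_forall]
  refine IsClosed.inter ?_ ?_
  · exact isClosed_iInter fun x => isClosed_iInter fun _ => isClosed_le (by fun_prop) (by fun_prop)
  · exact isClosed_iInter fun x => isClosed_iInter fun _ => isClosed_iInter fun y => isClosed_iInter fun _ =>
      isClosed_eq (by fun_prop) (by fun_prop)

/-- the real linear map `2 P (c ·)` -/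
def LL (A : VonNeumannAlgebra H) (Ω : H) (c : ℂ) : H →L[ℝ] H :=
  (2:ℝ) • (PP A Ω).comp ((c • (1 : H →L[ℂ] H)).restrictScalars ℝ)

lemma LL_apply (c : ℂ) (x : H) : LL A Ω c x = (2:ℝ) • PP A Ω (c • x) := rfl

attribute [local instance] InnerProductSpace.complexToReal

lemma inner_real (x y : H) : inner ℝ x y = (⟪x, y⟫).re := rfl

lemma RN (hsep : IsCyclicVector (A.commutant : Set (H →L[ℂ] H)) Ω) {x : H →L[ℂ] H} (hx : x ∈ A.commutant)
    {l : ℂ} (hl : 0 < l.re) : ∃ a ∈ A, IsSelfAdjoint a ∧ PP A Ω (x Ω) = (2:ℝ) • PP A Ω (star l • a Ω) := by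
  set r : ℝ := ‖x‖ / (2 * l.re) with hr
  have hr0 : 0 ≤ r := by positivity
  have hcl := Cr_closed hsep hr0
  haveI : CompleteSpace (Cr A Ω r) := hcl.completeSpace_coe
  set L := LL A Ω (star l) with hL
  have hP := PP_proj A Ω
  have Pfix : ∀ v ∈ Cr A Ω r, PP A Ω v = v := by
    rintro _ ⟨h, hA, hs, hn, rfl⟩
    exact PP_sa hA hs
  have low : ∀ v, PP A Ω v = v → 2 * l.re * ‖v‖ ≤ ‖L v‖ := by
    intro v hv
    have e1 : (⟪L v, v⟫).re = 2 * l.re * ‖v‖ ^ 2 := by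
      rw [← inner_real, hL, LL_apply, real_inner_smul_left, inner_real, hP.symm, hv, inner_smul_left,
        inner_self_eq_norm_sq_to_K]
      simp [← ofReal_pow]
      ring
    have e2 : (⟪L v, v⟫).re ≤ ‖L v‖ * ‖v‖ := (re_le_norm _).trans (norm_inner_le_norm _ _)
    rcases eq_or_lt_of_le (norm_nonneg v) with h | h
    · rw [← h]; simp
    · refine le_of_mul_le_mul_right ?_ h
      linarith
  have anti : AntilipschitzWith (Real.toNNReal (1 / (2 * l.re))) (fun v : Cr A Ω r => L v) := by
    refine AntilipschitzWith.of_le_mul_dist ?_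
    rintro ⟨v, hv⟩ ⟨w, hw⟩
    rw [Real.coe_toNNReal _ (by positivity), Subtype.dist_eq, dist_eq_norm, dist_eq_norm, ← map_sub]
    have := low (v - w) (by rw [map_sub, Pfix v hv, Pfix w hw])
    rw [div_mul_eq_mul_div, le_div_iff₀ (by positivity)]
    linarith
  have comp : IsComplete (L '' Cr A Ω r) := by
    have := anti.isComplete_range (L.uniformContinuous.comp uniformContinuous_subtype_val)
    rwa [image_eq_range]
  have conv : Convex ℝ (L '' Cr A Ω r) := (Cr_convex r).linear_image L.toLinearMap
  have zr : (0:H) ∈ Cr A Ω r := ⟨0, A.toStarSubalgebra.zero_mem, IsSelfAdjoint.zero _, by simpa using hr0, by simp⟩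
  obtain ⟨w, hw, hmin⟩ := exists_norm_eq_iInf_of_complete_convex ⟨_, mem_image_of_mem L zr⟩ comp conv (PP A Ω (x Ω))
  rw [norm_eq_iInf_iff_real_inner_le_zero conv hw] at hmin
  set p := PP A Ω (x Ω) with hp
  set k := p - w with hk
  suffices hk0 : k = 0 by
    obtain ⟨_, ⟨a, haA, has, han, rfl⟩, hv⟩ := hw
    refine ⟨a, haA, has, ?_⟩
    rw [← LL_apply, ← hL, hv]
    exact sub_eq_zero.1 hk0
  have kP : PP A Ω k = k := by
    obtain ⟨v, hv, rfl⟩ := hw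
    rw [hk, map_sub, hp, hP.idem, hL, LL_apply, map_smul, hP.idem]
  have kx : (⟪k, p⟫).re = (⟪k, x Ω⟫).re := by rw [hp, ← hP.symm, kP]
  have kL : ∀ v, (⟪k, L v⟫).re = 2 * (star l * ⟪k, v⟫).re := by
    intro v
    rw [← inner_real, hL, LL_apply, real_inner_smul_right, inner_real, ← hP.symm, kP, inner_smul_right]
  set M := ‖x‖ * ‖Ω‖ ^ 2 + ‖x Ω‖ + 2 * ‖l‖ * r * ‖Ω‖ with hM
  have hM0 : 0 ≤ M := by positivity
  have key : ∀ δ > 0, ‖k‖ ^ 2 ≤ δ * M := by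
    intro δ hδ
    have kc := PP_mem (A := A) (Ω := Ω) k
    rw [kP, Metric.mem_closure_iff] at kc
    obtain ⟨_, ⟨y, hy, hys, rfl⟩, hd⟩ := kc δ hδ
    rw [dist_eq_norm] at hd
    obtain ⟨h, hA, hs, hn, him, hre⟩ := polar hy hys hx (Ω := Ω) hδ
    have hv : ((r:ℂ) • h) Ω ∈ Cr A Ω r := ⟨(r:ℂ) • h, vn_smul hA _, rsmul_sa hs r, by
      rw [norm_smul, norm_real, Real.norm_of_nonneg hr0]
      nlinarith, rfl⟩
    have q := hmin _ (mem_image_of_mem L hv)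
    rw [inner_sub_right, inner_real, inner_real, kL] at q
    have g : (⟪k, w⟫).re = (⟪k, p⟫).re - ‖k‖ ^ 2 := by
      have : w = p - k := by rw [hk]; abel
      rw [this, inner_sub_right, sub_re, inner_self_eq_norm_sq_to_K]
      norm_cast
    rw [g, kx] at q
    have b1 : (⟪k, x Ω⟫).re ≤ (⟪y Ω, x Ω⟫).re + δ * ‖x Ω‖ := by
      have : (⟪k - y Ω, x Ω⟫).re ≤ δ * ‖x Ω‖ :=
        (re_le_norm _).trans ((norm_inner_le_norm _ _).trans (by gcongr))
      rw [inner_sub_left, sub_re] at this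
      linarith
    have hO : ‖h Ω‖ ≤ ‖Ω‖ := (h.le_opNorm Ω).trans (by nlinarith [norm_nonneg Ω])
    have b2 : r * l.re * (⟪y Ω, h Ω⟫).re - ‖l‖ * δ * r * ‖Ω‖ ≤ (star l * ⟪k, ((r:ℂ) • h) Ω⟫).re := by
      have e1 : (star l * ⟪y Ω, ((r:ℂ) • h) Ω⟫).re = r * l.re * (⟪y Ω, h Ω⟫).re := by
        rw [smul_apply, inner_smul_right]
        simp [him]
        ring
      have e2 : -(star l * ⟪k - y Ω, ((r:ℂ) • h) Ω⟫).re ≤ ‖l‖ * (δ * (r * ‖Ω‖)) := by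
        refine (neg_le_abs _).trans ((abs_re_le_norm _).trans ?_)
        rw [norm_mul, norm_star]
        gcongr
        refine (norm_inner_le_norm _ _).trans ?_
        rw [smul_apply, norm_smul, norm_real, Real.norm_of_nonneg hr0]
        gcongr
      rw [inner_sub_left, mul_sub, sub_re, e1] at e2
      linarith
    have b3 : 2 * (r * l.re * (⟪y Ω, h Ω⟫).re) = ‖x‖ * (⟪y Ω, h Ω⟫).re := by
      rw [hr]; field_simp
    rw [hM]
    nlinarith
  have : ‖k‖ ^ 2 ≤ 0 := by
    by_contra! hc
    have := key (‖k‖ ^ 2 / (2 * (M + 1))) (by positivity)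
    rw [div_mul_eq_mul_div, le_div_iff₀ (by positivity)] at this
    nlinarith
  have h3 : ‖k‖ = 0 := by
    have := norm_nonneg k
    nlinarith
  simpa using h3

lemma RN_form (hsep : IsCyclicVector (A.commutant : Set (H →L[ℂ] H)) Ω) {x : H →L[ℂ] H} (hx : x ∈ A.commutant)
    (hxs : IsSelfAdjoint x)
    {l : ℂ} (hl : 0 < l.re) : ∃ a ∈ A, IsSelfAdjoint a ∧
      ∀ y ∈ A, ⟪Ω, x (y Ω)⟫ = l * ⟪Ω, a (y Ω)⟫ + star l * ⟪Ω, y (a Ω)⟫ := by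
  obtain ⟨a, haA, has, e⟩ := RN hsep hx hl
  refine ⟨a, haA, has, ?_⟩
  have sa : ∀ y ∈ A, IsSelfAdjoint y → ⟪Ω, x (y Ω)⟫ = l * ⟪Ω, a (y Ω)⟫ + star l * ⟪Ω, y (a Ω)⟫ := by
    intro y hy hys
    have e1 : (⟪x Ω, y Ω⟫).re = 2 * (⟪star l • a Ω, y Ω⟫).re := by
      have h1 := (PP_proj A Ω).symm (x Ω) (y Ω)
      have h2 := (PP_proj A Ω).symm (star l • a Ω) (y Ω)
      rw [PP_sa hy hys] at h1 h2
      rw [← h1, e, ← inner_real, real_inner_smul_left, inner_real, h2]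
    have e2 : (⟪x Ω, y Ω⟫).im = 0 := by
      have := comm_real (Ω := Ω) hy hys hx hxs
      rw [← inner_conj_symm, conj_im, this, neg_zero]
    rw [← sa_inner hxs, ← sa_inner has, ← sa_inner hys Ω (a Ω), ← inner_conj_symm (y Ω) (a Ω)]
    rw [inner_smul_left] at e1
    generalize ⟪a Ω, y Ω⟫ = q at e1 ⊢
    apply Complex.ext
    · rw [e1]; simp; ring
    · rw [e2]; simp; ring
  intro y hy
  obtain ⟨b, hb, c, hc, hbs, hcs, e1, -⟩ := vn_decomp (A := A) hy
  have s1 := sa b hb hbs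
  have s2 := sa c hc hcs
  rw [e1]
  simp only [add_apply, smul_apply, map_add, map_smul, inner_add_right, inner_smul_right, s1, s2]
  ring

lemma vec_sa (hsep : IsCyclicVector (A.commutant : Set (H →L[ℂ] H)) Ω) {x : H →L[ℂ] H} (hx : x ∈ A.commutant) :
    ∃ a ∈ A, IsSelfAdjoint a ∧ a Ω = PP A Ω (x Ω) := by
  obtain ⟨a, haA, has, e⟩ := RN hsep hx (l := 1/2) (by norm_num)
  refine ⟨a, haA, has, ?_⟩
  have h : (star (1/2 : ℂ)) • a Ω = (1/2 : ℝ) • a Ω := by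
    rw [← Complex.coe_smul]; simp
  rw [e, h, map_smul, PP_sa haA has, smul_smul]; norm_num

lemma vec_alg (hsep : IsCyclicVector (A.commutant : Set (H →L[ℂ] H)) Ω) {x : H →L[ℂ] H} (hx : x ∈ A.commutant) :
    ∃ a ∈ A, a Ω = DDo A Ω (x Ω) ∧ (star a) Ω = RR A Ω (x Ω) := by
  obtain ⟨b, hb, c, hc, hbs, hcs, e1, -⟩ := vn_decomp hx
  obtain ⟨b', hb', bs', eb⟩ := vec_sa hsep hb
  obtain ⟨c', hc', cs', ec⟩ := vec_sa hsep hc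
  obtain ⟨r1, d1⟩ := R_comm (Ω := Ω) hb hbs
  obtain ⟨r2, d2⟩ := R_comm (Ω := Ω) hc hcs
  refine ⟨b' + (-I) • c', vn_add hb' (vn_smul hc' _), ?_, ?_⟩
  · rw [e1, add_apply, add_apply, smul_apply, smul_apply, map_add, map_smulₛₗ, d1, d2, eb, ec, conj_I]
  · rw [star_add, star_smul, bs'.star_eq, cs'.star_eq, e1, add_apply, add_apply, smul_apply, smul_apply, map_add,
      map_smul, r1, r2, eb, ec]
    simp

lemma R_symm' (x y : H) : ⟪RR A Ω x, y⟫ = ⟪x, RR A Ω y⟫ := sa_inner (R_sa (PP_proj A Ω)) x y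

lemma Q_symm' (x y : H) : ⟪(2 - RR A Ω) x, y⟫ = ⟪x, (2 - RR A Ω) y⟫ := by
  rw [two_app, two_app, inner_sub_left, inner_sub_right, R_symm', inner_smul_left, inner_smul_right, map_ofNat]

lemma key_form (hsep : IsCyclicVector (A.commutant : Set (H →L[ℂ] H)) Ω) {x : H →L[ℂ] H} (hx : x ∈ A.commutant)
    (hxs : IsSelfAdjoint x) {l : ℂ} (hl : 0 < l.re) : ∃ a ∈ A, IsSelfAdjoint a ∧
      ∀ v, DDo A Ω (x (DDo A Ω v)) = l • (2 - RR A Ω) (a (RR A Ω v)) + star l • RR A Ω (a ((2 - RR A Ω) v)) := by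
  obtain ⟨a, haA, has, e⟩ := RN_form hsep hx hxs hl
  refine ⟨a, haA, has, ?_⟩
  apply cyc_ext hsep
  · fun_prop
  · fun_prop
  intro y' hy'
  apply cyc_ext_inner hsep
  intro z' hz'
  obtain ⟨y, hy, yD, yR⟩ := vec_alg hsep hy'
  obtain ⟨z, hz, zD, zR⟩ := vec_alg hsep hz'
  have ds := D_symm (PP_proj A Ω)
  have e0 := e (star y * z) (vn_mul (vn_star hy) hz)
  simp only [mul_apply_eq_comp] at e0
  have t1 : ⟪z' Ω, DDo A Ω (x (DDo A Ω (y' Ω)))⟫ = ⟪Ω, x ((star y) (z Ω))⟫ := by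
    rw [ds, ← zD, ← yD, sa_inner hxs, ← vn_comm_apply (vn_star hy) hx, star_inner_right]
  have t2 : ⟪z' Ω, (2 - RR A Ω) (a (RR A Ω (y' Ω)))⟫ = ⟪Ω, a ((star y) (z Ω))⟫ := by
    have h1 := D_alg (Ω := Ω) (vn_mul hy haA)
    rw [star_mul, has.star_eq] at h1
    simp only [mul_apply_eq_comp] at h1
    rw [← yR, ← h1, ds, ← zD, ← sa_inner has, star_inner_right]
  have t3 : ⟪z' Ω, RR A Ω (a ((2 - RR A Ω) (y' Ω)))⟫ = ⟪Ω, (star y) (z (a Ω))⟫ := by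
    have h1 := D_alg (Ω := Ω) (vn_mul hz haA)
    rw [star_mul, has.star_eq] at h1
    simp only [mul_apply_eq_comp] at h1
    rw [← R_symm', ← zR, ← sa_inner has, ← Q_symm', ← h1, ← inner_conj_symm, ds, ← yD, inner_conj_symm,
      star_inner_right]
  rw [t1, inner_add_right, inner_smul_right, inner_smul_right, t2, t3, e0]

end P8
end TT

namespace TT
section P9
set_option linter.all false
open Complex Set Filter Topology

lemma conj_rsmul (D : H →L⋆[ℂ] H) (a : ℝ) (x : H) : D (a • x) = a • D x := by
  rw [← Complex.coe_smul, map_smulₛₗ, conj_ofReal, Complex.coe_smul]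

lemma conj_pow (D : H →L⋆[ℂ] H) {X X' : H →L[ℂ] H} (h : ∀ x, D (X x) = X' (D x)) (n : ℕ) (x : H) :
    D ((X ^ n) x) = (X' ^ n) (D x) := by
  induction n generalizing x with
  | zero => simp
  | succ n ih =>
    rw [pow_succ, pow_succ]
    simp only [mul_apply_eq_comp]
    rw [ih, h]

lemma conj_poly (D : H →L⋆[ℂ] H) {X X' : H →L[ℂ] H} (h : ∀ x, D (X x) = X' (D x)) (p : Polynomial ℝ) (x : H) :
    D (Polynomial.aeval X p x) = Polynomial.aeval X' p (D x) := by
  induction p using Polynomial.induction_on' with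
  | add p q hp hq => simp [hp, hq]
  | monomial n a =>
    simp only [Polynomial.aeval_monomial, ← Algebra.smul_def, smul_apply, conj_rsmul, conj_pow D h]

lemma conj_exp (D : H →L⋆[ℂ] H) {X X' : H →L[ℂ] H} (h : ∀ x, D (X x) = X' (D x)) (x : H) :
    D (NormedSpace.exp X x) = NormedSpace.exp X' (D x) := by
  have s1 := NormedSpace.exp_series_hasSum_exp' (𝕂 := ℝ) X
  have s2 := NormedSpace.exp_series_hasSum_exp' (𝕂 := ℝ) X'
  have t1 := (s1.map (ContinuousLinearMap.apply ℂ H x) (ContinuousLinearMap.apply ℂ H x).continuous).map D D.continuous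
  have t2 := s2.map (ContinuousLinearMap.apply ℂ H (D x)) (ContinuousLinearMap.apply ℂ H (D x)).continuous
  refine t1.unique ?_
  show HasSum _ ((ContinuousLinearMap.apply ℂ H) (D x) (NormedSpace.exp X'))
  convert t2 using 1
  ext n
  simp only [Function.comp, ContinuousLinearMap.apply_apply, smul_apply, conj_rsmul, conj_pow D h]

lemma Good.sp2 {R : H →L[ℂ] H} (g : Good R) : spectrum ℝ (2 - R) ⊆ Icc 0 2 := by
  rw [two_sub_eq g.sa, cfc_map_spectrum _ _ g.sa]
  rintro _ ⟨s, hs, rfl⟩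
  have := g.sp hs
  constructor
  · linarith [this.2]
  · linarith [this.1]

lemma poly_near {X : H →L[ℂ] H} (hs : IsSelfAdjoint X) (hX : spectrum ℝ X ⊆ Icc 0 2) {f : ℝ → ℝ} (hf : Continuous f)
    {p : Polynomial ℝ} {ε : ℝ} (hε : 0 < ε) (hp : ∀ x ∈ Icc (0:ℝ) 2, |Polynomial.eval x p - f x| < ε) :
    ‖Polynomial.aeval X p - cfc f X‖ ≤ ε := by
  rw [← cfc_polynomial p X hs, ← cfc_sub _ _ X p.continuous.continuousOn hf.continuousOn]
  apply norm_cfc_le hε.le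
  intro s hs
  exact (hp s (hX hs)).le

lemma conj_cfc (D : H →L⋆[ℂ] H) {X X' : H →L[ℂ] H} (h : ∀ x, D (X x) = X' (D x)) (hs : IsSelfAdjoint X)
    (hX : spectrum ℝ X ⊆ Icc 0 2) (hs' : IsSelfAdjoint X') (hX' : spectrum ℝ X' ⊆ Icc 0 2)
    {f : ℝ → ℝ} (hf : Continuous f) (x : H) : D (cfc f X x) = cfc f X' (D x) := by
  rw [← sub_eq_zero, ← norm_le_zero_iff]
  apply le_of_forall_pos_le_add
  intro δ hδ
  set M := ‖D‖ * ‖x‖ + ‖D x‖ + 1 with hM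
  have hM0 : 0 < M := by positivity
  obtain ⟨p, hp⟩ := exists_polynomial_near_of_continuousOn 0 2 f hf.continuousOn (δ / M) (by positivity)
  have n1 := poly_near hs hX hf (by positivity) hp
  have n2 := poly_near hs' hX' hf (by positivity) hp
  have e : D (cfc f X x) - cfc f X' (D x) = (Polynomial.aeval X' p - cfc f X') (D x)
      - D ((Polynomial.aeval X p - cfc f X) x) := by
    rw [sub_apply, sub_apply, map_sub, conj_poly D h]; abel
  rw [e, zero_add]
  refine (norm_sub_le _ _).trans ?_
  have a1 : ‖(Polynomial.aeval X' p - cfc f X') (D x)‖ ≤ δ / M * ‖D x‖ :=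
    ((Polynomial.aeval X' p - cfc f X').le_opNorm _).trans (by gcongr)
  have a2 : ‖D ((Polynomial.aeval X p - cfc f X) x)‖ ≤ ‖D‖ * (δ / M * ‖x‖) := by
    refine (D.le_opNorm _).trans ?_
    gcongr
    exact ((Polynomial.aeval X p - cfc f X).le_opNorm _).trans (by gcongr)
  have : δ = δ / M * M := by field_simp
  have h3 : 0 ≤ δ / M := by positivity
  rw [hM] at this
  nlinarith

variable {R : H →L[ℂ] H}

lemma conj_Y (g : Good R) (D : H →L⋆[ℂ] H) (hD : ∀ x, D (R x) = (2 - R) (D x)) {α β : ℂ} (hd : Dom α β) (x : H) :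
    D (Y R α β x) = Y R (star β) (star α) (D x) := by
  have hD2 : ∀ x, D ((2 - R) x) = R (D x) := by
    intro x
    have e : (2 - R) x = (2:ℂ) • x - R x := by
      rw [sub_apply]; congr 1; rw [two_smul, ← one_add_one_eq_two]; rfl
    have e' : (2 - R) (D x) = (2:ℂ) • D x - R (D x) := by
      rw [sub_apply]; congr 1; rw [two_smul, ← one_add_one_eq_two]; rfl
    rw [e, map_sub, hD, e', map_smulₛₗ, map_ofNat]; abel
  refine Y_conj g D D.continuous ?_ hd x
  intro n α β x
  unfold Yn
  apply conj_exp
  intro x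
  have c1 := conj_cfc D hD g.sa g.sp g.sa2 g.sp2 (lg_cont n)
  have c2 := conj_cfc D hD2 g.sa2 g.sp2 g.sa g.sp (lg_cont n)
  simp only [add_apply, smul_apply, map_add, map_smulₛₗ, An, c1, c2]
  exact add_comm _ _

variable {P : H →L[ℝ] H}

lemma dom_half : Dom (1/2) (1/2) := by norm_num [Dom]

lemma Y_one_one (g : Good R) (x : H) : Y R (1/2) (1/2) (Y R (1/2) (1/2) x) = R ((2 - R) x) := by
  rw [Y_apply g dom_half dom_half (by norm_num [Dom])]
  have := Y_apply g (α := 1) (β := 0) (α' := 0) (β' := 1) (by norm_num [Dom]) (by norm_num [Dom]) (by norm_num [Dom]) x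
  rw [Y_one_zero g, Y_zero_one g] at this
  rw [this]; norm_num

lemma T_dense (g : Good R) : DenseRange (Y R (1/2) (1/2)) := by
  refine Dense.mono ?_ g.dense
  rintro _ ⟨x, rfl⟩
  exact ⟨Y R (1/2) (1/2) x, Y_one_one g x⟩

lemma T_norm (h : IsProj P) (g : Good (Rop P)) (x : H) : ‖Dop P x‖ = ‖Y (Rop P) (1/2) (1/2) x‖ := by
  have h1 := D_norm h x
  have h2 : star (1/2:ℂ) = 1/2 := by simp
  have h4 := Y_inner g dom_half x (Y (Rop P) (1/2) (1/2) x)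
  rw [h2] at h4
  rw [← Y_one_one g, ← h4, inner_self_eq_norm_sq_to_K] at h1
  have h3 : ‖Dop P x‖ ^ 2 = ‖Y (Rop P) (1/2) (1/2) x‖ ^ 2 := by
    apply Complex.ofReal_injective
    rw [h1]; norm_cast
  exact (sq_eq_sq₀ (norm_nonneg _) (norm_nonneg _)).1 h3

def Jop (P : H →L[ℝ] H) : H →L⋆[ℂ] H :=
  LinearMap.extendOfNorm (Dop P : H →ₛₗ[starRingEnd ℂ] H) (Y (Rop P) (1/2) (1/2) : H →ₗ[ℂ] H)

lemma J_T (h : IsProj P) (g : Good (Rop P)) (x : H) : Jop P (Y (Rop P) (1/2) (1/2) x) = Dop P x :=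
  LinearMap.extendOfNorm_eq (f := (Dop P : H →ₛₗ[starRingEnd ℂ] H)) (e := (Y (Rop P) (1/2) (1/2) : H →ₗ[ℂ] H))
    (T_dense g) ⟨1, fun x => by rw [one_mul]; exact (T_norm h g x).le⟩ x

lemma T_ext (g : Good R) {Z : Type*} [TopologicalSpace Z] [T2Space Z] {f f' : H → Z} (hf : Continuous f) (hf' : Continuous f')
    (h : ∀ x, f (Y R (1/2) (1/2) x) = f' (Y R (1/2) (1/2) x)) (x : H) : f x = f' x := by
  have := (T_dense g).equalizer hf hf' (funext h)
  rw [this]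

lemma Y_comm (g : Good R) {α β α' β' : ℂ} (h1 : Dom α β) (h2 : Dom α' β') (h3 : Dom (α + α') (β + β')) (x : H) :
    Y R α β (Y R α' β' x) = Y R α' β' (Y R α β x) := by
  rw [Y_apply g h1 h2 h3, Y_apply g h2 h1 (by rwa [add_comm α', add_comm β']), add_comm α', add_comm β']

lemma RT (g : Good R) (x : H) : R (Y R (1/2) (1/2) x) = Y R (1/2) (1/2) (R x) := by
  have e : ∀ x, R x = Y R (1/2) 0 (Y R (1/2) 0 x) := fun x => by
    rw [Y_apply g (by norm_num [Dom]) (by norm_num [Dom]) (by norm_num [Dom])]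
    norm_num [Y_one_zero g]
  have c : ∀ x, Y R (1/2) 0 (Y R (1/2) (1/2) x) = Y R (1/2) (1/2) (Y R (1/2) 0 x) := fun x =>
    Y_comm g (by norm_num [Dom]) dom_half (by norm_num [Dom]) x
  rw [e, c, c, ← e]

lemma JR (h : IsProj P) (g : Good (Rop P)) (x : H) : Jop P (Rop P x) = (2 - Rop P) (Jop P x) := by
  refine T_ext g (f := fun x => Jop P (Rop P x)) (f' := fun x => (2 - Rop P) (Jop P x)) (by fun_prop) (by fun_prop) ?_ x
  intro x
  rw [RT g, J_T h g, J_T h g, DR h]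

lemma J_Y (h : IsProj P) (g : Good (Rop P)) {α β : ℂ} (hd : Dom α β) (x : H) :
    Jop P (Y (Rop P) α β x) = Y (Rop P) (star β) (star α) (Jop P x) := conj_Y g _ (JR h g) hd x

lemma T_J (h : IsProj P) (g : Good (Rop P)) (x : H) : Y (Rop P) (1/2) (1/2) (Jop P x) = Dop P x := by
  rw [← J_T h g, J_Y h g dom_half]; simp

lemma J_J (h : IsProj P) (g : Good (Rop P)) (x : H) : Jop P (Jop P x) = x := by
  refine T_ext g (f := fun x => Jop P (Jop P x)) (f' := fun x => x) (by fun_prop) (by fun_prop) ?_ x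
  intro x
  have e : ∀ x, Dop P (Y (Rop P) (1/2) (1/2) x) = Y (Rop P) (1/2) (1/2) (Dop P x) := fun x => by
    rw [conj_Y g _ (DR h) dom_half]; simp
  refine T_ext g (f := fun x => Jop P (Jop P (Y (Rop P) (1/2) (1/2) x))) (f' := fun x => Y (Rop P) (1/2) (1/2) x) (by fun_prop) (by fun_prop) ?_ x
  intro x
  rw [J_T h g, e, J_T h g, DD h, Y_one_one g]

lemma J_norm (h : IsProj P) (g : Good (Rop P)) (x : H) : ‖Jop P x‖ = ‖x‖ := by
  refine T_ext g (f := fun x => ‖Jop P x‖) (f' := fun x => ‖x‖) (by fun_prop) (by fun_prop) ?_ x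
  intro x
  rw [J_T h g, T_norm h g]

lemma J_symm (h : IsProj P) (g : Good (Rop P)) (x y : H) : ⟪x, Jop P y⟫ = ⟪y, Jop P x⟫ := by
  refine T_ext g (f := fun y => ⟪x, Jop P y⟫) (f' := fun y => ⟪y, Jop P x⟫) (by fun_prop) (by fun_prop) ?_ y
  intro y
  rw [J_T h g, D_symm h, Y_inner g dom_half]
  have : star (1/2:ℂ) = 1/2 := by simp
  rw [this, T_J h g]

lemma J_inner (h : IsProj P) (g : Good (Rop P)) (x y : H) : ⟪Jop P x, y⟫ = ⟪Jop P y, x⟫ := by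
  rw [← inner_conj_symm, J_symm h g, inner_conj_symm]

lemma J_fix (h : IsProj P) (g : Good (Rop P)) {Ω : H} (hR : Rop P Ω = Ω) (hD : Dop P Ω = Ω) : Jop P Ω = Ω := by
  have := J_T h g Ω
  rwa [Y_fix g hR dom_half, hD] at this

/-- conjugation of an operator by J -/
def cJ (P : H →L[ℝ] H) (x : H →L[ℂ] H) : H →L[ℂ] H := (Jop P).comp (x.comp (Jop P))

lemma cJ_apply (x : H →L[ℂ] H) (v : H) : cJ P x v = Jop P (x (Jop P v)) := rfl

end P9
end TT

namespace TT
section P10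
set_option linter.all false
open Complex Set Filter Topology MeasureTheory

variable {R : H →L[ℂ] H}

def Dt (R : H →L[ℂ] H) (t : ℝ) : H →L[ℂ] H := Y R (-(I * t)) (I * t)

lemma dom_it (t : ℝ) : Dom (-(I * t)) (I * t) := by simp [Dom]

lemma Dt_add (g : Good R) (s t : ℝ) (x : H) : Dt R s (Dt R t x) = Dt R (s + t) x := by
  unfold Dt
  have e1 : -(I * ((s + t : ℝ) : ℂ)) = -(I * s) + -(I * t) := by push_cast; ring
  have e2 : (I * ((s + t : ℝ) : ℂ)) = (I * s) + (I * t) := by push_cast; ring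
  have d := dom_it (s + t)
  rw [e1, e2] at d ⊢
  exact Y_apply g (dom_it s) (dom_it t) d x

lemma Dt_zero (g : Good R) (x : H) : Dt R 0 x = x := by
  unfold Dt
  simp [Y_zero g]

lemma Dt_neg (g : Good R) (t : ℝ) (x : H) : Dt R t (Dt R (-t) x) = x := by
  rw [Dt_add g, add_neg_cancel, Dt_zero g]

lemma Dt_neg' (g : Good R) (t : ℝ) (x : H) : Dt R (-t) (Dt R t x) = x := by
  rw [Dt_add g, neg_add_cancel, Dt_zero g]

lemma Dt_inner (g : Good R) (t : ℝ) (x y : H) : ⟪Dt R t x, y⟫ = ⟪x, Dt R (-t) y⟫ := by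
  unfold Dt
  rw [Y_inner g (dom_it t)]
  simp

lemma Dt_star (g : Good R) (t : ℝ) : star (Dt R t) = Dt R (-t) := by
  unfold Dt
  rw [Y_star g (dom_it t)]
  simp

lemma Dt_norm (g : Good R) (t : ℝ) (x : H) : ‖Dt R t x‖ = ‖x‖ := by
  have h : ⟪Dt R t x, Dt R t x⟫ = ⟪x, x⟫ := by rw [Dt_inner g, Dt_neg' g]
  rw [inner_self_eq_norm_sq_to_K, inner_self_eq_norm_sq_to_K] at h
  have h3 : ‖Dt R t x‖ ^ 2 = ‖x‖ ^ 2 := by exact_mod_cast h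
  exact (sq_eq_sq₀ (norm_nonneg _) (norm_nonneg _)).1 h3

lemma Dt_cont (g : Good R) (x : H) : Continuous (fun t : ℝ => Dt R t x) := by
  have h := Y_contOn g (a := fun w => -(I * w)) (b := fun w => I * w) (y := fun _ => x) (S := {w | w.im = 0})
    (by intro w hw; have : w.im = 0 := hw; simp [Dom, this]) (by fun_prop) (by fun_prop) (by fun_prop)
  exact h.comp_continuous (f := fun t : ℝ => (t:ℂ)) (by fun_prop) (by intro t; simp)

lemma Dt_fix (g : Good R) {Ω : H} (hΩ : R Ω = Ω) (t : ℝ) : Dt R t Ω = Ω := Y_fix g hΩ (dom_it t)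

lemma Dt_Y (g : Good R) (t : ℝ) {α β : ℂ} (hd : Dom α β) (x : H) :
    Dt R t (Y R α β x) = Y R (α - I * t) (β + I * t) x := by
  unfold Dt
  rw [Y_apply g (dom_it t) hd (by simpa [Dom] using hd)]
  congr 2 <;> ring

lemma Y_Dt (g : Good R) (t : ℝ) {α β : ℂ} (hd : Dom α β) (x : H) :
    Y R α β (Dt R t x) = Y R (α - I * t) (β + I * t) x := by
  unfold Dt
  rw [Y_apply g hd (dom_it t) (by simpa [Dom] using hd)]
  congr 2

lemma J_Dt {P : H →L[ℝ] H} (h : IsProj P) (g : Good (Rop P)) (t : ℝ) (x : H) :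
    Jop P (Dt (Rop P) t x) = Dt (Rop P) t (Jop P x) := by
  unfold Dt
  rw [J_Y h g (dom_it t)]
  simp

def sig (R : H →L[ℂ] H) (t : ℝ) (a : H →L[ℂ] H) : H →L[ℂ] H := Dt R t * a * Dt R (-t)

lemma sig_apply (t : ℝ) (a : H →L[ℂ] H) (x : H) : sig R t a x = Dt R t (a (Dt R (-t) x)) := rfl

lemma sig_inner (g : Good R) (t : ℝ) (a : H →L[ℂ] H) (x y : H) :
    ⟪x, sig R t a y⟫ = ⟪Dt R (-t) x, a (Dt R (-t) y)⟫ := by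
  rw [sig_apply, Dt_inner g, neg_neg]

lemma sig_cont (g : Good R) (a : H →L[ℂ] H) (x y : H) : Continuous (fun t : ℝ => ⟪x, sig R t a y⟫) := by
  simp_rw [sig_inner g]
  have c1 := (Dt_cont g x).comp continuous_neg
  have c2 := a.continuous.comp ((Dt_cont g y).comp continuous_neg)
  exact c1.inner c2

lemma sig_bound (g : Good R) (t : ℝ) (a : H →L[ℂ] H) (x y : H) : ‖⟪x, sig R t a y⟫‖ ≤ ‖a‖ * ‖x‖ * ‖y‖ := by
  rw [sig_inner g]
  refine (norm_inner_le_norm _ _).trans ?_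
  have := a.le_opNorm (Dt R (-t) y)
  rw [Dt_norm g] at this
  rw [Dt_norm g]
  nlinarith [norm_nonneg x]

/-- weighted integral -/
def Ph (R : H →L[ℂ] H) (θ : ℝ) (a : H →L[ℂ] H) (x y : H) : ℂ :=
  ∫ t : ℝ, (Real.exp (θ * t) : ℂ) * ⟪x, sig R t a y⟫ / Complex.cosh (Real.pi * t)

lemma Ph_int (g : Good R) {θ : ℝ} (h0 : 0 ≤ θ) (h1 : θ < 1) (a : H →L[ℂ] H) (x y : H) :
    Integrable (fun t : ℝ => (Real.exp (θ * t) : ℂ) * ⟪x, sig R t a y⟫ / Complex.cosh (Real.pi * t)) := by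
  refine integrable_kernel (M := ‖a‖ * ‖x‖ * ‖y‖) (θ := θ) ?_ (by linarith [Real.pi_gt_three]) ?_
  · exact Continuous.mul (by fun_prop) (sig_cont g a x y)
  · intro t
    rw [norm_mul, norm_real, Real.norm_of_nonneg (Real.exp_pos _).le, mul_comm]
    gcongr
    · exact sig_bound g t a x y
    · exact le_abs_self t

lemma Ph_bound (g : Good R) {θ : ℝ} (h0 : 0 ≤ θ) (h1 : θ < 1) (a : H →L[ℂ] H) : ∃ C, ∀ x y,
    ‖Ph R θ a x y‖ ≤ C * ‖x‖ * ‖y‖ := by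
  have hi : Integrable (fun t : ℝ => (Real.exp (θ * t) : ℂ) / Complex.cosh (Real.pi * t)) := by
    refine integrable_kernel (M := 1) (θ := θ) (by fun_prop) (by linarith [Real.pi_gt_three]) ?_
    intro t
    rw [norm_real, Real.norm_of_nonneg (Real.exp_pos _).le, one_mul]
    gcongr
    exact le_abs_self t
  refine ⟨(∫ t : ℝ, ‖(Real.exp (θ * t) : ℂ) / Complex.cosh (Real.pi * t)‖) * ‖a‖, fun x y => ?_⟩
  have : (∫ t : ℝ, ‖(Real.exp (θ * t) : ℂ) / Complex.cosh (Real.pi * t)‖) * ‖a‖ * ‖x‖ * ‖y‖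
    = ∫ t : ℝ, ‖(Real.exp (θ * t) : ℂ) / Complex.cosh (Real.pi * t)‖ * (‖a‖ * ‖x‖ * ‖y‖) := by
    rw [integral_mul_const]; ring
  rw [this]
  refine norm_integral_le_of_norm_le (hi.norm.mul_const _) ?_
  filter_upwards with t
  rw [mul_div_right_comm, norm_mul]
  gcongr
  exact sig_bound g t a x y

lemma Ph_cont_right (g : Good R) {θ : ℝ} (h0 : 0 ≤ θ) (h1 : θ < 1) (a : H →L[ℂ] H) (x : H) :
    Continuous (fun y => Ph R θ a x y) := by
  obtain ⟨C, hC⟩ := Ph_bound g h0 h1 a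
  let f : H →+ ℂ := AddMonoidHom.mk' (fun y => Ph R θ a x y) (by
    intro y z
    unfold Ph
    rw [← integral_add (Ph_int g h0 h1 a x y) (Ph_int g h0 h1 a x z)]
    congr 1
    ext t
    rw [map_add, inner_add_right]; ring)
  exact AddMonoidHomClass.continuous_of_bound f (C * ‖x‖) (hC x)

lemma Ph_cont_left (g : Good R) {θ : ℝ} (h0 : 0 ≤ θ) (h1 : θ < 1) (a : H →L[ℂ] H) (y : H) :
    Continuous (fun x => Ph R θ a x y) := by
  obtain ⟨C, hC⟩ := Ph_bound g h0 h1 a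
  let f : H →+ ℂ := AddMonoidHom.mk' (fun x => Ph R θ a x y) (by
    intro x z
    unfold Ph
    rw [← integral_add (Ph_int g h0 h1 a x y) (Ph_int g h0 h1 a z y)]
    congr 1
    ext t
    rw [inner_add_left]; ring)
  exact AddMonoidHomClass.continuous_of_bound f (C * ‖y‖) (fun x => by
    have := hC x y
    calc _ ≤ _ := this
      _ = _ := by ring)

lemma star_half : star (1/2:ℂ) = 1/2 := by simp

lemma Ph_T (g : Good R) {θ : ℝ} (h0 : 0 ≤ θ) (h1 : θ < 1) {B a : H →L[ℂ] H}
    (hB : ∀ v, Y R (1/2) (1/2) (B (Y R (1/2) (1/2) v)) = Complex.exp (-(I * θ / 2)) • (2 - R) (a (R v))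
      + Complex.exp (I * θ / 2) • R (a ((2 - R) v))) (ξ η : H) :
    Ph R θ B (Y R (1/2) (1/2) ξ) (Y R (1/2) (1/2) η) = cst * ⟪Y R (1/2) (1/2) ξ, a (Y R (1/2) (1/2) η)⟫ := by
  have dom1 : ∀ z ∈ strip, Dom (1/2 - I * z) (1/2 + I * z) := by
    intro z hz
    have : |z.im| ≤ 1/2 := hz
    rw [abs_le] at this
    simp [Dom]
    refine ⟨⟨?_, ?_⟩, ?_, ?_⟩ <;> linarith [this.1, this.2]
  have dom2 : ∀ z ∈ strip, Dom (1/2 + I * z) (1/2 - I * z) := fun z hz => ⟨(dom1 z hz).2, (dom1 z hz).1⟩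
  set G : ℂ → ℂ := fun z => Complex.exp (θ * z) *
    ⟪ξ, Y R (1/2 - I * z) (1/2 + I * z) (a (Y R (1/2 + I * z) (1/2 - I * z) η))⟫ with hG
  have key := poisson (G := G) (M := ‖ξ‖ * (4 * (‖a‖ * (4 * ‖η‖)))) (θ := θ) ?_ ?_ h0 (by linarith [Real.pi_gt_three]) (by positivity) ?_
  · have e0 : G 0 = ⟪Y R (1/2) (1/2) ξ, a (Y R (1/2) (1/2) η)⟫ := by
      rw [hG, Y_inner g dom_half, star_half]
      simp
    rw [← e0, ← key]
    unfold Ph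
    congr 1
    ext t
    congr 1
    have i1 : I * ((t:ℂ) - I/2) = I * t + 1/2 := by linear_combination (-1/2:ℂ) * I_mul_I
    have i2 : I * ((t:ℂ) + I/2) = I * t - 1/2 := by linear_combination (1/2:ℂ) * I_mul_I
    have d10 : Dom 1 0 := by norm_num [Dom]
    have d01 : Dom 0 1 := by norm_num [Dom]
    have g1 : G (t - I/2) = (Real.exp (θ * t) : ℂ) * (Complex.exp (-(I * θ / 2)) *
        ⟪ξ, Dt R t ((2 - R) (a (R (Dt R (-t) η))))⟫) := by
      have e1 : Dt R t ((2 - R) (a (R (Dt R (-t) η)))) =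
          Y R (1/2 - I * (t - I/2)) (1/2 + I * (t - I/2)) (a (Y R (1/2 + I * (t - I/2)) (1/2 - I * (t - I/2)) η)) := by
        have a1 := Dt_Y g t d01 (a (R (Dt R (-t) η)))
        have a2 := Y_Dt g (-t) d10 η
        rw [Y_zero_one g] at a1
        rw [Y_one_zero g] at a2
        rw [a1, a2, i1]
        have q1 : (1/2:ℂ) - (I * t + 1/2) = 0 - I * t := by ring
        have q2 : (1/2:ℂ) + (I * t + 1/2) = 0 + 1 + I * t := by ring
        have q3 : (1:ℂ) - I * ((-t : ℝ) : ℂ) = 1 + I * t := by push_cast; ring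
        have q4 : (0:ℂ) + I * ((-t : ℝ) : ℂ) = 0 - I * t := by push_cast; ring
        rw [q1, q2, q3, q4, zero_add]
      have e2 : Complex.exp (θ * (t - I/2)) = (Real.exp (θ * t) : ℂ) * Complex.exp (-(I * θ / 2)) := by
        rw [ofReal_exp, ← Complex.exp_add]; congr 1; push_cast; ring
      rw [hG, e1]
      simp only
      rw [e2]; ring
    have g2 : G (t + I/2) = (Real.exp (θ * t) : ℂ) * (Complex.exp (I * θ / 2) *
        ⟪ξ, Dt R t (R (a ((2 - R) (Dt R (-t) η))))⟫) := by
      have e1 : Dt R t (R (a ((2 - R) (Dt R (-t) η)))) =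
          Y R (1/2 - I * (t + I/2)) (1/2 + I * (t + I/2)) (a (Y R (1/2 + I * (t + I/2)) (1/2 - I * (t + I/2)) η)) := by
        have a1 := Dt_Y g t d10 (a ((2 - R) (Dt R (-t) η)))
        have a2 := Y_Dt g (-t) d01 η
        rw [Y_one_zero g] at a1
        rw [Y_zero_one g] at a2
        rw [a1, a2, i2]
        have q1 : (1/2:ℂ) - (I * t - 1/2) = 1 - I * t := by ring
        have q2 : (1/2:ℂ) + (I * t - 1/2) = 0 + I * t := by ring
        have q3 : (1:ℂ) + I * ((-t : ℝ) : ℂ) = 1 - I * t := by push_cast; ring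
        have q4 : (0:ℂ) - I * ((-t : ℝ) : ℂ) = 0 + I * t := by push_cast; ring
        rw [q1, q2, q3, q4]
      have e2 : Complex.exp (θ * (t + I/2)) = (Real.exp (θ * t) : ℂ) * Complex.exp (I * θ / 2) := by
        rw [ofReal_exp, ← Complex.exp_add]; congr 1; push_cast; ring
      rw [hG, e1]
      simp only
      rw [e2]; ring
    have l : ⟪Y R (1/2) (1/2) ξ, sig R t B (Y R (1/2) (1/2) η)⟫
        = ⟪ξ, Dt R t (Y R (1/2) (1/2) (B (Y R (1/2) (1/2) (Dt R (-t) η))))⟫ := by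
      rw [Y_inner g dom_half, star_half, sig_apply]
      rw [Y_Dt g t dom_half, Dt_Y g t dom_half, Y_Dt g _ dom_half, Dt_Y g _ dom_half]
    rw [l, hB, g1, g2, map_add, map_smul, map_smul, inner_add_right, inner_smul_right, inner_smul_right]
    ring
  · refine ContinuousOn.mul (by fun_prop) (ContinuousOn.inner continuousOn_const ?_)
    refine Y_contOn g dom1 (by fun_prop) (by fun_prop) ?_
    refine a.continuous.comp_continuousOn ?_
    exact Y_contOn g dom2 (by fun_prop) (by fun_prop) continuousOn_const
  · refine DifferentiableOn.mul (by fun_prop) ?_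
    have : DifferentiableOn ℂ (fun z => innerSL ℂ ξ (Y R (1/2 - I * z) (1/2 + I * z) (a (Y R (1/2 + I * z) (1/2 - I * z) η)))) ostrip := by
      refine (innerSL ℂ ξ).differentiable.comp_differentiableOn ?_
      refine Y_diffOn g isOpen_ostrip (fun z hz => dom1 z (ostrip_sub hz)) (by fun_prop) (by fun_prop) ?_
      refine a.differentiable.comp_differentiableOn ?_
      exact Y_diffOn g isOpen_ostrip (fun z hz => dom2 z (ostrip_sub hz)) (by fun_prop) (by fun_prop) (differentiableOn_const _)
    exact this
  · intro z hz
    rw [hG]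
    simp only
    rw [norm_mul, mul_comm]
    gcongr
    · refine (norm_inner_le_norm _ _).trans ?_
      gcongr
      refine (Y_norm g (dom1 z hz) _).trans ?_
      gcongr
      refine (a.le_opNorm _).trans ?_
      gcongr
      exact Y_norm g (dom2 z hz) _
    · rw [Complex.norm_exp]
      gcongr
      simp
      gcongr
      exact le_abs_self _

lemma Ph_all (g : Good R) {θ : ℝ} (h0 : 0 ≤ θ) (h1 : θ < 1) {B a : H →L[ℂ] H}
    (hB : ∀ v, Y R (1/2) (1/2) (B (Y R (1/2) (1/2) v)) = Complex.exp (-(I * θ / 2)) • (2 - R) (a (R v))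
      + Complex.exp (I * θ / 2) • R (a ((2 - R) v))) (ξ η : H) :
    Ph R θ B ξ η = cst * ⟪ξ, a η⟫ := by
  refine T_ext g (f := fun ξ => Ph R θ B ξ η) (f' := fun ξ => cst * ⟪ξ, a η⟫) (Ph_cont_left g h0 h1 _ _) (by fun_prop) ?_ ξ
  intro ξ
  refine T_ext g (f := fun η => Ph R θ B (Y R (1/2) (1/2) ξ) η) (f' := fun η => cst * ⟪Y R (1/2) (1/2) ξ, a η⟫)
    (Ph_cont_right g h0 h1 _ _) (by fun_prop) ?_ η
  exact Ph_T g h0 h1 hB ξ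

end P10
end TT

namespace TT
section P11
set_option linter.all false
open Complex Set Filter Topology MeasureTheory

variable {A : VonNeumannAlgebra H} {Ω : H}

lemma sig_cJ_sa (hc : IsCyclicVector (A : Set (H →L[ℂ] H)) Ω)
    (hs : IsCyclicVector (A.commutant : Set (H →L[ℂ] H)) Ω) {x : H →L[ℂ] H} (hx : x ∈ A.commutant)
    (hxs : IsSelfAdjoint x) (t : ℝ) : sig (RR A Ω) t (cJ (PP A Ω) x) ∈ A := by
  have g := RR_good hc hs
  have hp := PP_proj A Ω
  apply vn_of_comm
  intro c hcm
  ext v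
  refine ext_inner_left ℂ fun u => ?_
  set B := cJ (PP A Ω) x with hBdef
  have hTB : ∀ v, Y (RR A Ω) (1/2) (1/2) (B (Y (RR A Ω) (1/2) (1/2) v)) = DDo A Ω (x (DDo A Ω v)) := by
    intro v
    rw [hBdef, cJ_apply, J_T hp g, T_J hp g]
  have hz := mgf_zero (f := fun t => ⟪star c u, sig (RR A Ω) t B v⟫ - ⟪u, sig (RR A Ω) t B (c v)⟫)
    ((sig_cont g B _ _).sub (sig_cont g B _ _))
    (M := ‖B‖ * ‖star c u‖ * ‖v‖ + ‖B‖ * ‖u‖ * ‖c v‖)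
    (fun t => (norm_sub_le _ _).trans (add_le_add (sig_bound g t B _ _) (sig_bound g t B _ _))) ?_ t
  · have h2 := sub_eq_zero.1 hz
    rw [star_inner_left] at h2
    exact h2
  · intro θ h0 h1
    have hre : 0 < (Complex.exp (-(I * θ / 2))).re := by
      have : -(I * (θ:ℂ) / 2) = ((-(θ/2) : ℝ) : ℂ) * I := by push_cast; ring
      rw [this, Complex.exp_ofReal_mul_I_re, Real.cos_neg]
      apply Real.cos_pos_of_mem_Ioo
      constructor <;> linarith [Real.pi_gt_three]
    obtain ⟨a, ha, has, hf⟩ := key_form hs hx hxs hre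
    have hst : star (Complex.exp (-(I * θ / 2))) = Complex.exp (I * θ / 2) := by
      rw [← starRingEnd_apply, ← Complex.exp_conj]
      congr 1
      simp [map_ofNat]
      ring
    rw [hst] at hf
    have hall := fun ξ η => Ph_all g h0 h1 (B := B) (a := a) (fun v => by rw [hTB, hf]) ξ η
    have e1 := hall (star c u) v
    have e2 := hall u (c v)
    have e3 : ⟪star c u, a v⟫ = ⟪u, a (c v)⟫ := by
      rw [star_inner_left, vn_comm_apply ha hcm]
    have : (fun t : ℝ => (Real.exp (θ * t) : ℂ) * (⟪star c u, sig (RR A Ω) t B v⟫ - ⟪u, sig (RR A Ω) t B (c v)⟫) / Complex.cosh (Real.pi * t))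
      = fun t : ℝ => (Real.exp (θ * t) : ℂ) * ⟪star c u, sig (RR A Ω) t B v⟫ / Complex.cosh (Real.pi * t)
        - (Real.exp (θ * t) : ℂ) * ⟪u, sig (RR A Ω) t B (c v)⟫ / Complex.cosh (Real.pi * t) := by
      ext t; ring
    rw [this, integral_sub (Ph_int g h0 h1 B _ _) (Ph_int g h0 h1 B _ _)]
    change Ph (RR A Ω) θ B _ _ - Ph (RR A Ω) θ B _ _ = 0
    rw [e1, e2, e3, sub_self]

lemma sig_cJ (hc : IsCyclicVector (A : Set (H →L[ℂ] H)) Ω)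
    (hs : IsCyclicVector (A.commutant : Set (H →L[ℂ] H)) Ω) {x : H →L[ℂ] H} (hx : x ∈ A.commutant)
    (t : ℝ) : sig (RR A Ω) t (cJ (PP A Ω) x) ∈ A := by
  obtain ⟨b, hb, c, hcm, hbs, hcs, e, -⟩ := vn_decomp hx
  have : sig (RR A Ω) t (cJ (PP A Ω) x) = sig (RR A Ω) t (cJ (PP A Ω) b) + (-I) • sig (RR A Ω) t (cJ (PP A Ω) c) := by
    ext v
    rw [e]
    simp only [sig_apply, cJ_apply, add_apply, smul_apply, map_add, map_smul, map_smulₛₗ]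
    simp
  rw [this]
  exact vn_add (sig_cJ_sa hc hs hb hbs t) (vn_smul (sig_cJ_sa hc hs hcm hcs t) _)

lemma dh0 : Dom (1/2) 0 := by norm_num [Dom]
lemma d0h : Dom 0 (1/2) := by norm_num [Dom]

lemma zeta_of_fix {P : H →L[ℝ] H} (hp : IsProj P) (g : Good (Rop P)) {h : H} (hh : P h = h) :
    ∃ ζ, Y (Rop P) (1/2) 0 ζ = h ∧ Y (Rop P) 0 (1/2) ζ = Jop P h := by
  have d10 : Dom (1/2 + 1/2) (0 + 0) := by norm_num [Dom]
  have d01 : Dom (0 + 0) (1/2 + 1/2) := by norm_num [Dom]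
  have dhh : Dom (1/2 + 0) (0 + 1/2) := by norm_num [Dom]
  set ζ := (1/2:ℂ) • (Y (Rop P) (1/2) 0 h + Y (Rop P) 0 (1/2) (Jop P h)) with hζ
  have h1 : Y (Rop P) (1/2) 0 ζ = h := by
    rw [hζ, map_smul, map_add, Y_apply g dh0 dh0 d10, Y_apply g dh0 d0h dhh]
    have q : ((1:ℂ)/2 + 1/2) = 1 := by norm_num
    rw [q, add_zero, add_zero, zero_add, Y_one_zero g, T_J hp g, ← P_eq, hh]
  have h2 : Jop P ζ = ζ := by
    rw [hζ, map_smulₛₗ, map_add, J_Y hp g dh0, J_Y hp g d0h, J_J hp g, star_half, star_zero, add_comm, starRingEnd_apply, star_half]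
  refine ⟨ζ, h1, ?_⟩
  have h3 := J_Y hp g dh0 ζ
  rw [star_half, star_zero, h1, h2] at h3
  exact h3.symm

lemma zeta (hc : IsCyclicVector (A : Set (H →L[ℂ] H)) Ω)
    (hs : IsCyclicVector (A.commutant : Set (H →L[ℂ] H)) Ω) {b : H →L[ℂ] H} (hb : b ∈ A) :
    ∃ ζ, Y (RR A Ω) (1/2) 0 ζ = b Ω ∧ Y (RR A Ω) 0 (1/2) ζ = Jop (PP A Ω) (star b Ω) := by
  have g := RR_good hc hs
  have hp := PP_proj A Ω
  obtain ⟨b1, h1, b2, h2, s1, s2, e, e'⟩ := vn_decomp hb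
  obtain ⟨z1, p1, q1⟩ := zeta_of_fix hp g (PP_sa (Ω := Ω) h1 s1)
  obtain ⟨z2, p2, q2⟩ := zeta_of_fix hp g (PP_sa (Ω := Ω) h2 s2)
  refine ⟨z1 + I • z2, ?_, ?_⟩
  · rw [map_add, map_smul, p1, p2, e]; rfl
  · rw [map_add, map_smul, q1, q2, e', sub_apply, smul_apply, map_sub, map_smulₛₗ]
    simp

/-- `Y(0,1/2) cΩ = Y(1/2,0) J c* Ω` -/
lemma swap (hc : IsCyclicVector (A : Set (H →L[ℂ] H)) Ω)
    (hs : IsCyclicVector (A.commutant : Set (H →L[ℂ] H)) Ω) {c : H →L[ℂ] H} (h : c ∈ A) :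
    Y (RR A Ω) 0 (1/2) (c Ω) = Y (RR A Ω) (1/2) 0 (Jop (PP A Ω) (star c Ω)) := by
  have g := RR_good hc hs
  obtain ⟨ζ, h1, h2⟩ := zeta hc hs h
  rw [← h1, ← h2, Y_apply g d0h dh0 (by norm_num [Dom]), Y_apply g dh0 d0h (by norm_num [Dom])]
  simp

lemma sig_star {R : H →L[ℂ] H} (g : Good R) (t : ℝ) (a : H →L[ℂ] H) : star (sig R t a) = sig R t (star a) := by
  unfold sig
  rw [star_mul, star_mul, Dt_star g, Dt_star g, neg_neg, mul_assoc]

lemma sig_fix {R : H →L[ℂ] H} (g : Good R) (hΩ : R Ω = Ω) (t : ℝ) (a : H →L[ℂ] H) :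
    sig R t a Ω = Dt R t (a Ω) := by
  rw [sig_apply, Dt_fix g hΩ]

lemma cJ_vec (hc : IsCyclicVector (A : Set (H →L[ℂ] H)) Ω)
    (hs : IsCyclicVector (A.commutant : Set (H →L[ℂ] H)) Ω) {a : H →L[ℂ] H}
    (ha : ∀ t, sig (RR A Ω) t a ∈ A) {b : H →L[ℂ] H} (hb : b ∈ A) :
    a (Jop (PP A Ω) (b Ω)) = Jop (PP A Ω) (b (Jop (PP A Ω) (a Ω))) := by
  have g := RR_good hc hs
  have hp := PP_proj A Ω
  set R := RR A Ω with hR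
  set J := Jop (PP A Ω) with hJ
  have hRΩ : R Ω = Ω := R_fix
  have ha0 : a ∈ A := by
    have := ha 0
    have e : sig R 0 a = a := by
      ext v; rw [sig_apply, neg_zero, Dt_zero g, Dt_zero g]
    rwa [e] at this
  obtain ⟨ζa, a1, a2⟩ := zeta hc hs (vn_star ha0)
  obtain ⟨ζb, b1, b2⟩ := zeta hc hs (vn_star hb)
  rw [star_star] at a2 b2
  suffices hh : ∀ v, ⟪v, Y R (1/2) 0 (a (J (b Ω)))⟫ = ⟪v, Y R (1/2) 0 (J (b (J (a Ω))))⟫ by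
    have h1 := ext_inner_left ℂ hh
    have h2 := congrArg (Y R (1/2) 0) h1
    rw [Y_apply g dh0 dh0 (by norm_num [Dom]), Y_apply g dh0 dh0 (by norm_num [Dom])] at h2
    have q : ((1:ℂ)/2 + 1/2) = 1 := by norm_num
    rw [q, add_zero, Y_one_zero g] at h2
    have h3 := g.inj (a (J (b Ω)) - J (b (J (a Ω)))) (by rw [map_sub, h2, sub_self])
    exact sub_eq_zero.1 h3
  intro v
  have dm1 : ∀ w : ℂ, 0 ≤ w.re → w.re ≤ 1/2 → Dom w (1/2 - w) := by
    intro w h0 h1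
    simp [Dom]
    refine ⟨⟨?_, ?_⟩, ?_, ?_⟩ <;> linarith
  have dm2 : ∀ w : ℂ, 0 ≤ w.re → w.re ≤ 1/2 → Dom (1/2 - w) w := fun w h0 h1 => ⟨(dm1 w h0 h1).2, (dm1 w h0 h1).1⟩
  set v' := star b (J (Y R (1/2) 0 v)) with hv'
  -- the second function
  have f2 : ∀ w : ℂ, 0 ≤ w.re → w.re ≤ 1/2 → ⟪ζa, Y R (1/2 - w) w v'⟫ =
      ⟪v, Y R (1/2) 0 (J (b (Y R (1/2 - star w) (star w) ζa)))⟫ := by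
    intro w h0 h1
    have d := dm2 (star w) (by simpa using h0) (by simpa using h1)
    have y1 := Y_inner g dh0 v (J (b (Y R (1/2 - star w) (star w) ζa)))
    rw [star_half, star_zero] at y1
    rw [← y1, J_symm hp g, hv', ← star_inner_right, Y_inner g d, star_sub, star_half, star_star]
  have hz := strip_zero (f := fun w => ⟪v, Y R w (1/2 - w) (a (Y R (1/2 - w) w ζb))⟫ - ⟪ζa, Y R (1/2 - w) w v'⟫)
    (M := ‖v‖ * (4 * (‖a‖ * (4 * ‖ζb‖))) + ‖ζa‖ * (4 * ‖v'‖)) ?_ ?_ ?_ ?_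
  · have h2 := sub_eq_zero.1 hz
    rw [f2 (1/2) (by norm_num) (by norm_num), star_half, sub_self, b2, a2] at h2
    exact h2
  · refine ContinuousOn.sub ?_ ?_
    · refine ContinuousOn.inner continuousOn_const ?_
      refine Y_contOn g (fun w hw => dm1 w hw.1 hw.2) (by fun_prop) (by fun_prop) ?_
      refine a.continuous.comp_continuousOn ?_
      exact Y_contOn g (fun w hw => dm2 w hw.1 hw.2) (by fun_prop) (by fun_prop) continuousOn_const
    · refine ContinuousOn.inner continuousOn_const ?_
      exact Y_contOn g (fun w hw => dm2 w hw.1 hw.2) (by fun_prop) (by fun_prop) continuousOn_const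
  · have ho : IsOpen {w : ℂ | 0 < w.re ∧ w.re < 1/2} :=
      (isOpen_lt continuous_const continuous_re).inter (isOpen_lt continuous_re continuous_const)
    refine DifferentiableOn.sub ?_ ?_
    · refine (innerSL ℂ v).differentiable.comp_differentiableOn (f := fun w => Y R w (1/2 - w) (a (Y R (1/2 - w) w ζb))) ?_
      refine Y_diffOn g ho (fun w hw => dm1 w hw.1.le hw.2.le) (by fun_prop) (by fun_prop) ?_
      refine a.differentiable.comp_differentiableOn ?_
      exact Y_diffOn g ho (fun w hw => dm2 w hw.1.le hw.2.le) (by fun_prop) (by fun_prop) (differentiableOn_const _)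
    · refine (innerSL ℂ ζa).differentiable.comp_differentiableOn (f := fun w => Y R (1/2 - w) w v') ?_
      exact Y_diffOn g ho (fun w hw => dm2 w hw.1.le hw.2.le) (by fun_prop) (by fun_prop) (differentiableOn_const _)
  · intro w h0 h1
    refine (norm_sub_le _ _).trans (add_le_add ?_ ?_)
    · refine (norm_inner_le_norm _ _).trans ?_
      gcongr
      refine (Y_norm g (dm1 w h0 h1) _).trans ?_
      gcongr
      refine (a.le_opNorm _).trans ?_
      gcongr
      exact Y_norm g (dm2 w h0 h1) _
    · refine (norm_inner_le_norm _ _).trans ?_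
      gcongr
      exact Y_norm g (dm2 w h0 h1) _
  · intro w hw
    show _ - _ = _
    rw [f2 w hw.ge (by rw [hw]; norm_num), sub_eq_zero]
    obtain ⟨τ, rfl⟩ : ∃ τ : ℝ, w = I * τ := ⟨w.im, by apply Complex.ext <;> simp [hw]⟩
    have k1 := Dt_Y g τ dh0 ζb
    rw [b1] at k1
    have k2 := Y_Dt g (-τ) d0h (a (Dt R τ (star b Ω)))
    have k3 := Dt_Y g (-τ) dh0 ζa
    rw [a1] at k3
    have q1 : (0:ℂ) - I * ((-τ : ℝ):ℂ) = I * τ := by push_cast; ring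
    have q2 : (1/2:ℂ) + I * ((-τ : ℝ):ℂ) = 1/2 - I * τ := by push_cast; ring
    have q3 : (1/2:ℂ) - I * ((-τ : ℝ):ℂ) = 1/2 - star (I * (τ:ℂ)) := by simp
    have q4 : (0:ℂ) + I * ((-τ : ℝ):ℂ) = star (I * (τ:ℂ)) := by simp
    rw [zero_add] at k1
    rw [q1, q2] at k2
    rw [q3, q4] at k3
    rw [← k1, ← k2, ← k3]
    have sw := swap hc hs (vn_mul (ha (-τ)) (vn_star hb))
    rw [star_mul, star_star, sig_star g, ← hR] at sw
    simp only [mul_apply_eq_comp] at sw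
    rw [sig_fix g hRΩ, sig_apply, neg_neg] at sw
    rw [sw]

lemma cJ_mem (hc : IsCyclicVector (A : Set (H →L[ℂ] H)) Ω)
    (hs : IsCyclicVector (A.commutant : Set (H →L[ℂ] H)) Ω) {a : H →L[ℂ] H}
    (ha : ∀ t, sig (RR A Ω) t a ∈ A) : ∀ c ∈ A, ∀ v, cJ (PP A Ω) a (c v) = c (cJ (PP A Ω) a v) := by
  have g := RR_good hc hs
  have hp := PP_proj A Ω
  intro c hcA v
  have key : ∀ b ∈ A, cJ (PP A Ω) a (b Ω) = b (Jop (PP A Ω) (a Ω)) := by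
    intro b hb
    rw [cJ_apply, cJ_vec hc hs ha hb, J_J hp g]
  refine cyc_ext hc (f := fun v => cJ (PP A Ω) a (c v)) (g := fun v => c (cJ (PP A Ω) a v)) (by fun_prop) (by fun_prop) ?_ v
  intro b hb
  show _ = c (cJ (PP A Ω) a (b Ω))
  rw [key b hb]
  exact key (c * b) (vn_mul hcA hb)

lemma sig_add {R : H →L[ℂ] H} (g : Good R) (s t : ℝ) (a : H →L[ℂ] H) : sig R s (sig R t a) = sig R (s + t) a := by
  ext v
  rw [sig_apply, sig_apply, sig_apply, Dt_add g, Dt_add g]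
  congr 4
  ring_nf

lemma sig_comm (hc : IsCyclicVector (A : Set (H →L[ℂ] H)) Ω)
    (hs : IsCyclicVector (A.commutant : Set (H →L[ℂ] H)) Ω) {x : H →L[ℂ] H} (hx : x ∈ A.commutant) (t : ℝ) :
    ∀ c ∈ A, ∀ v, sig (RR A Ω) t x (c v) = c (sig (RR A Ω) t x v) := by
  have g := RR_good hc hs
  have hp := PP_proj A Ω
  have e : cJ (PP A Ω) (sig (RR A Ω) t (cJ (PP A Ω) x)) = sig (RR A Ω) t x := by
    ext v
    rw [cJ_apply, sig_apply, cJ_apply, J_Dt hp g, J_J hp g, J_Dt hp g, J_J hp g, sig_apply]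
  rw [← e]
  refine cJ_mem hc hs fun s => ?_
  rw [sig_add g]
  exact sig_cJ hc hs hx _

lemma sig_mem (hc : IsCyclicVector (A : Set (H →L[ℂ] H)) Ω)
    (hs : IsCyclicVector (A.commutant : Set (H →L[ℂ] H)) Ω) {a : H →L[ℂ] H} (ha : a ∈ A) (t : ℝ) :
    sig (RR A Ω) t a ∈ A := by
  have g := RR_good hc hs
  apply vn_of_comm
  intro x hx
  ext v
  have h := sig_comm hc hs hx (-t) a ha (Dt (RR A Ω) (-t) v)
  rw [sig_apply, sig_apply, neg_neg, Dt_neg g] at h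
  have h2 := congrArg (Dt (RR A Ω) t) h
  rw [Dt_neg g] at h2
  exact h2

end P11
end TT

namespace TT
section P12
set_option linter.all false
open Complex Set Filter Topology MeasureTheory

variable {A : VonNeumannAlgebra H} {Ω : H}

lemma U_group (hc : IsCyclicVector (A : Set (H →L[ℂ] H)) Ω)
    (hs : IsCyclicVector (A.commutant : Set (H →L[ℂ] H)) Ω) :
    IsOneParamUnitaryGroup (fun t => Dt (RR A Ω) (-t)) := by
  have g := RR_good hc hs
  refine ⟨fun t => ?_, ?_, ?_, ?_⟩
  · rw [Unitary.mem_iff, Dt_star g, neg_neg]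
    exact ⟨by ext v; exact Dt_neg g t v, by ext v; exact Dt_neg' g t v⟩
  · ext v; simp [Dt_zero g]
  · intro s t; ext v
    show _ = Dt (RR A Ω) (-s) (Dt (RR A Ω) (-t) v)
    rw [Dt_add g]; congr 2; ring
  · intro x
    exact (Dt_cont g x).comp continuous_neg

lemma kms (hc : IsCyclicVector (A : Set (H →L[ℂ] H)) Ω)
    (hs : IsCyclicVector (A.commutant : Set (H →L[ℂ] H)) Ω) {a b : H →L[ℂ] H} (ha : a ∈ A) (hb : b ∈ A) :
    ∃ F : ℂ → ℂ, (∃ M : ℝ, ∀ z ∈ unitStrip, ‖F z‖ ≤ M) ∧ ContinuousOn F unitStrip ∧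
      DifferentiableOn ℂ F (interior unitStrip) ∧
      (∀ t : ℝ, F (I * t) = ⟪Ω, a (Dt (RR A Ω) t (b Ω))⟫) ∧
      (∀ t : ℝ, F (1 + I * t) = ⟪Ω, b (Dt (RR A Ω) (-t) (a Ω))⟫) := by
  have g := RR_good hc hs
  have hp := PP_proj A Ω
  obtain ⟨ζa, a1, a2⟩ := zeta hc hs (vn_star ha)
  obtain ⟨ζb, b1, b2⟩ := zeta hc hs hb
  rw [star_star] at a2
  have dm : ∀ z ∈ unitStrip, Dom (1 - z) z := by
    intro z hz
    have h1 : 0 ≤ z.re := hz.1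
    have h2 : z.re ≤ 1 := hz.2
    simp [Dom]
    refine ⟨⟨?_, ?_⟩, ?_, ?_⟩ <;> linarith
  refine ⟨fun z => ⟪ζa, Y (RR A Ω) (1 - z) z ζb⟫, ⟨‖ζa‖ * (4 * ‖ζb‖), ?_⟩, ?_, ?_, ?_, ?_⟩
  · intro z hz
    refine (norm_inner_le_norm _ _).trans ?_
    gcongr
    exact Y_norm g (dm z hz) _
  · refine ContinuousOn.inner continuousOn_const ?_
    exact Y_contOn g dm (by fun_prop) (by fun_prop) continuousOn_const
  · refine (innerSL ℂ ζa).differentiable.comp_differentiableOn (f := fun z => Y (RR A Ω) (1 - z) z ζb) ?_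
    exact Y_diffOn g isOpen_interior (fun z hz => dm z (interior_subset hz)) (by fun_prop) (by fun_prop)
      (differentiableOn_const _)
  · intro t
    have e : ⟪Ω, a (Dt (RR A Ω) t (b Ω))⟫ = ⟪Y (RR A Ω) (1/2) 0 ζa, Dt (RR A Ω) t (Y (RR A Ω) (1/2) 0 ζb)⟫ := by
      rw [a1, b1, star_inner_left]
    rw [e, Y_inner g dh0, star_half, star_zero, Dt_Y g t dh0, Y_apply g dh0 (by norm_num [Dom]) (by norm_num [Dom])]
    have q1 : (1/2:ℂ) + (1/2 - I * t) = 1 - I * t := by ring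
    rw [q1, zero_add, zero_add]
  · intro t
    have e : ⟪Ω, b (Dt (RR A Ω) (-t) (a Ω))⟫ = ⟪Y (RR A Ω) 0 (1/2) ζa, Dt (RR A Ω) t (Y (RR A Ω) 0 (1/2) ζb)⟫ := by
      rw [a2, b2, J_inner hp g, J_Dt hp g, J_J hp g, Dt_inner g, star_inner_left]
    rw [e, Y_inner g d0h, star_half, star_zero, Dt_Y g t d0h, Y_apply g d0h (by norm_num [Dom]) (by norm_num [Dom])]
    have q1 : (1/2:ℂ) + (1/2 + I * t) = 1 + I * t := by ring
    have q2 : (0:ℂ) + (0 - I * t) = 1 - (1 + I * t) := by ring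
    rw [q1, q2]

end P12
end TT

/-- **Tomita's theorem combined with the modular KMS theorem.**
If `Ω` is cyclic and separating for the von Neumann algebra `A`, then there exists a
strongly continuous one-parameter unitary group `U` such that `(A, Ω, U)` satisfies the
KMS condition at inverse temperature `β = 1`. -/
theorem exists_kms_unitary_group
    (A : VonNeumannAlgebra H) (Ω : H)
    (hcyc : IsCyclicVector (A : Set (H →L[ℂ] H)) Ω)
    (hsep : IsCyclicVector (A.commutant : Set (H →L[ℂ] H)) Ω) :
    ∃ U : ℝ → (H →L[ℂ] H), IsOneParamUnitaryGroup U ∧ SatisfiesKMS A Ω U := by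
  have g := TT.RR_good hcyc hsep
  refine ⟨fun t => TT.Dt (TT.RR A Ω) (-t), TT.U_group hcyc hsep, fun t => TT.Dt_fix g TT.R_fix _,
    fun t a ha => TT.sig_mem hcyc hsep ha (-t), fun a ha b hb => ?_⟩
  obtain ⟨F, h1, h2, h3, h4, h5⟩ := TT.kms hcyc hsep ha hb
  exact ⟨F, h1, h2, h3, fun t => by simp only [h4 t, neg_neg], h5⟩
end
end

section
/- Let H be a complex Hilbert space, 𝒜 a von Neumann algebra on H, and Ω ∈ H a vector that is cyclic and separating for 𝒜. If U and V are strongly continuous one-parameter unitary groups on H such that both triples (𝒜, Ω, U) and (𝒜, Ω, V) satisfy the KMS condition at inverse temperature β = 1, then U(t) = V(t) for every t ∈ ℝ. (Uniqueness of the thermal arrow of time: any Hamiltonian satisfying the KMS condition must generate the modular flow.) -/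
open scoped ComplexInnerProductSpace

noncomputable section

variable {H : Type*} [NormedAddCommGroup H] [InnerProductSpace ℂ H] [CompleteSpace H]

open MeasureTheory Filter Topology Complex

/-- Boundary values of a bounded holomorphic function on the unit strip. -/
def KStripPair (p q : ℝ → ℂ) : Prop := ∃ F : ℂ → ℂ,
    (∃ M : ℝ, ∀ z ∈ unitStrip, ‖F z‖ ≤ M) ∧
    ContinuousOn F unitStrip ∧
    DifferentiableOn ℂ F (interior unitStrip) ∧
    (∀ t : ℝ, F (Complex.I * (t : ℂ)) = p t) ∧
    (∀ t : ℝ, F (1 + Complex.I * (t : ℂ)) = q t)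

/-- Gaussian kernel. -/
def kker (n : ℝ) (ζ : ℂ) (t : ℝ) : ℂ := cexp (n * (I * t - ζ) ^ 2)

lemma kker_norm (n : ℝ) (ζ : ℂ) (t : ℝ) :
    ‖kker n ζ t‖ = Real.exp (n * (ζ.re ^ 2 - (t - ζ.im) ^ 2)) := by
  unfold kker
  rw [Complex.norm_exp]
  congr 1
  simp [pow_two]

lemma kker_continuous (n : ℝ) (ζ : ℂ) : Continuous (kker n ζ) := by
  unfold kker; fun_prop

lemma kker_integrable {n : ℝ} (hn : 0 < n) (ζ : ℂ) : Integrable (kker n ζ) := by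
  have := integrable_cexp_quadratic' (b := -(n : ℂ)) (by simpa using hn)
    (-2 * n * I * ζ) (n * ζ ^ 2)
  refine this.congr (ae_of_all _ fun t => ?_)
  simp only [kker]
  congr 1
  linear_combination (-n * t ^ 2 : ℂ) * I_sq

lemma strip_cont {p q : ℝ → ℂ} (h : KStripPair p q) :
    Continuous p ∧ Continuous q ∧ ∃ M, (∀ t, ‖p t‖ ≤ M) ∧ ∀ t, ‖q t‖ ≤ M := by
  obtain ⟨F, ⟨M, hM⟩, hc, -, hp, hq⟩ := h
  have m0 : ∀ t : ℝ, I * (t : ℂ) ∈ unitStrip := fun t => by simp [unitStrip]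
  have m1 : ∀ t : ℝ, 1 + I * (t : ℂ) ∈ unitStrip := fun t => by simp [unitStrip]
  refine ⟨?_, ?_, M, fun t => hp t ▸ hM _ (m0 t), fun t => hq t ▸ hM _ (m1 t)⟩
  · rw [← funext hp]
    exact hc.comp_continuous (by fun_prop) m0
  · rw [← funext hq]
    exact hc.comp_continuous (by fun_prop) m1

lemma horiz_tendsto {n : ℝ} (hn : 0 < n) (ζ : ℂ) (F : ℂ → ℂ) (M : ℝ)
    (hM : ∀ z ∈ unitStrip, ‖F z‖ ≤ M) (s : ℝ) (hs : s = 1 ∨ s = -1) :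
    Tendsto (fun R : ℝ => ∫ x : ℝ in (0 : ℝ)..1,
      cexp (n * ((x + ((s * R : ℝ) : ℂ) * I) - ζ) ^ 2) * F (x + ((s * R : ℝ) : ℂ) * I))
      atTop (𝓝 0) := by
  have hM0 : 0 ≤ M := (norm_nonneg _).trans (hM 0 (by simp [unitStrip]))
  have hb : ∀ R : ℝ, ‖∫ x : ℝ in (0 : ℝ)..1,
      cexp (n * ((x + ((s * R : ℝ) : ℂ) * I) - ζ) ^ 2) * F (x + ((s * R : ℝ) : ℂ) * I)‖ ≤
      Real.exp (n * ((1 + |ζ.re|) ^ 2 - (s * R - ζ.im) ^ 2)) * M := by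
    intro R
    refine (intervalIntegral.norm_integral_le_of_norm_le_const (C :=
      Real.exp (n * ((1 + |ζ.re|) ^ 2 - (s * R - ζ.im) ^ 2)) * M) ?_).trans (by simp)
    intro x hx
    rw [Set.uIoc_of_le zero_le_one] at hx
    rw [norm_mul, Complex.norm_exp]
    refine mul_le_mul (Real.exp_le_exp.2 ?_) (hM _ ?_) (norm_nonneg _) (Real.exp_nonneg _)
    · have : ((n : ℂ) * ((x + ((s * R : ℝ) : ℂ) * I) - ζ) ^ 2).re
          = n * ((x - ζ.re) ^ 2 - (s * R - ζ.im) ^ 2) := by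
        simp [pow_two]
      rw [this]
      have h1 : |x - ζ.re| ≤ |(1 + |ζ.re|)| := by
        rw [abs_of_nonneg (by positivity : 0 ≤ 1 + |ζ.re|)]
        refine (abs_sub _ _).trans ?_
        rw [abs_of_pos hx.1]; linarith [hx.2]
      have := sq_le_sq.2 h1
      gcongr
    · simp only [unitStrip, Set.mem_setOf_eq]
      simp
      exact ⟨hx.1.le, hx.2⟩
  refine squeeze_zero_norm hb ?_
  rw [← zero_mul M]
  refine Tendsto.mul_const M ?_
  refine Real.tendsto_exp_atBot.comp ?_
  refine Tendsto.const_mul_atBot hn ?_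
  refine tendsto_atBot_add_const_left _ _ (tendsto_neg_atTop_atBot.comp ?_)
  have : Tendsto (fun R : ℝ => (R - s * ζ.im) ^ 2) atTop atTop :=
    (tendsto_pow_atTop two_ne_zero).comp (tendsto_atTop_add_const_right _ _ tendsto_id)
  refine this.congr fun R => ?_
  rcases hs with rfl | rfl <;> ring

lemma strip_shift {n : ℝ} (hn : 0 < n) (ζ : ℂ) {p q : ℝ → ℂ} (h : KStripPair p q) :
    ∫ t, kker n (ζ + 1) t * p t = ∫ t, kker n ζ t * q t := by
  obtain ⟨cp, cq, M', hp', hq'⟩ := strip_cont h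
  obtain ⟨F, ⟨M, hM⟩, hc, hd, hp, hq⟩ := h
  have i1 : Integrable fun t => kker n (ζ + 1) t * p t :=
    (kker_integrable hn _).mul_bdd (c := M') cp.aestronglyMeasurable (ae_of_all _ hp')
  have i2 : Integrable fun t => kker n ζ t * q t :=
    (kker_integrable hn _).mul_bdd (c := M') cq.aestronglyMeasurable (ae_of_all _ hq')
  have t1 := intervalIntegral_tendsto_integral i1 tendsto_neg_atTop_atBot tendsto_id
  have t2 := intervalIntegral_tendsto_integral i2 tendsto_neg_atTop_atBot tendsto_id
  have t3 := horiz_tendsto hn (ζ + 1) F M hM (-1) (Or.inr rfl)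
  have t4 := horiz_tendsto hn (ζ + 1) F M hM 1 (Or.inl rfl)
  have key := ((t3.sub t4).add (t2.const_smul I)).sub (t1.const_smul I)
  have e1 : ∀ R : ℝ, ∫ y in -R..id R, kker n ζ y * q y =
      ∫ y : ℝ in (-1 * R)..(1 * R), cexp (n * ((((1 : ℝ) : ℂ) + y * I) - (ζ + 1)) ^ 2) *
        F (((1 : ℝ) : ℂ) + y * I) := by
    intro R
    simp only [neg_mul, one_mul, id]
    refine intervalIntegral.integral_congr fun y _ => ?_
    simp only [kker, ← hq]
    congr 2
    · push_cast; ring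
    · push_cast; ring
  have e2 : ∀ R : ℝ, ∫ y in -R..id R, kker n (ζ + 1) y * p y =
      ∫ y : ℝ in (-1 * R)..(1 * R), cexp (n * ((((0 : ℝ) : ℂ) + y * I) - (ζ + 1)) ^ 2) *
        F (((0 : ℝ) : ℂ) + y * I) := by
    intro R
    simp only [neg_mul, one_mul, id]
    refine intervalIntegral.integral_congr fun y _ => ?_
    simp only [kker, ← hp]
    congr 2
    · push_cast; ring
    · push_cast; ring
  simp only [e1, e2] at key
  have this := tendsto_nhds_unique ((tendsto_congr fun R : ℝ => ?_).1
    (tendsto_const_nhds (x := (0 : ℂ)))) key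
  · simp only [sub_zero, zero_add, smul_eq_mul] at this
    have h2 := sub_eq_zero.1 this.symm
    exact (mul_left_cancel₀ I_ne_zero h2).symm
  · refine (integral_boundary_rect_eq_zero_of_continuousOn_of_differentiableOn
      (fun z => cexp (n * (z - (ζ + 1)) ^ 2) * F z) (⟨0, -1 * R⟩ : ℂ) ⟨1, 1 * R⟩ ?_ ?_).symm
    · refine ContinuousOn.mul (by fun_prop) (hc.mono ?_)
      intro z hz
      have := hz.1
      simpa [unitStrip] using this
    · refine DifferentiableOn.mul (by fun_prop) (hd.mono ?_)
      refine interior_maximal ?_ (isOpen_Ioo.reProdIm isOpen_Ioo)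
      intro z hz
      have := hz.1
      simp at this
      exact ⟨this.1.le, this.2.le⟩

/-- Dominating function. -/
def kdom (n r t : ℝ) : ℝ := Real.exp (|t| + r + n * (r ^ 2 - t ^ 2 + 2 * r * |t|))

lemma kdom_integrable {n : ℝ} (hn : 0 < n) (r : ℝ) : Integrable (kdom n r) := by
  have h : ∀ c : ℝ, Integrable fun t : ℝ => Real.exp (-n * t ^ 2 + c * t + (r + n * r ^ 2)) := by
    intro c
    have := (integrable_cexp_quadratic' (b := -(n : ℂ)) (by simpa using hn) c
      ((r + n * r ^ 2 : ℝ) : ℂ)).norm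
    refine this.congr (ae_of_all _ fun t => ?_)
    simp only [Complex.norm_exp]
    congr 1
    simp [pow_two]
  refine ((h (1 + 2 * n * r)).add (h (-(1 + 2 * n * r)))).mono'
    (by unfold kdom; exact Continuous.aestronglyMeasurable (by fun_prop)) (ae_of_all _ fun t => ?_)
  simp only [kdom, Real.norm_eq_abs, Real.abs_exp, Pi.add_apply]
  rcases abs_cases t with ⟨e, -⟩ | ⟨e, -⟩ <;> rw [e]
  · refine le_add_of_le_of_nonneg (Real.exp_le_exp.2 (le_of_eq ?_)) (Real.exp_nonneg _)
    ring
  · refine le_add_of_nonneg_of_le (Real.exp_nonneg _) (Real.exp_le_exp.2 (le_of_eq ?_))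
    ring

lemma kker_le_kdom {n : ℝ} (hn : 0 < n) (r : ℝ) (ζ : ℂ) (hζ : ‖ζ‖ ≤ r) (t : ℝ) :
    ‖kker n ζ t‖ * Real.exp (|t| + r) ≤ kdom n r t := by
  rw [kker_norm, ← Real.exp_add, kdom]
  refine Real.exp_le_exp.2 ?_
  have h1 : ζ.re ^ 2 ≤ r ^ 2 := sq_le_sq.2 ((abs_re_le_norm ζ).trans (hζ.trans (le_abs_self r)))
  have h2 : t * ζ.im ≤ r * |t| := by
    calc t * ζ.im ≤ |t * ζ.im| := le_abs_self _
      _ = |t| * |ζ.im| := abs_mul _ _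
      _ ≤ |t| * r := by gcongr; exact (abs_im_le_norm ζ).trans hζ
      _ = _ := mul_comm _ _
  have : n * (ζ.re ^ 2 - (t - ζ.im) ^ 2) ≤ n * (r ^ 2 - t ^ 2 + 2 * r * |t|) := by
    gcongr
    nlinarith [sq_nonneg ζ.im]
  linarith

section core
variable {P Q : ℝ × ℝ → ℂ} {M : ℝ}

/-- Smoothed function. -/
def ksm (n : ℝ) (P : ℝ × ℝ → ℂ) (ζ : ℂ) : ℂ :=
  ∫ x : ℝ × ℝ, kker n ζ x.1 * kker n ζ x.2 * P x

lemma kint {n : ℝ} (hn : 0 < n) (cP : Continuous P) (hP : ∀ x, ‖P x‖ ≤ M) (ζ η : ℂ) :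
    Integrable (fun x : ℝ × ℝ => kker n ζ x.1 * kker n η x.2 * P x) (volume.prod volume) :=
  ((kker_integrable hn ζ).mul_prod (kker_integrable hn η)).mul_bdd (c := M)
    cP.aestronglyMeasurable (ae_of_all _ hP)

lemma ksm_periodic {n : ℝ} (hn : 0 < n) (cP : Continuous P) (hP : ∀ x, ‖P x‖ ≤ M)
    (cQ : Continuous Q) (hQ : ∀ x, ‖Q x‖ ≤ M)
    (h1 : ∀ σ, KStripPair (fun τ => P (σ, τ)) (fun τ => Q (σ, τ)))
    (h2 : ∀ τ, KStripPair (fun σ => Q (σ, τ)) (fun σ => P (σ, τ))) (ζ : ℂ) :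
    ksm n P (ζ + 1) = ksm n P ζ := by
  unfold ksm
  rw [Measure.volume_eq_prod, integral_prod _ (kint hn cP hP _ _),
    integral_prod_symm _ (kint hn cP hP ζ ζ)]
  have e1 : ∀ σ, ∫ τ, kker n (ζ + 1) σ * kker n (ζ + 1) τ * P (σ, τ) =
      ∫ τ, kker n (ζ + 1) σ * kker n ζ τ * Q (σ, τ) := by
    intro σ
    simp only [mul_assoc]
    rw [integral_const_mul, integral_const_mul, strip_shift hn ζ (h1 σ)]
  have e2 : ∀ τ, ∫ σ, kker n (ζ + 1) σ * kker n ζ τ * Q (σ, τ) =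
      ∫ σ, kker n ζ σ * kker n ζ τ * P (σ, τ) := by
    intro τ
    simp only [mul_comm _ (kker n ζ τ)]
    simp only [mul_assoc]
    rw [integral_const_mul, integral_const_mul, strip_shift hn ζ (h2 τ)]
  simp only [e1]
  rw [integral_integral_swap (f := fun σ τ => kker n (ζ + 1) σ * kker n ζ τ * Q (σ, τ))
    (kint hn cQ hQ _ _)]
  simp only [e2]

lemma ksm_differentiable {n : ℝ} (hn : 0 < n) (cP : Continuous P) (hP : ∀ x, ‖P x‖ ≤ M) :
    Differentiable ℂ (ksm n P) := by
  intro ζ₀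
  have hM0 : 0 ≤ M := (norm_nonneg _).trans (hP 0)
  set r := ‖ζ₀‖ + 1 with hr
  have hr0 : 0 ≤ r := by positivity
  refine (hasDerivAt_integral_of_dominated_loc_of_deriv_le (μ := volume) (s := Metric.ball ζ₀ 1)
    (F := fun ζ (x : ℝ × ℝ) => kker n ζ x.1 * kker n ζ x.2 * P x)
    (F' := fun ζ x => (-2 * n) * ((I * x.1 - ζ) + (I * x.2 - ζ)) *
      (kker n ζ x.1 * kker n ζ x.2 * P x))
    (bound := fun x => (2 * n * M) * (kdom n r x.1 * kdom n r x.2))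
    (Metric.ball_mem_nhds _ one_pos) ?_ (kint hn cP hP _ _) ?_ ?_ ?_ ?_).2.differentiableAt
  · refine Eventually.of_forall fun ζ => (kint hn cP hP ζ ζ).1
  · refine Continuous.aestronglyMeasurable ?_
    have := kker_continuous n ζ₀
    fun_prop
  · refine ae_of_all _ fun x ζ hζ => ?_
    have hζr : ‖ζ‖ ≤ r := by
      have := norm_le_norm_add_norm_sub' ζ ζ₀
      rw [Metric.mem_ball, dist_eq_norm] at hζ
      linarith
    have b1 := kker_le_kdom hn r ζ hζr x.1
    have b2 := kker_le_kdom hn r ζ hζr x.2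
    have b3 := mul_le_mul b1 b2 (by positivity) (by unfold kdom; positivity)
    have b4 : ‖(I * x.1 - ζ) + (I * x.2 - ζ)‖ ≤ Real.exp (|x.1| + r) * Real.exp (|x.2| + r) := by
      have c1 : ∀ t : ℝ, ‖I * t - ζ‖ ≤ |t| + r := fun t =>
        (norm_sub_le _ _).trans (by simpa using hζr)
      rw [← Real.exp_add]
      refine (norm_add_le _ _).trans (le_trans (add_le_add (c1 x.1) (c1 x.2)) ?_)
      linarith [Real.add_one_le_exp (|x.1| + r + (|x.2| + r))]
    calc _ = (2 * n) * ‖(I * x.1 - ζ) + (I * x.2 - ζ)‖ *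
          (‖kker n ζ x.1‖ * ‖kker n ζ x.2‖ * ‖P x‖) := by
            simp [abs_of_pos hn]
      _ ≤ (2 * n) * (Real.exp (|x.1| + r) * Real.exp (|x.2| + r)) *
          (‖kker n ζ x.1‖ * ‖kker n ζ x.2‖ * M) := by
            gcongr; exact hP x
      _ = (2 * n * M) * ((‖kker n ζ x.1‖ * Real.exp (|x.1| + r)) *
          (‖kker n ζ x.2‖ * Real.exp (|x.2| + r))) := by ring
      _ ≤ _ := by gcongr
  · exact ((kdom_integrable hn r).mul_prod (kdom_integrable hn r)).const_mul _
  · refine ae_of_all _ fun x ζ _ => ?_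
    have d : ∀ t : ℝ, HasDerivAt (fun ζ => kker n ζ t) (kker n ζ t * (n * (2 * (I * t - ζ) * (-1)))) ζ := by
      intro t
      unfold kker
      refine HasDerivAt.cexp (HasDerivAt.const_mul _ ?_)
      have := ((hasDerivAt_id ζ).const_sub (I * (t : ℂ))).pow 2
      simpa [Pi.pow_def] using this
    convert! ((d x.1).mul (d x.2)).mul_const (P x) using 1
    ring

lemma ksm_bounded {n : ℝ} (hn : 0 < n) (cP : Continuous P) (hP : ∀ x, ‖P x‖ ≤ M) (ζ : ℂ)
    (h0 : 0 ≤ ζ.re) (h1 : ζ.re ≤ 1) :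
    ‖ksm n P ζ‖ ≤ M * (∫ t : ℝ, Real.exp (n * (1 - t ^ 2))) ^ 2 := by
  have hM0 : 0 ≤ M := (norm_nonneg _).trans (hP 0)
  have b : ∀ t, ‖kker n ζ t‖ ≤ Real.exp (n * (1 - (t - ζ.im) ^ 2)) := by
    intro t
    rw [kker_norm]
    have : ζ.re ^ 2 ≤ 1 := by nlinarith
    gcongr
  have i : ∀ c : ℝ, Integrable fun t : ℝ => Real.exp (n * (1 - (t - c) ^ 2)) := by
    intro c
    refine (kker_integrable hn (1 + c * I)).norm.congr (ae_of_all _ fun t => ?_)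
    simp only [kker_norm]
    simp
  calc _ ≤ ∫ x : ℝ × ℝ, M * (Real.exp (n * (1 - (x.1 - ζ.im) ^ 2)) *
          Real.exp (n * (1 - (x.2 - ζ.im) ^ 2))) := by
        refine norm_integral_le_of_norm_le (((i _).mul_prod (i _)).const_mul M)
          (ae_of_all _ fun x => ?_)
        rw [norm_mul, norm_mul, mul_comm]
        gcongr
        · exact hP x
        · exact b _
        · exact b _
    _ = _ := by
        rw [integral_const_mul, Measure.volume_eq_prod,
          integral_prod_mul (fun t : ℝ => Real.exp (n * (1 - (t - ζ.im) ^ 2)))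
            (fun t : ℝ => Real.exp (n * (1 - (t - ζ.im) ^ 2))),
          integral_sub_right_eq_self (fun t : ℝ => Real.exp (n * (1 - t ^ 2))) ζ.im, pow_two]

lemma ksm_const {n : ℝ} (hn : 0 < n) (cP : Continuous P) (hP : ∀ x, ‖P x‖ ≤ M)
    (cQ : Continuous Q) (hQ : ∀ x, ‖Q x‖ ≤ M)
    (h1 : ∀ σ, KStripPair (fun τ => P (σ, τ)) (fun τ => Q (σ, τ)))
    (h2 : ∀ τ, KStripPair (fun σ => Q (σ, τ)) (fun σ => P (σ, τ))) (z w : ℂ) :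
    ksm n P z = ksm n P w := by
  refine (ksm_differentiable hn cP hP).apply_eq_apply_of_bounded ?_ z w
  rw [isBounded_iff_forall_norm_le]
  refine ⟨M * (∫ t : ℝ, Real.exp (n * (1 - t ^ 2))) ^ 2, ?_⟩
  rintro _ ⟨ζ, rfl⟩
  have per : Function.Periodic (ksm n P) 1 := ksm_periodic hn cP hP cQ hQ h1 h2
  have := per.sub_int_mul_eq (x := ζ) ⌊ζ.re⌋
  rw [← this]
  refine ksm_bounded hn cP hP _ ?_ ?_
  · simpa using Int.floor_le ζ.re
  · simpa using (Int.fract_lt_one ζ.re).le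

lemma core_diag (cP : Continuous P) (hP : ∀ x, ‖P x‖ ≤ M)
    (cQ : Continuous Q) (hQ : ∀ x, ‖Q x‖ ≤ M)
    (h1 : ∀ σ, KStripPair (fun τ => P (σ, τ)) (fun τ => Q (σ, τ)))
    (h2 : ∀ τ, KStripPair (fun σ => Q (σ, τ)) (fun σ => P (σ, τ))) (T : ℝ) :
    P (T, T) = P (0, 0) := by
  -- rescaled smoothing
  have resc : ∀ (k : ℝ), 0 < k → ∀ S : ℝ, ksm (k ^ 2) P (I * S) =
      (|(k⁻¹ ^ 2)| : ℝ) • ∫ x : ℝ × ℝ, kker 1 0 x.1 * kker 1 0 x.2 * P ((S, S) + k⁻¹ • x) := by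
    intro k hk S
    have hk' : (k : ℂ) ≠ 0 := by exact_mod_cast hk.ne'
    have e1 := integral_add_left_eq_self (μ := (volume : Measure (ℝ × ℝ)))
      (fun x : ℝ × ℝ => kker (k ^ 2) (I * S) x.1 * kker (k ^ 2) (I * S) x.2 * P x) (S, S)
    have e2 := Measure.integral_comp_smul (volume : Measure (ℝ × ℝ)) (fun x : ℝ × ℝ =>
      kker (k ^ 2) (I * S) ((S, S) + x).1 * kker (k ^ 2) (I * S) ((S, S) + x).2 * P ((S, S) + x)) k⁻¹
    have e3 : ∀ x : ℝ × ℝ, kker (k ^ 2) (I * S) ((S, S) + k⁻¹ • x).1 *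
        kker (k ^ 2) (I * S) ((S, S) + k⁻¹ • x).2 * P ((S, S) + k⁻¹ • x) =
        kker 1 0 x.1 * kker 1 0 x.2 * P ((S, S) + k⁻¹ • x) := by
      intro x
      have e4 : ∀ t : ℝ, kker (k ^ 2) (I * S) (S + k⁻¹ * t) = kker 1 0 t := by
        intro t
        unfold kker
        congr 1
        push_cast
        field_simp
        ring
      simp [e4]
    simp only [e3] at e2
    rw [e2, e1]
    simp only [Module.finrank_prod, Module.finrank_self]
    rw [ksm, smul_smul]
    norm_num
    field_simp
  have eq : ∀ k : ℝ, 0 < k →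
      ∫ x : ℝ × ℝ, kker 1 0 x.1 * kker 1 0 x.2 * P ((T, T) + k⁻¹ • x) =
      ∫ x : ℝ × ℝ, kker 1 0 x.1 * kker 1 0 x.2 * P (((0 : ℝ), (0 : ℝ)) + k⁻¹ • x) := by
    intro k hk
    have a := resc k hk T
    rw [ksm_const (by positivity) cP hP cQ hQ h1 h2 _ (I * (0 : ℝ)), resc k hk 0] at a
    have hne : |k⁻¹ ^ 2| ≠ 0 := by positivity
    exact (smul_right_injective ℂ hne a).symm
  have lim : ∀ S : ℝ, Tendsto (fun k : ℝ =>
      ∫ x : ℝ × ℝ, kker 1 0 x.1 * kker 1 0 x.2 * P ((S, S) + k⁻¹ • x)) atTop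
      (𝓝 (∫ x : ℝ × ℝ, kker 1 0 x.1 * kker 1 0 x.2 * P (S, S))) := by
    intro S
    have hi : Integrable (fun x : ℝ × ℝ => kker 1 0 x.1 * kker 1 0 x.2) (volume.prod volume) :=
      (kker_integrable one_pos 0).mul_prod (kker_integrable one_pos 0)
    refine tendsto_integral_filter_of_dominated_convergence
      (fun x => ‖kker 1 0 x.1 * kker 1 0 x.2‖ * M) ?_ ?_ (hi.norm.mul_const M) ?_
    · refine Eventually.of_forall fun k => ?_
      refine hi.1.mul (Continuous.aestronglyMeasurable ?_)
      fun_prop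
    · refine Eventually.of_forall fun k => ae_of_all _ fun x => ?_
      rw [norm_mul]
      gcongr
      exact hP _
    · refine ae_of_all _ fun x => ?_
      refine Tendsto.const_mul _ ((cP.tendsto _).comp ?_)
      have : Tendsto (fun k : ℝ => (S, S) + k⁻¹ • x) atTop (𝓝 ((S, S) + (0 : ℝ) • x)) :=
        tendsto_const_nhds.add (tendsto_inv_atTop_zero.smul_const x)
      simpa using this
  have fin := tendsto_nhds_unique ((lim T).congr' (by
    filter_upwards [eventually_gt_atTop 0] with k hk using eq k hk)) (lim 0)
  rw [integral_mul_const, integral_mul_const] at fin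
  refine mul_left_cancel₀ ?_ fin
  rw [Measure.volume_eq_prod, integral_prod_mul]
  have hg : ∫ t, kker 1 0 t = ((∫ t : ℝ, Real.exp (-1 * t ^ 2) : ℝ) : ℂ) := by
    rw [← integral_complex_ofReal]
    congr 1
    ext t
    simp [kker, mul_pow]
  rw [hg, integral_gaussian]
  have : √(Real.pi / 1) ≠ 0 := by positivity
  have : ((√(Real.pi / 1) : ℝ) : ℂ) ≠ 0 := by exact_mod_cast this
  exact mul_ne_zero this this

end core

lemma unitary_inner_fix {U : ℝ → (H →L[ℂ] H)} (hU : IsOneParamUnitaryGroup U) {Ω : H}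
    (hf : ∀ t, U t Ω = Ω) (t : ℝ) (x : H) : ⟪Ω, U t x⟫ = ⟪Ω, x⟫ := by
  conv_lhs => rw [← hf t]
  exact ContinuousLinearMap.inner_map_map_of_mem_unitary (hU.1 t) Ω x

lemma unitary_norm {U : ℝ → (H →L[ℂ] H)} (hU : IsOneParamUnitaryGroup U) (t : ℝ) (x : H) :
    ‖U t x‖ = ‖x‖ := ContinuousLinearMap.norm_map_of_mem_unitary (hU.1 t) x

lemma unitary_jcont {U : ℝ → (H →L[ℂ] H)} (hU : IsOneParamUnitaryGroup U) {X : Type*}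
    [TopologicalSpace X] {f : X → ℝ} {g : X → H} (hf : Continuous f) (hg : Continuous g) :
    Continuous fun p => U (f p) (g p) := by
  rw [continuous_iff_continuousAt]
  intro p
  have h1 : Tendsto (fun q => U (f q) (g q - g p)) (𝓝 p) (𝓝 0) := by
    rw [tendsto_zero_iff_norm_tendsto_zero]
    simp only [unitary_norm hU]
    have : Tendsto (fun q => g q - g p) (𝓝 p) (𝓝 0) := by
      simpa using (hg.tendsto p).sub_const (g p)
    simpa using this.norm
  have h2 := (((hU.2.2.2 (g p)).comp hf).tendsto p).add h1
  simpa [ContinuousAt] using h2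

/-- **Uniqueness of the thermal arrow of time.**
If `Ω` is cyclic and separating for the von Neumann algebra `A`, and `U`, `V` are strongly
continuous one-parameter unitary groups such that both `(A, Ω, U)` and `(A, Ω, V)` satisfy
the KMS condition at inverse temperature `β = 1`, then `U = V`. -/
theorem kms_unitary_group_unique
    (A : VonNeumannAlgebra H) (Ω : H)
    (hcyc : IsCyclicVector (A : Set (H →L[ℂ] H)) Ω)
    (hsep : IsCyclicVector (A.commutant : Set (H →L[ℂ] H)) Ω)
    (U V : ℝ → (H →L[ℂ] H))
    (hU : IsOneParamUnitaryGroup U) (hV : IsOneParamUnitaryGroup V)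
    (hUkms : SatisfiesKMS A Ω U) (hVkms : SatisfiesKMS A Ω V) :
    ∀ t : ℝ, U t = V t := by
  have main : ∀ a ∈ A, ∀ b ∈ A, ∀ T : ℝ, ⟪Ω, a (V T (U (-T) (b Ω)))⟫ = ⟪Ω, a (b Ω)⟫ := by
    intro a ha b hb T
    have key := core_diag (P := fun p : ℝ × ℝ => ⟪Ω, a (V p.1 (U (-p.2) (b Ω)))⟫)
      (Q := fun p : ℝ × ℝ => ⟪Ω, b (U p.2 (V (-p.1) (a Ω)))⟫)
      (M := ‖Ω‖ * (‖a‖ * ‖b Ω‖) + ‖Ω‖ * (‖b‖ * ‖a Ω‖)) ?_ ?_ ?_ ?_ ?_ ?_ T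
    · simpa [hU.2.1, hV.2.1] using key
    · refine continuous_const.inner (a.continuous.comp ?_)
      exact unitary_jcont hV continuous_fst (unitary_jcont hU (by fun_prop) continuous_const)
    · intro x
      refine (norm_inner_le_norm _ _).trans ?_
      refine le_add_of_le_of_nonneg ?_ (by positivity)
      gcongr
      refine (a.le_opNorm _).trans ?_
      rw [unitary_norm hV, unitary_norm hU]
    · refine continuous_const.inner (b.continuous.comp ?_)
      exact unitary_jcont hU continuous_snd (unitary_jcont hV (by fun_prop) continuous_const)
    · intro x
      refine (norm_inner_le_norm _ _).trans ?_
      refine le_add_of_nonneg_of_le (by positivity) ?_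
      gcongr
      refine (b.le_opNorm _).trans ?_
      rw [unitary_norm hU, unitary_norm hV]
    · intro σ
      obtain ⟨F, hM, hc, hd, h0, h1⟩ :=
        hUkms.2.2 _ (hVkms.2.1 (-σ) a ha) b hb
      refine ⟨F, hM, hc, hd, fun t => ?_, fun t => ?_⟩
      · rw [h0]
        simp [unitary_inner_fix hV hVkms.1]
      · rw [h1]
        simp [hVkms.1]
    · intro τ
      obtain ⟨F, hM, hc, hd, h0, h1⟩ :=
        hVkms.2.2 _ (hUkms.2.1 (-τ) b hb) a ha
      refine ⟨F, hM, hc, hd, fun t => ?_, fun t => ?_⟩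
      · rw [h0]
        simp [unitary_inner_fix hU hUkms.1]
      · rw [h1]
        simp [hUkms.1]
  have fixv : ∀ T : ℝ, ∀ b ∈ A, V T (U (-T) (b Ω)) = b Ω := by
    intro T b hb
    refine Dense.eq_of_inner_right ℂ hcyc ?_
    rintro _ ⟨a, ha, rfl⟩
    have := main (star a) (star_mem ha) b hb T
    simpa [ContinuousLinearMap.star_eq_adjoint, ContinuousLinearMap.adjoint_inner_right] using this
  intro t
  have hop : V t * U (-t) = 1 := by
    refine ContinuousLinearMap.coeFn_injective ?_
    refine Continuous.ext_on hcyc (ContinuousLinearMap.continuous _)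
      (ContinuousLinearMap.continuous _) ?_
    rintro _ ⟨b, hb, rfl⟩
    simpa using fixv t b hb
  calc U t = (V t * U (-t)) * U t := by rw [hop, one_mul]
    _ = V t := by rw [mul_assoc, ← hU.2.2.1]; simp [hU.2.1]
end
end
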